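/- arXiv:1811.08930 — 7 statements merged into one kernel-verified Lean document; each statement's English description precedes it below -/
import Mathlib

section
/- Let p be a prime, let Γ be a subgroup of the multiplicative group F_p^* with |Γ| < (p-1)/((p-1)^{1/4}+1), and let μ ∈ F_p^* be a nonzero element. Then |Γ ∩ (Γ + μ)| ≤ 4|Γ|^{2/3}, where Γ + μ = {γ + μ : γ ∈ Γ}. -/
open Polynomial in
lemma gv_few {p : ℕ} [Fact p.Prime] {m : ZMod p} (hm : m ≠ 0) (n : ℕ) :
    ∀ Q : (ZMod p)[X], Q.natDegree ≤ n → Q.natDegree < p →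
      (X - C m) ^ Q.support.card ∣ Q → Q = 0 := by
  induction n with
  | zero =>
    intro Q h0 _ hd
    rw [Polynomial.natDegree_eq_zero.mp (Nat.le_zero.mp h0) |>.choose_spec.symm] at hd ⊢
    set c := (Polynomial.natDegree_eq_zero.mp (Nat.le_zero.mp h0)).choose
    by_contra hc
    have hc' : c ≠ 0 := fun h => hc (by simp [h])
    rw [Polynomial.support_C hc', Finset.card_singleton, pow_one] at hd
    rw [Polynomial.dvd_iff_isRoot] at hd
    simp at hd
    exact hc' hd
  | succ n ih =>
    intro Q hn hp hd
    by_contra hQ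
    by_cases h0 : Q.coeff 0 = 0
    · obtain ⟨R, rfl⟩ := Polynomial.X_dvd_iff.mpr h0
      have hR : R ≠ 0 := fun h => hQ (by simp [h])
      have hdeg : (X * R).natDegree = R.natDegree + 1 := Polynomial.natDegree_X_mul hR
      have hcard : R.support.card ≤ (X * R).support.card := by
        apply Finset.card_le_card_of_injOn (fun k => k + 1)
        · intro k hk
          simpa using hk
        · intro a _ b _ h
          simpa using h
      apply hR
      apply ih R (by omega) (by omega)
      have hcop : IsCoprime ((X - C m) ^ R.support.card) (X : (ZMod p)[X]) := by
        apply IsCoprime.pow_left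
        have := Polynomial.isCoprime_X_sub_C_of_isUnit_sub (a := m) (b := (0 : ZMod p))
          (by simpa using hm)
        simpa using this
      exact hcop.dvd_of_dvd_mul_left ((pow_dvd_pow _ hcard).trans hd)
    · have hcard : (derivative Q).support.card ≤ Q.support.card - 1 := by
        rw [← Finset.card_erase_of_mem (Polynomial.mem_support_iff.mpr h0)]
        apply Finset.card_le_card_of_injOn (fun k => k + 1)
        · intro k hk
          have hk' : (derivative Q).coeff k ≠ 0 := by simpa using hk
          rw [Polynomial.coeff_derivative] at hk'
          have := left_ne_zero_of_mul hk'
          simpa using this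
        · intro a _ b _ h
          simpa using h
      have hdd : (X - C m) ^ (derivative Q).support.card ∣ derivative Q :=
        (pow_dvd_pow _ hcard).trans (Polynomial.pow_sub_one_dvd_derivative_of_pow_dvd hd)
      have hle : (derivative Q).natDegree ≤ Q.natDegree - 1 := Polynomial.natDegree_derivative_le Q
      have hD := ih (derivative Q) (by omega) (by omega) hdd
      have hdeg : Q.natDegree = 0 := by
        by_contra hne
        have h1 := congrArg (fun P => P.coeff (Q.natDegree - 1)) hD
        simp only [Polynomial.coeff_derivative, Polynomial.coeff_zero] at h1
        have h2 : Q.natDegree - 1 + 1 = Q.natDegree := by omega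
        have h3 : ((Q.natDegree : ℕ) : ZMod p) = 0 := by
          have h4 : Q.coeff (Q.natDegree - 1 + 1) ≠ 0 := by
            rw [h2]; simpa using hQ
          have h5 := (mul_eq_zero.mp h1).resolve_left h4
          rw [← h2]; exact_mod_cast h5
        rw [ZMod.natCast_eq_zero_iff] at h3
        exact absurd (Nat.le_of_dvd (by omega) h3) (by omega)
      exact hQ (ih Q (by omega) hp hd)

open Polynomial in
lemma gv_sum_zero {p : ℕ} [Fact p.Prime] {m : ZMod p} (hm : m ≠ 0) (t : ℕ) (N : ℕ) :
    ∀ Q : ℕ → (ZMod p)[X], (∀ c, (Q c).natDegree < p) → (∀ c, (Q c).support.card ≤ t) →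
      ∑ c ∈ Finset.range N, Q c * (X - C m) ^ (t * c) = 0 → ∀ c < N, Q c = 0 := by
  induction N with
  | zero => intro Q _ _ _ c hc; omega
  | succ N ih =>
    intro Q h1 h2 hs
    rw [Finset.sum_range_succ'] at hs
    have he : ∑ c ∈ Finset.range N, Q (c + 1) * (X - C m) ^ (t * (c + 1))
        = (X - C m) ^ t * ∑ c ∈ Finset.range N, Q (c + 1) * (X - C m) ^ (t * c) := by
      rw [Finset.mul_sum]
      refine Finset.sum_congr rfl fun c _ => ?_
      ring
    rw [he] at hs
    have h0 : Q 0 = 0 := by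
      apply gv_few hm _ (Q 0) le_rfl (h1 0)
      refine (pow_dvd_pow _ (h2 0)).trans ?_
      rw [mul_zero, pow_zero, mul_one] at hs
      rw [eq_neg_of_add_eq_zero_right hs]
      exact (Dvd.intro _ rfl).neg_right
    rw [h0, zero_mul, add_zero] at hs
    have hs' := (mul_eq_zero.mp hs).resolve_left (pow_ne_zero _ (Polynomial.X_sub_C_ne_zero m))
    intro c hc
    cases c with
    | zero => exact h0
    | succ c => exact ih (fun c => Q (c + 1)) (fun c => h1 _) (fun c => h2 _) hs' c (by omega)

/-- The polynomials governing the iterated derivatives of `P * X^e * (X-m)^f`. -/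
noncomputable def gvR {F : Type*} [Field F] (m : F) (e f : ℕ) (P : Polynomial F) :
    ℕ → Polynomial F
  | 0 => P
  | n + 1 =>
    ((e : Polynomial F) * (Polynomial.X - Polynomial.C m) + (f : Polynomial F) * Polynomial.X)
        * gvR m e f P n
      + Polynomial.X * (Polynomial.X - Polynomial.C m) * Polynomial.derivative (gvR m e f P n)
      - (n : Polynomial F) * (2 * Polynomial.X - Polynomial.C m) * gvR m e f P n

open Polynomial in
lemma gvR_deg {F : Type*} [Field F] (m : F) (e f : ℕ) (P : F[X]) (n : ℕ) :
    (gvR m e f P n).natDegree ≤ P.natDegree + n := by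
  induction n with
  | zero => simp [gvR]
  | succ n ih =>
    rw [gvR]
    set R := gvR m e f P n
    have h1 : ((e : F[X]) * (X - C m) + (f : F[X]) * X).natDegree ≤ 1 := by compute_degree
    have h2 : ((n : F[X]) * (2 * X - C m)).natDegree ≤ 1 := by compute_degree
    have h3 : (X * (X - C m) * derivative R).natDegree ≤ R.natDegree + 1 := by
      by_cases hR : R.natDegree = 0
      · rw [Polynomial.natDegree_eq_zero] at hR
        obtain ⟨c, hc⟩ := hR
        simp [← hc]
      · have h4 : (X * (X - C m) : F[X]).natDegree ≤ 2 := by compute_degree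
        have h5 := Polynomial.natDegree_derivative_le R
        have h6 := Polynomial.natDegree_mul_le (p := X * (X - C m)) (q := derivative R)
        omega
    refine (Polynomial.natDegree_sub_le _ _).trans (max_le ?_ ?_)
    · refine (Polynomial.natDegree_add_le _ _).trans (max_le ?_ (by omega))
      exact (Polynomial.natDegree_mul_le).trans (by omega)
    · exact (Polynomial.natDegree_mul_le).trans (by omega)

open Polynomial in
lemma gvR_spec {F : Type*} [Field F] (m : F) (e f : ℕ) (P : F[X]) (n : ℕ) :
    (X * (X - C m)) ^ n * derivative^[n] (P * (X ^ e * (X - C m) ^ f))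
      = X ^ e * (X - C m) ^ f * gvR m e f P n := by
  induction n with
  | zero => simp [gvR]; ring
  | succ n ih =>
    rw [Function.iterate_succ_apply', gvR]
    set G := derivative^[n] (P * (X ^ e * (X - C m) ^ f))
    set R := gvR m e f P n
    have hF : X * (X - C m) * derivative (X ^ e * (X - C m) ^ f)
        = X ^ e * (X - C m) ^ f * ((e : F[X]) * (X - C m) + (f : F[X]) * X) := by
      have a1 : X * derivative (X ^ e : F[X]) = (e : F[X]) * X ^ e := by
        rw [derivative_X_pow]
        cases e with
        | zero => simp
        | succ k => simp; ring
      have a2 : (X - C m) * derivative ((X - C m) ^ f : F[X]) = (f : F[X]) * (X - C m) ^ f := by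
        rw [derivative_X_sub_C_pow]
        cases f with
        | zero => simp
        | succ k => simp; ring
      rw [derivative_mul]
      linear_combination (X - C m) * (X - C m) ^ f * a1 + X * X ^ e * a2
    have hE : X * (X - C m) * derivative ((X * (X - C m)) ^ n)
        = (n : F[X]) * (2 * X - C m) * (X * (X - C m)) ^ n := by
      rw [derivative_pow]
      have : derivative (X * (X - C m)) = 2 * X - C m := by
        simp [derivative_mul]; ring
      rw [this]
      cases n with
      | zero => simp
      | succ k => simp; ring
    have hd := congrArg derivative ih
    rw [derivative_mul, derivative_mul (f := X ^ e * (X - C m) ^ f)] at hd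
    linear_combination (X * (X - C m)) * hd - G * hE + R * hF - (n : F[X]) * (2 * X - C m) * ih

open Polynomial in
lemma gv_kernel {F ι : Type*} [Field F] [Fintype ι] (A D : ℕ) (R : ℕ → ι → F[X])
    (hR : ∀ n i, (R n i).natDegree < A + n)
    (hcard : ∑ n ∈ Finset.range D, (A + n) < Fintype.card ι) :
    ∃ v : ι → F, v ≠ 0 ∧ ∀ n < D, ∑ i, C (v i) * R n i = 0 := by
  classical
  let T : (ι → F) →ₗ[F] ((Σ n : Fin D, Fin (A + n)) → F) :=
    { toFun := fun v s => ∑ i, v i * (R s.1 i).coeff s.2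
      map_add' := by
        intro v w; ext s; simp [add_mul, Finset.sum_add_distrib]
      map_smul' := by
        intro c v; ext s; simp [Finset.mul_sum, mul_assoc] }
  have hk : LinearMap.ker T ≠ ⊥ := by
    apply LinearMap.ker_ne_bot_of_finrank_lt
    rw [Module.finrank_fintype_fun_eq_card, Module.finrank_fintype_fun_eq_card]
    simpa [Fintype.card_sigma, Finset.sum_range] using hcard
  obtain ⟨v, hv, hv0⟩ := (Submodule.ne_bot_iff _).mp hk
  refine ⟨v, hv0, fun n hn => ?_⟩
  ext k
  rw [Polynomial.finsetSum_coeff, Polynomial.coeff_zero]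
  simp only [Polynomial.coeff_C_mul]
  by_cases hkn : k < A + n
  · have := congrFun (LinearMap.mem_ker.mp hv) ⟨⟨n, hn⟩, ⟨k, hkn⟩⟩
    exact this
  · apply Finset.sum_eq_zero
    intro i _
    rw [Polynomial.coeff_eq_zero_of_natDegree_lt (by have := hR n i; omega), mul_zero]

open Polynomial in
lemma gv_nonzero {p : ℕ} [Fact p.Prime] {m : ZMod p} (hm : m ≠ 0) (A B N t : ℕ)
    (hB : 0 < B) (hAB : A * B ≤ t) (hBt : B * t ≤ p) (v : Fin A × Fin B × Fin N → ZMod p)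
    (hv : ∑ i, C (v i) * (X ^ (i.1 : ℕ) * (X ^ (t * i.2.1) * (X - C m) ^ (t * i.2.2))) = 0) :
    v = 0 := by
  classical
  have hAt : A ≤ t := le_trans (Nat.le_mul_of_pos_right A hB) hAB
  let Q : ℕ → (ZMod p)[X] := fun c =>
    if h : c < N then ∑ ab : Fin A × Fin B, monomial (ab.1 + t * ab.2 : ℕ) (v (ab.1, ab.2, ⟨c, h⟩))
    else 0
  have hlt : ∀ ab : Fin A × Fin B, (ab.1 + t * ab.2 : ℕ) < B * t := by
    intro ab
    have h1 := ab.1.2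
    have h2 : (ab.2 : ℕ) + 1 ≤ B := ab.2.2
    nlinarith
  have hinj : ∀ ab ab' : Fin A × Fin B,
      (ab.1 + t * ab.2 : ℕ) = (ab'.1 + t * ab'.2 : ℕ) → ab = ab' := by
    intro ab ab' h
    have h1 := ab.1.2.trans_le hAt
    have h2 := ab'.1.2.trans_le hAt
    have e1 := congrArg (· % t) h
    have e2 := congrArg (· / t) h
    have htp : 0 < t := by omega
    simp only [Nat.add_mul_mod_self_left, Nat.mod_eq_of_lt h1, Nat.mod_eq_of_lt h2,
      Nat.add_mul_div_left _ _ htp, Nat.div_eq_of_lt h1, Nat.div_eq_of_lt h2, zero_add] at e1 e2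
    exact Prod.ext (Fin.ext e1) (Fin.ext e2)
  have hsupp : ∀ c, (Q c).support ⊆
      Finset.univ.image (fun ab : Fin A × Fin B => (ab.1 + t * ab.2 : ℕ)) := by
    intro c k hk
    by_contra hne
    rw [Polynomial.mem_support_iff] at hk
    apply hk
    simp only [Q]
    split_ifs with h
    · rw [Polynomial.finsetSum_coeff]
      apply Finset.sum_eq_zero
      intro ab _
      rw [Polynomial.coeff_monomial, if_neg]
      rintro rfl
      exact hne (Finset.mem_image_of_mem _ (Finset.mem_univ _))
    · simp
  have hp : 0 < p := (Fact.out : p.Prime).pos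
  have h1 : ∀ c, (Q c).natDegree < p := by
    intro c
    by_cases hz : Q c = 0
    · simpa [hz] using hp
    · have := hsupp c (Polynomial.natDegree_mem_support_of_nonzero hz)
      obtain ⟨ab, -, hab⟩ := Finset.mem_image.mp this
      rw [← hab]
      exact (hlt ab).trans_le hBt
  have h2 : ∀ c, (Q c).support.card ≤ t := by
    intro c
    refine (Finset.card_le_card (hsupp c)).trans (Finset.card_image_le.trans ?_)
    simpa using hAB
  have hs : ∑ c ∈ Finset.range N, Q c * (X - C m) ^ (t * c) = 0 := by
    rw [← hv, Finset.sum_range, ← (Equiv.prodAssoc (Fin A) (Fin B) (Fin N)).sum_comp,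
      Fintype.sum_prod_type_right]
    refine Finset.sum_congr rfl fun c _ => ?_
    simp only [Q, Fin.is_lt, dif_pos, Finset.sum_mul]
    refine Finset.sum_congr rfl fun ab _ => ?_
    simp only [Equiv.prodAssoc_apply, Fin.eta, ← Polynomial.C_mul_X_pow_eq_monomial, pow_add]
    ring
  have h3 := gv_sum_zero hm t N Q h1 h2 hs
  funext ⟨a, b, c⟩
  have h4 := congrArg (fun P => P.coeff (a + t * b : ℕ)) (h3 c c.2)
  simp only [Q, Fin.is_lt, dif_pos, Polynomial.finsetSum_coeff, Polynomial.coeff_monomial,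
    Polynomial.coeff_zero] at h4
  rw [Finset.sum_eq_single (a, b)] at h4
  · simpa using h4
  · intro ab _ hne
    rw [if_neg]
    exact fun h => hne (hinj ab (a, b) h)
  · simp

open Polynomial in
lemma gv_core {p : ℕ} [Fact p.Prime] {m : ZMod p} (hm : m ≠ 0) (A B D t : ℕ)
    (hA : 0 < A) (hB : 0 < B) (hAB : A * B ≤ t) (hBt : B * t ≤ p) (hDp : D ≤ p)
    (hcard : ∑ n ∈ Finset.range D, (A + n) < A * (B * B)) (S : Finset (ZMod p))
    (hS : ∀ x ∈ S, x ≠ 0 ∧ x ≠ m ∧ x ^ t = 1 ∧ (x - m) ^ t = 1) :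
    S.card * D ≤ A + 2 * ((B - 1) * t) := by
  classical
  obtain ⟨v, hv0, hv⟩ := gv_kernel (F := ZMod p) (ι := Fin A × Fin B × Fin B) A D
    (fun n i => gvR m (t * i.2.1) (t * i.2.2) (X ^ (i.1 : ℕ)) n)
    (by
      intro n i
      have h1 := gvR_deg m (t * i.2.1) (t * i.2.2) (X ^ (i.1 : ℕ)) n
      rw [Polynomial.natDegree_X_pow] at h1
      have := i.1.2
      omega)
    (by simpa using hcard)
  set Ψ : (ZMod p)[X] :=
    ∑ i, C (v i) * (X ^ (i.1 : ℕ) * (X ^ (t * i.2.1) * (X - C m) ^ (t * i.2.2))) with hΨ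
  have hΨ0 : Ψ ≠ 0 := fun h => hv0 (gv_nonzero hm A B B t hB hAB hBt v h)
  have hder : ∀ x ∈ S, ∀ n < D, (derivative^[n] Ψ).IsRoot x := by
    intro x hx n hn
    obtain ⟨hx0, hxm, hx1, hx2⟩ := hS x hx
    have hE : (X * (X - C m)) ^ n * derivative^[n] Ψ
        = ∑ i, C (v i) * (X ^ (t * i.2.1) * (X - C m) ^ (t * i.2.2) *
            gvR m (t * i.2.1) (t * i.2.2) (X ^ (i.1 : ℕ)) n) := by
      rw [hΨ, Polynomial.iterate_derivative_sum, Finset.mul_sum]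
      refine Finset.sum_congr rfl fun i _ => ?_
      rw [Polynomial.iterate_derivative_C_mul, ← gvR_spec]
      ring
    have h1 := congrArg (Polynomial.eval x) hE
    have h2 := congrArg (Polynomial.eval x) (hv n hn)
    simp only [Polynomial.eval_finsetSum, Polynomial.eval_mul, Polynomial.eval_pow,
      Polynomial.eval_X, Polynomial.eval_sub, Polynomial.eval_C, pow_mul, hx1, hx2, one_pow,
      one_mul, Polynomial.eval_zero] at h1 h2
    rw [h2] at h1
    exact (mul_eq_zero.mp h1).resolve_left
      (pow_ne_zero _ (mul_ne_zero hx0 (sub_ne_zero.mpr hxm)))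
  have hmul : ∀ x ∈ S, D ≤ Ψ.rootMultiplicity x := by
    intro x hx
    rcases Nat.eq_zero_or_pos D with h0 | hpos
    · omega
    have := Polynomial.lt_rootMultiplicity_of_isRoot_iterate_derivative_of_mem_nonZeroDivisors
      (n := D - 1) hΨ0 (fun k hk => hder x hx k (by omega)) (by
        rw [mem_nonZeroDivisors_iff_ne_zero, Ne, ZMod.natCast_eq_zero_iff,
          (Fact.out : p.Prime).dvd_factorial]
        omega)
    omega
  have hdeg : Ψ.natDegree ≤ A + 2 * ((B - 1) * t) := by
    apply Polynomial.natDegree_sum_le_of_forall_le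
    intro i _
    have h1 : (C (v i) * (X ^ (i.1 : ℕ) * (X ^ (t * i.2.1) * (X - C m) ^ (t * i.2.2)))).natDegree
        ≤ i.1 + (t * i.2.1 + t * i.2.2) := by compute_degree
    have h2 : t * (i.2.1 : ℕ) ≤ (B - 1) * t := by
      rw [mul_comm]; exact Nat.mul_le_mul_right _ (by have := i.2.1.2; omega)
    have h3 : t * (i.2.2 : ℕ) ≤ (B - 1) * t := by
      rw [mul_comm]; exact Nat.mul_le_mul_right _ (by have := i.2.2.2; omega)
    have := i.1.2
    omega
  refine le_trans ?_ ((Polynomial.card_roots' Ψ).trans hdeg)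
  have hsub : (D • S.val : Multiset (ZMod p)) ≤ Ψ.roots := by
    rw [Multiset.le_iff_count]
    intro x
    rw [Multiset.count_nsmul, Polynomial.count_roots]
    by_cases hx : x ∈ S
    · rw [Multiset.count_eq_one_of_mem S.nodup hx, mul_one]
      exact hmul x hx
    · rw [Multiset.count_eq_zero_of_notMem (by simpa using hx), mul_zero]
      exact Nat.zero_le _
  have := Multiset.card_le_card hsub
  rw [Multiset.card_nsmul] at this
  rw [mul_comm]
  exact this

lemma gv_sumcount (b D : ℕ) (hb : 2 ≤ b) (hD : 2 * D ≤ b ^ 2 + 1) :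
    ∑ n ∈ Finset.range D, (b ^ 2 + n) < b ^ 2 * (b * b) := by
  rw [Finset.sum_add_distrib, Finset.sum_const, Finset.card_range, smul_eq_mul]
  have h1 := Finset.sum_range_id_mul_two D
  have h2 : D * (D - 1) ≤ D * D := Nat.mul_le_mul_left _ (by omega)
  have h4 : 4 ≤ b ^ 2 := by nlinarith
  have h5 : D * (D - 1) + D = D * D := by
    cases D with
    | zero => rfl
    | succ k => simp; ring
  have : b * b = b ^ 2 := by ring
  rw [this]
  set c := b ^ 2
  nlinarith

theorem garcia_voloch (p : ℕ) [Fact p.Prime] (Γ : Subgroup (ZMod p)ˣ)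
    (μ : (ZMod p)ˣ)
    (hΓ : (Nat.card Γ : ℝ) < ((p : ℝ) - 1) / (((p : ℝ) - 1) ^ ((1 : ℝ) / 4) + 1)) :
    (Nat.card {x : ZMod p | (∃ γ ∈ Γ, x = (γ : (ZMod p)ˣ)) ∧
        (∃ γ ∈ Γ, x = ((γ : (ZMod p)ˣ) : ZMod p) + (μ : ZMod p))} : ℝ) ≤
      4 * (Nat.card Γ : ℝ) ^ ((2 : ℝ) / 3) := by
  classical
  set Sset : Set (ZMod p) := {x : ZMod p | (∃ γ ∈ Γ, x = (γ : (ZMod p)ˣ)) ∧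
        (∃ γ ∈ Γ, x = ((γ : (ZMod p)ˣ) : ZMod p) + (μ : ZMod p))} with hSset
  set t := Nat.card Γ with ht
  have hfin : Sset.Finite := Set.toFinite _
  set S := hfin.toFinset with hS
  have hcardS : Nat.card Sset = S.card := by
    rw [Nat.card_coe_set_eq, Set.ncard_eq_toFinset_card _ hfin]
  rw [hcardS]
  have htpos : 0 < t := Nat.card_pos
  have hpow : ∀ γ ∈ Γ, ((γ : (ZMod p)ˣ) : ZMod p) ^ t = 1 := by
    intro γ hγ
    have h := pow_card_eq_one' (x := (⟨γ, hγ⟩ : Γ))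
    have h' : γ ^ t = 1 := congrArg Subtype.val h
    rw [← Units.val_pow_eq_pow_val, h', Units.val_one]
  have hSprop : ∀ x ∈ S, x ≠ 0 ∧ x ≠ (μ : ZMod p) ∧ x ^ t = 1 ∧ (x - (μ : ZMod p)) ^ t = 1 := by
    intro x hx
    rw [hS, Set.Finite.mem_toFinset] at hx
    obtain ⟨⟨γ, hγ, h1⟩, ⟨δ, hδ, h2⟩⟩ := hx
    refine ⟨by rw [h1]; exact γ.ne_zero, ?_, by rw [h1]; exact hpow γ hγ, ?_⟩
    · rw [h2]
      intro h
      exact δ.ne_zero (by simpa using h)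
    · rw [h2, add_sub_cancel_right]; exact hpow δ hδ
  have htriv : S.card ≤ t := by
    have h1 : S.card ≤ ((Γ : Set (ZMod p)ˣ).toFinite.toFinset.image
        (fun γ : (ZMod p)ˣ => (γ : ZMod p))).card := by
      apply Finset.card_le_card
      intro x hx
      rw [hS, Set.Finite.mem_toFinset] at hx
      obtain ⟨⟨γ, hγ, h1⟩, -⟩ := hx
      exact Finset.mem_image.mpr ⟨γ, by simpa using hγ, h1.symm⟩
    refine h1.trans (Finset.card_image_le.trans ?_)
    rw [← Set.ncard_eq_toFinset_card _ (Γ : Set (ZMod p)ˣ).toFinite, ← Nat.card_coe_set_eq]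
    exact le_refl _
  -- real cube root
  set s : ℝ := (t : ℝ) ^ ((1 : ℝ) / 3) with hs
  have hs0 : 0 < s := Real.rpow_pos_of_pos (by exact_mod_cast htpos) _
  have hs3 : s ^ 3 = t := by
    rw [hs, ← Real.rpow_natCast, ← Real.rpow_mul (by positivity)]; norm_num
  have hs2 : (t : ℝ) ^ ((2 : ℝ) / 3) = s ^ 2 := by
    rw [hs, ← Real.rpow_natCast, ← Real.rpow_mul (by positivity)]; norm_num
  rw [hs2]
  have htrivR : (S.card : ℝ) ≤ s ^ 3 := by rw [hs3]; exact_mod_cast htriv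
  by_cases hs4 : s < 2
  · nlinarith [sq_nonneg s]
  push Not at hs4
  set b := ⌊s⌋₊ with hb
  have hbs : (b : ℝ) ≤ s := Nat.floor_le hs0.le
  have hsb : s < b + 1 := Nat.lt_floor_add_one s
  have hb2 : 2 ≤ b := Nat.le_floor (by exact_mod_cast hs4)
  have hb3 : b ^ 3 ≤ t := by
    have : (b : ℝ) ^ 3 ≤ t := by rw [← hs3]; gcongr
    exact_mod_cast this
  have hp1 : (1 : ℝ) < p := by exact_mod_cast (Fact.out : p.Prime).one_lt
  set q : ℝ := ((p : ℝ) - 1) ^ ((1 : ℝ) / 4) with hq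
  have hq0 : 0 < q := Real.rpow_pos_of_pos (by linarith) _
  have hq4 : q ^ 4 = p - 1 := by
    rw [hq, ← Real.rpow_natCast, ← Real.rpow_mul (by linarith)]; norm_num
  rw [lt_div_iff₀ (by positivity), ← hq4, ← hs3] at hΓ
  have hsq : s < q := by
    by_contra hle
    push Not at hle
    have : q ^ 3 ≤ s ^ 3 := by gcongr
    nlinarith [pow_pos hs0 3]
  have hbt : b * t ≤ p := by
    have : (b : ℝ) * t ≤ p := by
      rw [← hs3]
      have : (b : ℝ) * s ^ 3 ≤ q * s ^ 3 := by gcongr; linarith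
      nlinarith [pow_pos hs0 3]
    exact_mod_cast this
  set D := (b ^ 2 + 1) / 2 with hD
  have hD1 : 2 * D ≤ b ^ 2 + 1 := by omega
  have hD2 : b ^ 2 ≤ 2 * D := by omega
  have hDpos : 0 < D := by
    have : 4 ≤ b ^ 2 := by nlinarith
    omega
  have hDp : D ≤ p := by
    have h1 : b ^ 2 ≤ b ^ 3 := Nat.pow_le_pow_right (by omega) (by norm_num)
    have h2 : t ≤ b * t := Nat.le_mul_of_pos_left _ (by omega)
    have : 4 ≤ b ^ 2 := by nlinarith
    omega
  have key := gv_core (m := (μ : ZMod p)) μ.ne_zero (b ^ 2) b D t (by positivity) (by omega)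
    (by rw [← pow_succ]; exact hb3) hbt hDp (gv_sumcount b D hb2 hD1) S hSprop
  have keyR : (S.card : ℝ) * D ≤ b ^ 2 + 2 * ((b - 1) * s ^ 3) := by
    rw [hs3]
    have h := (Nat.cast_le (α := ℝ)).mpr key
    push_cast [Nat.cast_sub (show 1 ≤ b by omega)] at h
    exact h
  have hD2R : (b : ℝ) ^ 2 ≤ 2 * D := by exact_mod_cast hD2
  have hDR : (0 : ℝ) < D := by exact_mod_cast hDpos
  have hb2R : (2 : ℝ) ≤ b := by exact_mod_cast hb2
  have e1 : (b : ℝ) ^ 2 ≤ s ^ 2 := by gcongr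
  have e2 : ((b : ℝ) - 1) * s ≤ (b - 1) * (b + 1) := by
    apply mul_le_mul_of_nonneg_left hsb.le; linarith
  have e3 : (b : ℝ) ^ 2 + 2 * ((b - 1) * s ^ 3) ≤ s ^ 2 * (4 * D) := by
    have : s ^ 2 * (((b : ℝ) - 1) * s) ≤ s ^ 2 * ((b - 1) * (b + 1)) := by gcongr
    have h6 : s ^ 2 * (b : ℝ) ^ 2 ≤ s ^ 2 * (2 * D) := by gcongr
    nlinarith [sq_nonneg s]
  have : (S.card : ℝ) * D ≤ (4 * s ^ 2) * D := by nlinarith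
  exact le_of_mul_le_mul_right this hDR
end

section
/- Let p be a prime, Γ ⊆ F_p^* a subgroup, and let μ_1, …, μ_n ∈ F_p^* be pairwise distinct nonzero elements of F_p with n ≥ 2. Suppose that 32·n·2^{20 n log(n+1)} ≤ |Γ| and 4n|Γ|(|Γ|^{1/(2n+1)} + 1) ≤ p. Then |Γ ∩ (Γ + μ_1) ∩ … ∩ (Γ + μ_n)| ≤ 4(n+1)(|Γ|^{1/(2n+1)} + 1)^{n+1}. -/
section SVAux
open Polynomial

/-- The linear operators `R_k` with `F^k (P f)^{(k)} = f R_k(P)` when the derivative of f times F equals G times f. -/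
noncomputable def svRop {K : Type*} [Field K] (F G : K[X]) : ℕ → (K[X] →ₗ[K] K[X])
  | 0 => LinearMap.id
  | k + 1 => (LinearMap.mulLeft K F) ∘ₗ derivative ∘ₗ svRop F G k
      + (LinearMap.mulLeft K (G - (k : K[X]) * derivative F)) ∘ₗ svRop F G k

theorem svRop_succ {K : Type*} [Field K] (F G : K[X]) (k : ℕ) (P : K[X]) :
    svRop F G (k + 1) P = F * derivative (svRop F G k P)
      + (G - (k : K[X]) * derivative F) * svRop F G k P := by
  simp [svRop]

theorem svRop_spec {K : Type*} [Field K] (F G f : K[X]) (h : F * derivative f = G * f)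
    (k : ℕ) (P : K[X]) :
    F ^ k * derivative^[k] (P * f) = f * svRop F G k P := by
  induction k with
  | zero => simp [svRop, mul_comm]
  | succ k ih =>
    have h2 := congrArg derivative ih
    rw [svRop_succ, Function.iterate_succ_apply']
    simp only [derivative_mul, derivative_pow] at h2
    have h3 : F ^ (k + 1) * derivative (derivative^[k] (P * f)) =
        F * (derivative f * svRop F G k P + f * derivative (svRop F G k P))
          - F * (C (k : K) * F ^ (k - 1) * derivative F * derivative^[k] (P * f)) := by
      rw [← h2]; ring
    have h4 : F * (C (k : K) * F ^ (k - 1) * derivative F * derivative^[k] (P * f))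
        = (k : K[X]) * derivative F * (f * svRop F G k P) := by
      rw [← ih]
      cases k with
      | zero => simp
      | succ k => simp only [map_natCast, Nat.add_sub_cancel]; ring
    rw [h3, h4]
    linear_combination (svRop F G k P) * h

theorem svRop_degree {K : Type*} [Field K] (F G : K[X]) (n A : ℕ) (hF : F.natDegree ≤ n + 1)
    (hG : G.natDegree ≤ n) (k : ℕ) (P : K[X]) (hP : P.degree < A) :
    (svRop F G k P).degree < ((A + n * k : ℕ) : WithBot ℕ) := by
  induction k with
  | zero => simpa [svRop] using hP
  | succ k ih =>
    rw [svRop_succ]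
    set R := svRop F G k P with hR
    by_cases hR0 : R = 0
    · simp [hR0, -Nat.cast_add]
    have hd : R.natDegree < A + n * k := (natDegree_lt_iff_degree_lt hR0).2 ih
    have hF' : (derivative F).natDegree ≤ n := (natDegree_derivative_le F).trans (by omega)
    have e1 : (F * derivative R).degree < ((A + n * (k+1) : ℕ) : WithBot ℕ) := by
      by_cases h0 : R.natDegree = 0
      · rw [derivative_of_natDegree_zero h0]; simp [-Nat.cast_add]
      · by_cases h1 : F * derivative R = 0
        · simp [h1, -Nat.cast_add]
        rw [← natDegree_lt_iff_degree_lt h1]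
        have := natDegree_derivative_lt h0
        have := natDegree_mul_le (p := F) (q := derivative R)
        rw [mul_add]; omega
    have e2 : ((G - (k : K[X]) * derivative F) * R).degree < ((A + n * (k+1) : ℕ) : WithBot ℕ) := by
      by_cases h1 : (G - (k : K[X]) * derivative F) * R = 0
      · simp [h1, -Nat.cast_add]
      rw [← natDegree_lt_iff_degree_lt h1]
      have a1 := natDegree_mul_le (p := (G - (k : K[X]) * derivative F)) (q := R)
      have a2 : (G - (k : K[X]) * derivative F).natDegree ≤ n := by
        refine (natDegree_sub_le _ _).trans (max_le hG ?_)
        refine (natDegree_mul_le).trans ?_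
        simpa using hF'
      rw [mul_add]; omega
    exact (degree_add_le _ _).trans_lt (max_lt e1 e2)

theorem sv_dvd_derivative {K : Type*} [Field K] (π F H : K[X]) (t : ℕ) (hF : π ∣ F)
    (hH : π ^ t ∣ H) : π ^ t ∣ F * derivative H := by
  obtain ⟨u, rfl⟩ := hH
  obtain ⟨v, rfl⟩ := hF
  rw [derivative_mul, derivative_pow]
  cases t with
  | zero => simp
  | succ t =>
    refine ⟨v * (C ((t + 1 : ℕ) : K) * derivative π * u + π * derivative u), ?_⟩
    simp only [Nat.add_sub_cancel]; ring

theorem sv_dvd_iter {K : Type*} [Field K] (π F H : K[X]) (t : ℕ) (hF : π ∣ F)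
    (hH : π ^ t ∣ H) (k : ℕ) : π ^ t ∣ F ^ k * derivative^[k] H := by
  have := svRop_spec F 0 1 (by simp) k H
  rw [mul_one, one_mul] at this
  rw [this]; clear this
  induction k with
  | zero => simpa [svRop] using hH
  | succ k ih =>
    rw [svRop_succ]
    exact dvd_add (sv_dvd_derivative _ _ _ _ hF ih) (dvd_mul_of_dvd_right ih _)

/-- Nonvanishing of the Wronskian of linearly independent polynomials of degree `< p`. -/
theorem sv_wronskian (p : ℕ) [Fact p.Prime] (N : ℕ) (g : Fin N → (ZMod p)[X])
    (hdeg : ∀ i, (g i).degree < p)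
    (hli : ∀ a : Fin N → ZMod p, ∑ i, C (a i) * g i = 0 → ∀ i, a i = 0) :
    (Matrix.of fun (k i : Fin N) => derivative^[(k : ℕ)] (g i)).det ≠ 0 := by
  induction N with
  | zero => simp
  | succ N ih =>
    intro hdet
    have ih' := ih (fun i => g i.succ) (fun i => hdeg _) (by
      intro a ha i
      have := hli (Fin.cons 0 a) (by rw [Fin.sum_univ_succ]; simpa using ha) i.succ
      simpa using this)
    have key0 : ∀ v : Fin (N+1) → (ZMod p)[X], v 0 = 0 →
        (∀ k : ℕ, k < N → ∑ i, derivative^[k] (g i) * v i = 0) → v = 0 := by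
      intro v hv0 hv
      by_contra hne
      apply ih'
      rw [← Matrix.exists_mulVec_eq_zero_iff]
      refine ⟨fun i => v i.succ, ?_, ?_⟩
      · intro h
        apply hne
        funext i
        refine Fin.cases hv0 (fun j => ?_) i
        exact congrFun h j
      · funext k
        have := hv k k.2
        rw [Fin.sum_univ_succ, hv0] at this
        simpa [Matrix.mulVec, dotProduct] using this
    rw [← Matrix.exists_mulVec_eq_zero_iff] at hdet
    let Good : (Fin (N+1) → (ZMod p)[X]) → Prop := fun h =>
      h ≠ 0 ∧ ∀ k : ℕ, k < N + 1 → ∑ i, derivative^[k] (g i) * h i = 0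
    have hex : ∃ d : ℕ, ∃ h, Good h ∧ ∑ i, (h i).natDegree = d := by
      obtain ⟨h, h0, hh⟩ := hdet
      refine ⟨_, h, ⟨h0, fun k hk => ?_⟩, rfl⟩
      simpa [Matrix.mulVec, dotProduct] using congrFun hh ⟨k, hk⟩
    classical
    obtain ⟨h, ⟨h0, hh⟩, hd⟩ := Nat.find_spec hex
    have hmin : ∀ h', Good h' → ∑ i, (h i).natDegree ≤ ∑ i, (h' i).natDegree := by
      intro h' hg
      rw [hd]
      exact Nat.find_min' hex ⟨h', hg, rfl⟩
    -- the derivative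
    have hder : ∀ k : ℕ, k < N → ∑ i, derivative^[k] (g i) * derivative (h i) = 0 := by
      intro k hk
      have h1 := congrArg derivative (hh k (by omega))
      have h2 := hh (k+1) (by omega)
      simp only [derivative_sum, derivative_mul, Finset.sum_add_distrib,
        ← Function.iterate_succ_apply', derivative_zero] at h1
      rw [h2, zero_add] at h1
      exact h1
    have hh0 : h 0 ≠ 0 := by
      intro hz
      exact h0 (key0 h hz fun k hk => hh k (by omega))
    have hprop : ∀ i, h 0 * derivative (h i) = derivative (h 0) * h i := by
      have := key0 (fun i => h 0 * derivative (h i) - derivative (h 0) * h i) (by ring) (by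
        intro k hk
        have e : ∀ i, derivative^[k] (g i) * (h 0 * derivative (h i) - derivative (h 0) * h i)
          = h 0 * (derivative^[k] (g i) * derivative (h i)) -
            derivative (h 0) * (derivative^[k] (g i) * h i) := fun i => by ring
        simp only [e, Finset.sum_sub_distrib, ← Finset.mul_sum]
        rw [hder k hk, hh k (by omega)]; simp)
      intro i
      exact sub_eq_zero.1 (congrFun this i)
    have hderN : ∀ k : ℕ, k < N + 1 → ∑ i, derivative^[k] (g i) * derivative (h i) = 0 := by
      intro k hk
      have : h 0 * ∑ i, derivative^[k] (g i) * derivative (h i) = 0 := by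
        have e : ∀ i, h 0 * (derivative^[k] (g i) * derivative (h i)) =
          derivative (h 0) * (derivative^[k] (g i) * h i) := fun i => by
            linear_combination derivative^[k] (g i) * hprop i
        rw [Finset.mul_sum]
        simp only [e, ← Finset.mul_sum]
        rw [hh k hk, mul_zero]
      exact (mul_eq_zero.1 this).resolve_left hh0
    have hd0 : ∀ i, derivative (h i) = 0 := by
      by_contra hne
      have hne' : (fun i => derivative (h i)) ≠ 0 := fun hz => hne fun i => congrFun hz i
      have := hmin _ ⟨hne', hderN⟩
      push Not at hne
      obtain ⟨i, hi⟩ := hne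
      have hlt : ∑ i, (derivative (h i)).natDegree < ∑ i, (h i).natDegree := by
        refine Finset.sum_lt_sum (fun j _ => (natDegree_derivative_le _).trans (by omega))
          ⟨i, Finset.mem_univ _, natDegree_derivative_lt fun hz => hi ?_⟩
        exact derivative_of_natDegree_zero hz
      omega
    have hcoef : ∀ i (a : ℕ), 0 < a → a < p → (h i).coeff a = 0 := by
      intro i a ha hap
      have h1 := congrArg (fun q => coeff q (a-1)) (hd0 i)
      simp only [coeff_derivative, coeff_zero] at h1
      have h2 : ((a - 1 : ℕ) : ZMod p) + 1 ≠ 0 := by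
        have : ((a - 1 : ℕ) : ZMod p) + 1 = (a : ℕ) := by
          rw [← Nat.cast_succ]; congr 1; omega
        rw [this, Ne, ZMod.natCast_eq_zero_iff]
        exact fun hdv => absurd (Nat.le_of_dvd ha hdv) (by omega)
      rw [Nat.sub_add_cancel ha] at h1
      exact (mul_eq_zero.1 h1).resolve_right h2
    have hz : ∀ i, (h i).coeff 0 = 0 := by
      apply hli
      ext m
      have hm0 := hh 0 (by omega)
      by_cases hm : m < p
      · have := congrArg (fun q => coeff q m) hm0
        simp only [finsetSum_coeff, coeff_zero, Function.iterate_zero, id] at this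
        simp only [finsetSum_coeff, coeff_zero, coeff_C_mul]
        rw [← this]
        refine Finset.sum_congr rfl fun i _ => ?_
        rw [mul_comm (g i), coeff_mul, Finset.sum_eq_single (0, m)]
        · rintro ⟨a, b⟩ hab hne
          rw [Finset.HasAntidiagonal.mem_antidiagonal] at hab
          simp only at hab
          have : 0 < a := by
            rcases Nat.eq_zero_or_pos a with rfl | h
            · exact absurd (by simp_all) hne
            · exact h
          simp only
          rw [hcoef i a this (by omega), zero_mul]
        · intro hn
          exact absurd (by simp) hn
      · simp only [finsetSum_coeff, coeff_zero, coeff_C_mul]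
        refine Finset.sum_eq_zero fun i _ => ?_
        rw [coeff_eq_zero_of_degree_lt (p := g i), mul_zero]
        exact (hdeg i).trans_le (by exact_mod_cast (not_lt.1 hm))
    have hX : ∀ i, h i = X * divX (h i) := fun i => by
      conv_lhs => rw [← X_mul_divX_add (h i)]
      rw [hz i]; simp
    have hg : Good (fun i => divX (h i)) := by
      refine ⟨fun hzz => h0 ?_, fun k hk => ?_⟩
      · funext i
        rw [hX i, congrFun hzz i]; simp
      · have := hh k hk
        have e : ∀ i, derivative^[k] (g i) * h i = X * (derivative^[k] (g i) * divX (h i)) :=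
          fun i => by conv_lhs => rw [hX i]
                      ring
        simp only [e, ← Finset.mul_sum] at this
        exact (mul_eq_zero.1 this).resolve_left X_ne_zero
    have := hmin _ hg
    have hlt : ∑ i, (divX (h i)).natDegree < ∑ i, (h i).natDegree := by
      refine Finset.sum_lt_sum (fun j _ => by rw [natDegree_divX_eq_natDegree_tsub_one]; omega)
          ⟨0, Finset.mem_univ _, ?_⟩
      rw [natDegree_divX_eq_natDegree_tsub_one]
      have : (h 0).natDegree ≠ 0 := by
        intro hc
        apply hh0
        rw [eq_C_of_natDegree_eq_zero hc, hz 0, C_0]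
      omega
    omega

def svIndep {K : Type*} [Field K] {ι : Type} [Fintype ι] (A : ℕ) (f : ι → K[X]) : Prop :=
  ∀ P : ι → K[X], (∀ i, (P i).degree < A) → ∑ i, P i * f i = 0 → ∀ i, P i = 0

theorem sv_det_degree {K : Type*} [Field K] (N d : ℕ) (M : Matrix (Fin N) (Fin N) K[X])
    (h : ∀ i j, (M i j).natDegree ≤ d) : M.det.natDegree ≤ N * d := by
  rw [Matrix.det_apply]
  refine natDegree_sum_le_of_forall_le _ _ fun σ _ => ?_
  refine (natDegree_smul_le _ _).trans ?_
  refine (natDegree_prod_le _ _).trans ?_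
  refine (Finset.sum_le_card_nsmul _ _ d fun i _ => h _ _).trans ?_
  simp

theorem sv_step (p : ℕ) [Fact p.Prime] (F : (ZMod p)[X]) (n A t : ℕ) (ν : ZMod p)
    {ι : Type} [Fintype ι] (f G : ι → (ZMod p)[X]) (hF0 : F ≠ 0) (hFd : F.natDegree ≤ n + 1)
    (hπ : (X - C ν) ∣ F) (hG : ∀ i, (G i).natDegree ≤ n)
    (hfG : ∀ i, F * derivative (f i) = G i * f i)
    (hfdeg : ∀ i, (f i).natDegree + A ≤ p) (hν : ∀ i, eval ν (f i) ≠ 0)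
    (hN : Fintype.card ι * (A + n * Fintype.card ι) ≤ t) (hind : svIndep A f)
    (P : ι → (ZMod p)[X]) (hP : ∀ i, (P i).degree < A)
    (hdvd : (X - C ν) ^ t ∣ ∑ i, P i * f i) : ∀ i, P i = 0 := by
  classical
  by_contra hne
  push Not at hne
  let J := {i // P i ≠ 0}
  let N := Fintype.card J
  have hJ : 0 < N := Fintype.card_pos_iff.2 ⟨⟨hne.choose, hne.choose_spec⟩⟩
  have hJN : N ≤ Fintype.card ι := Fintype.card_subtype_le _
  let e : Fin N ≃ J := (Fintype.equivFin J).symm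
  have hf0 : ∀ i, f i ≠ 0 := fun i h => hν i (by rw [h]; simp)
  have hA : 0 < A := by
    rcases Nat.eq_zero_or_pos A with h | h
    · obtain ⟨i, hi⟩ := hne
      have := hP i
      rw [h] at this
      exact absurd (by simpa using this) hi
    · exact h
  have hsum : ∀ φ : ι → (ZMod p)[X], (∀ i, P i = 0 → φ i = 0) →
      ∑ i, φ i = ∑ k : Fin N, φ (e k).1 := by
    intro φ hφ
    rw [Equiv.sum_comp e (fun j : J => φ j.1)]
    rw [← Finset.sum_subtype (Finset.univ.filter fun i => P i ≠ 0) (by simp) φ]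
    rw [Finset.sum_filter_of_ne]
    intro i _ hi h0
    exact hi (hφ i h0)
  have hW := sv_wronskian p N (fun k => P (e k).1 * f (e k).1) (by
    intro k
    have h1 : P (e k).1 * f (e k).1 ≠ 0 := mul_ne_zero (e k).2 (hf0 _)
    rw [← natDegree_lt_iff_degree_lt h1]
    have h2 := (natDegree_lt_iff_degree_lt (e k).2).2 (hP (e k).1)
    have h3 := natDegree_mul_le (p := P (e k).1) (q := f (e k).1)
    have h4 := hfdeg (e k).1
    omega) (by
    intro a ha k
    let b : ι → ZMod p := fun i => if h : P i ≠ 0 then a (e.symm ⟨i, h⟩) else 0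
    have hb : ∀ k, b (e k).1 = a k := by
      intro k
      have : P (e k).1 ≠ 0 := (e k).2
      simp only [b, dif_pos this]
      simp
    have := hind (fun i => C (b i) * P i) (fun i => by
        by_cases hb0 : b i = 0
        · simp [hb0]
        · rw [degree_C_mul hb0]; exact hP i) (by
        rw [hsum]
        · refine Eq.trans (Finset.sum_congr rfl fun k _ => ?_) ha
          rw [hb]; ring
        · intro i hi
          simp [hi]) (e k).1
    simp only [hb] at this
    have h2 := (mul_eq_zero.1 this).resolve_right (e k).2
    simpa using h2)
  let R : Matrix (Fin N) (Fin N) (ZMod p)[X] :=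
    Matrix.of fun k i => svRop F (G (e i).1) k (P (e i).1)
  have hspec : ∀ k i : Fin N, F ^ (k : ℕ) * derivative^[(k : ℕ)] (P (e i).1 * f (e i).1) =
      f (e i).1 * R k i := fun k i => svRop_spec _ _ _ (hfG _) _ _
  have hRdet : R.det ≠ 0 := by
    intro h0
    have h1 := Matrix.det_mul_column (fun k : Fin N => F ^ (k : ℕ))
      (Matrix.of fun (k i : Fin N) => derivative^[(k : ℕ)] (P (e i).1 * f (e i).1))
    have h2 := Matrix.det_mul_row (fun i : Fin N => f (e i).1) R
    have h3 : (Matrix.of fun k i : Fin N => F ^ (k : ℕ) *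
        (Matrix.of fun (k i : Fin N) => derivative^[(k : ℕ)] (P (e i).1 * f (e i).1)) k i)
        = Matrix.of fun k i : Fin N => f (e i).1 * R k i := by
      ext1 k i
      exact hspec k i
    rw [h3, h2, h0, mul_zero] at h1
    refine (mul_ne_zero (Finset.prod_ne_zero_iff.2 fun k _ => pow_ne_zero _ hF0) hW) h1.symm
  have hvec : ∀ k, (X - C ν) ^ t ∣ R.mulVec (fun i => f (e i).1) k := by
    intro k
    have h1 := sv_dvd_iter (X - C ν) F _ t hπ hdvd k
    rw [hsum _ (fun i hi => by simp [hi]), iterate_derivative_sum, Finset.mul_sum] at h1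
    convert h1 using 1
    simp only [Matrix.mulVec, dotProduct]
    refine Finset.sum_congr rfl fun i _ => ?_
    rw [hspec, mul_comm]
  have hdv : (X - C ν) ^ t ∣ R.det * f (e ⟨0, hJ⟩).1 := by
    have h1 : (R.adjugate.mulVec (R.mulVec (fun i => f (e i).1))) ⟨0, hJ⟩
        = R.det * f (e ⟨0, hJ⟩).1 := by
      rw [Matrix.mulVec_mulVec, Matrix.adjugate_mul, Matrix.smul_mulVec, Matrix.one_mulVec]
      simp
    rw [← h1]
    change _ ∣ ∑ i, R.adjugate ⟨0, hJ⟩ i * (R.mulVec (fun i => f (e i).1) i)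
    exact Finset.dvd_sum fun i _ => dvd_mul_of_dvd_right (hvec i) _
  have hcop : IsCoprime ((X - C ν) ^ t) (f (e ⟨0, hJ⟩).1) := by
    apply IsCoprime.pow_left
    rw [(irreducible_X_sub_C ν).coprime_iff_not_dvd, dvd_iff_isRoot]
    exact hν _
  have hdv2 := hcop.dvd_of_dvd_mul_right hdv
  have hle := natDegree_le_of_dvd hdv2 hRdet
  rw [natDegree_pow, natDegree_X_sub_C, mul_one] at hle
  have hub := sv_det_degree N (A - 1 + n * N) R (fun k i => by
    have h1 := svRop_degree F (G (e i).1) n A hFd (hG _) k _ (hP (e i).1)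
    have h2 : (R k i).natDegree < A + n * k ∨ R k i = 0 := by
      by_cases h0 : R k i = 0
      · exact Or.inr h0
      · exact Or.inl ((natDegree_lt_iff_degree_lt h0).2 h1)
    rcases h2 with h2 | h2
    · have : n * (k : ℕ) ≤ n * N := Nat.mul_le_mul_left _ k.2.le
      omega
    · rw [h2]; simp)
  have h5 : N * (A - 1 + n * N) < N * (A + n * N) := Nat.mul_lt_mul_of_pos_left (by omega) hJ
  have h6 : N * (A + n * N) ≤ Fintype.card ι * (A + n * Fintype.card ι) := by gcongr
  omega

theorem sv_step_prod {K : Type*} [Field K] (A t s : ℕ) (π : K[X]) (hπ : π ≠ 0)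
    {ι : Type} [Fintype ι] (f : ι → K[X])
    (hstep : ∀ P : ι → K[X], (∀ i, (P i).degree < A) → π ^ t ∣ ∑ i, P i * f i → ∀ i, P i = 0) :
    svIndep A (fun x : ι × Fin s => f x.1 * π ^ (t * (x.2 : ℕ))) := by
  intro P hP hsum
  suffices h : ∀ m : ℕ, ∀ hm : m < s, ∀ i, P (i, ⟨m, hm⟩) = 0 by
    rintro ⟨i, m, hm⟩; exact h m hm i
  intro m
  induction m using Nat.strong_induction_on with
  | _ m ih =>
    intro hm
    apply hstep _ (fun i => hP _)
    let Q : Fin s → K[X] := fun j => ∑ i, P (i, j) * f i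
    have hQ : ∑ j : Fin s, Q j * π ^ (t * (j : ℕ)) = 0 := by
      rw [← hsum, Fintype.sum_prod_type_right]
      refine Finset.sum_congr rfl fun j _ => ?_
      rw [Finset.sum_mul]
      refine Finset.sum_congr rfl fun i _ => ?_
      simp only; ring
    have hlt : ∀ j : Fin s, (j : ℕ) < m → Q j = 0 := fun j hj =>
      Finset.sum_eq_zero fun i _ => by rw [ih j hj j.2 i, zero_mul]
    rw [← Finset.add_sum_erase _ _ (Finset.mem_univ (⟨m, hm⟩ : Fin s))] at hQ
    have hd : π ^ (t * m) * π ^ t ∣ Q ⟨m, hm⟩ * π ^ (t * m) := by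
      rw [eq_neg_of_add_eq_zero_left hQ, dvd_neg]
      refine Finset.dvd_sum fun j hj => ?_
      rcases lt_trichotomy (j : ℕ) m with h | h | h
      · rw [hlt j h, zero_mul]; exact dvd_zero _
      · exact absurd (Fin.ext h) (Finset.ne_of_mem_erase hj)
      · refine dvd_mul_of_dvd_right ?_ _
        rw [← pow_add]
        apply pow_dvd_pow
        calc t * m + t = t * (m + 1) := by ring
          _ ≤ t * j := Nat.mul_le_mul_left _ h
    rw [mul_comm (Q _)] at hd
    exact (mul_dvd_mul_iff_left (pow_ne_zero _ hπ)).1 hd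

theorem sv_extend {K : Type*} [Field K] (F f G : K[X]) (n e : ℕ) (ν : K) (hF0 : F ≠ 0)
    (hFd : F.natDegree ≤ n + 1) (hπ : (X - C ν) ∣ F) (hG : G.natDegree ≤ n)
    (hfG : F * derivative f = G * f) :
    ∃ G' : K[X], G'.natDegree ≤ n ∧
      F * derivative (f * (X - C ν) ^ e) = G' * (f * (X - C ν) ^ e) := by
  obtain ⟨H, rfl⟩ := hπ
  have hH0 : H ≠ 0 := right_ne_zero_of_mul hF0
  rw [natDegree_mul (X_sub_C_ne_zero ν) hH0, natDegree_X_sub_C] at hFd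
  refine ⟨G + C (e : K) * H, ?_, ?_⟩
  · refine (natDegree_add_le _ _).trans (max_le hG ?_)
    exact (natDegree_C_mul_le _ _).trans (by omega)
  · rw [derivative_mul, derivative_pow]
    simp only [derivative_sub, derivative_X, derivative_C, sub_zero, mul_one]
    cases e with
    | zero => simp; linear_combination hfG
    | succ e =>
      simp only [Nat.add_sub_cancel]
      linear_combination (X - C ν) ^ (e + 1) * hfG

theorem sv_family (p n A B t : ℕ) [Fact p.Prime] (μ : Fin n → ZMod p) (hμ : Function.Injective μ)
    (F : (ZMod p)[X]) (hF0 : F ≠ 0) (hFd : F.natDegree ≤ n + 1) (hFμ : ∀ l, (X - C (μ l)) ∣ F)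
    (hB : 1 ≤ B) (hN : B ^ n * (A + n * B ^ n) ≤ t) (hp : A + n * (t * B) ≤ p) (m : ℕ) (hm : m ≤ n) :
    ∃ (ι : Type) (_ : Fintype ι) (f G : ι → (ZMod p)[X]), Fintype.card ι = B ^ m ∧
      (∀ i, (f i).natDegree ≤ m * (t * B)) ∧ (∀ i, (G i).natDegree ≤ n) ∧
      (∀ i, F * derivative (f i) = G i * f i) ∧
      (∀ i ν, eval ν (f i) = 0 → ∃ l : Fin n, (l : ℕ) < m ∧ ν = μ l) ∧
      (∀ i x, (∀ l, (x - μ l) ^ t = 1) → eval x (f i) = 1) ∧ svIndep A f := by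
  induction m with
  | zero =>
    refine ⟨Unit, inferInstance, fun _ => 1, fun _ => 0, by simp, by simp, by simp, by simp,
      by simp, by simp, ?_⟩
    intro P _ h i
    simpa using h
  | succ m ih =>
    obtain ⟨ι, _, f, G, hc, hfd, hG, hfG, hz, h1, hind⟩ := ih (by omega)
    let ν := μ ⟨m, hm⟩
    have hBmn : B ^ m ≤ B ^ n := Nat.pow_le_pow_right hB (by omega)
    have hstep := sv_step p F n A t ν f G hF0 hFd (hFμ _) hG hfG
      (fun i => by
        have := hfd i
        have : m * (t * B) ≤ n * (t * B) := Nat.mul_le_mul_right _ (by omega)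
        omega)
      (fun i h => by
        obtain ⟨l, hl, hl2⟩ := hz i ν h
        have := hμ hl2
        rw [← this] at hl
        simp at hl)
      (by
        rw [hc]
        refine le_trans ?_ hN
        gcongr) hind
    have hind' := sv_step_prod A t B (X - C ν) (X_sub_C_ne_zero ν) f hstep
    choose G' hG'1 hG'2 using fun x : ι × Fin B =>
      sv_extend F (f x.1) (G x.1) n (t * x.2) ν hF0 hFd (hFμ _) (hG _) (hfG _)
    refine ⟨ι × Fin B, inferInstance, _, G', ?_, ?_, hG'1, hG'2, ?_, ?_, hind'⟩
    · rw [Fintype.card_prod, hc, Fintype.card_fin, pow_succ]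
    · rintro ⟨i, j⟩
      refine natDegree_mul_le.trans ?_
      rw [natDegree_pow, natDegree_X_sub_C, mul_one, add_mul, one_mul]
      exact add_le_add (hfd i) (Nat.mul_le_mul_left _ j.2.le)
    · rintro ⟨i, j⟩ x hx
      rw [eval_mul] at hx
      rcases mul_eq_zero.1 hx with h | h
      · obtain ⟨l, hl, hl2⟩ := hz i x h
        exact ⟨l, by omega, hl2⟩
      · rw [eval_pow] at h
        have h2 := eq_zero_of_pow_eq_zero h
        refine ⟨⟨m, hm⟩, by simp, ?_⟩
        simpa [sub_eq_zero] using h2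
    · rintro ⟨i, j⟩ x hx
      simp only [eval_mul, eval_pow, eval_sub, eval_X, eval_C, h1 i x hx, one_mul, pow_mul]
      rw [hx ⟨m, hm⟩, one_pow]

theorem sv_stepanov (p n A D d : ℕ) [Fact p.Prime] (F : (ZMod p)[X]) {ι : Type} [Fintype ι]
    (f G : ι → (ZMod p)[X]) (hFd : F.natDegree ≤ n + 1)
    (hG : ∀ i, (G i).natDegree ≤ n)
    (hfG : ∀ i, F * derivative (f i) = G i * f i)
    (hfd : ∀ i, (f i).natDegree ≤ d) (hD : D ≤ p) (hind : svIndep A f)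
    (hcount : ∑ k ∈ Finset.range D, (A + n * k) < Fintype.card ι * A)
    (S : Finset (ZMod p)) (hS1 : ∀ x ∈ S, ∀ i, eval x (f i) = 1) (hSF : ∀ x ∈ S, eval x F ≠ 0) :
    S.card * D ≤ A + d := by
  classical
  let K := ZMod p
  let L : (ι → degreeLT K A) →ₗ[K] ((Σ k : Fin D, Fin (A + n * k)) → K) :=
    LinearMap.pi fun x => (lcoeff K (x.2 : ℕ)) ∘ₗ
      (∑ i, (svRop F (G i) (x.1 : ℕ)) ∘ₗ (degreeLT K A).subtype ∘ₗ LinearMap.proj i)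
  have hfin : Module.finrank K (degreeLT K A) = A := by
    rw [(degreeLTEquiv K A).finrank_eq]; simp
  have : FiniteDimensional K (degreeLT K A) :=
    Module.Finite.equiv (degreeLTEquiv K A).symm
  have hker : LinearMap.ker L ≠ ⊥ := by
    apply LinearMap.ker_ne_bot_of_finrank_lt
    rw [Module.finrank_pi, Module.finrank_pi_fintype]
    simp only [hfin, Fintype.card_sigma, Fintype.card_fin, Finset.sum_const, smul_eq_mul,
      Finset.card_univ]
    rw [Fin.sum_univ_eq_sum_range (fun k => A + n * k) D]
    exact hcount
  obtain ⟨v, hv, hv0⟩ := Submodule.exists_mem_ne_zero_of_ne_bot hker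
  let P : ι → K[X] := fun i => (v i : K[X])
  have hP : ∀ i, (P i).degree < A := fun i => mem_degreeLT.1 (v i).2
  have hsum : ∀ k : ℕ, k < D → ∑ i, svRop F (G i) k (P i) = 0 := by
    intro k hk
    have hdeg : (∑ i, svRop F (G i) k (P i)).degree < ((A + n * k : ℕ) : WithBot ℕ) := by
      refine (degree_sum_le _ _).trans_lt ?_
      rw [Finset.sup_lt_iff (WithBot.bot_lt_coe _)]
      exact fun i _ => svRop_degree F (G i) n A hFd (hG i) k (P i) (hP i)
    ext j
    rw [coeff_zero]
    by_cases hj : j < A + n * k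
    · have := congrFun (LinearMap.mem_ker.1 hv) ⟨⟨k, hk⟩, ⟨j, hj⟩⟩
      simpa [L, P] using this
    · exact coeff_eq_zero_of_degree_lt (hdeg.trans_le (by exact_mod_cast not_lt.1 hj))
  let Ψ : K[X] := ∑ i, P i * f i
  have hΨ : Ψ ≠ 0 := by
    intro h0
    apply hv0
    funext i
    exact Subtype.ext (hind P hP h0 i)
  have hΨd : Ψ.natDegree ≤ A + d := by
    refine natDegree_sum_le_of_forall_le _ _ fun i _ => ?_
    refine natDegree_mul_le.trans (add_le_add ?_ (hfd i))
    exact natDegree_le_of_degree_le (hP i).le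
  have hmult : ∀ x ∈ S, D ≤ Ψ.rootMultiplicity x := by
    intro x hx
    rcases Nat.eq_zero_or_pos D with h0 | hDpos
    · omega
    have := lt_rootMultiplicity_of_isRoot_iterate_derivative_of_mem_nonZeroDivisors (n := D - 1)
      (t := x) hΨ (fun k hk => by
        have h1 : F ^ k * derivative^[k] Ψ = ∑ i, f i * svRop F (G i) k (P i) := by
          rw [iterate_derivative_sum, Finset.mul_sum]
          exact Finset.sum_congr rfl fun i _ => svRop_spec _ _ _ (hfG i) _ _
        have h2 := congrArg (eval x) h1
        rw [eval_mul, eval_finsetSum, eval_pow] at h2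
        simp only [eval_mul, hS1 x hx, one_mul] at h2
        rw [← eval_finsetSum, hsum k (by omega), eval_zero] at h2
        exact (mul_eq_zero.1 h2).resolve_left (pow_ne_zero _ (hSF x hx))) (by
        apply mem_nonZeroDivisors_of_ne_zero
        rw [Ne, ZMod.natCast_eq_zero_iff, (Fact.out : p.Prime).dvd_factorial]
        omega)
    omega
  calc S.card * D = ∑ x ∈ S, D := by simp
    _ ≤ ∑ x ∈ S, Ψ.rootMultiplicity x := Finset.sum_le_sum hmult
    _ = ∑ x ∈ S, Ψ.roots.count x := by simp [count_roots]
    _ ≤ Ψ.roots.card := by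
        rw [← Multiset.toFinset_sum_count_eq Ψ.roots]
        refine Finset.sum_le_sum_of_ne_zero fun x _ hx => ?_
        rw [Multiset.mem_toFinset]
        exact Multiset.count_ne_zero.1 hx
    _ ≤ Ψ.natDegree := card_roots' _
    _ ≤ A + d := hΨd

theorem sv_core (p n B t : ℕ) [Fact p.Prime] (hn : 2 ≤ n) (μ : Fin n → ZMod p)
    (hμ : Function.Injective μ) (hμ0 : ∀ l, μ l ≠ 0) (hB : n < B) (hBt : B ^ (2 * n + 1) ≤ t)
    (hp : t * (2 * n * B + 1) ≤ p) (S : Finset (ZMod p))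
    (hS : ∀ x ∈ S, x ^ t = 1 ∧ ∀ l, (x - μ l) ^ t = 1) :
    S.card * (B ^ n * (B - n)) ≤ B ^ n * (B - n) + 2 * n * t * B := by
  classical
  obtain ⟨A, hA⟩ : ∃ A, A = B ^ n * (B - n) := ⟨_, rfl⟩
  rw [← hA]
  let F : (ZMod p)[X] := X * ∏ l, (X - C (μ l))
  have hprod0 : (∏ l, (X - C (μ l))) ≠ 0 := Finset.prod_ne_zero_iff.2 fun l _ => X_sub_C_ne_zero _
  have hF0 : F ≠ 0 := mul_ne_zero X_ne_zero hprod0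
  have hFd : F.natDegree ≤ n + 1 := by
    simp only [F]
    rw [natDegree_mul X_ne_zero hprod0, natDegree_X, natDegree_prod _ _ fun l _ => X_sub_C_ne_zero _]
    simp; omega
  have hFμ : ∀ l, (X - C (μ l)) ∣ F := fun l =>
    dvd_mul_of_dvd_right (Finset.dvd_prod_of_mem _ (Finset.mem_univ l)) _
  have hFX : (X - C (0 : ZMod p)) ∣ F := by simp [F]
  have hN : B ^ n * (A + n * B ^ n) ≤ t := by
    refine le_trans (le_of_eq ?_) hBt
    rw [hA]
    obtain ⟨c, rfl⟩ := Nat.exists_eq_add_of_lt hB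
    rw [show n + c + 1 - n = c + 1 by omega]
    ring
  have hAt : A ≤ t := by
    refine le_trans ?_ hN
    have : 1 ≤ B ^ n := Nat.one_le_pow _ _ (by omega)
    nlinarith [Nat.zero_le (n * B ^ n)]
  have hpA : A + n * (t * B) ≤ p := by nlinarith [Nat.zero_le (n * (t * B))]
  have hApos : 0 < A := by
    rw [hA]
    exact Nat.mul_pos (pow_pos (by omega) _) (by omega)
  have htpos : 0 < t := by omega
  obtain ⟨ι, _, f, G, hc, hfd, hG, hfG, hz, h1, hind⟩ :=
    sv_family p n A B t μ hμ F hF0 hFd hFμ (by omega) hN hpA n le_rfl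
  have hstep := sv_step p F n A t 0 f G hF0 hFd hFX hG hfG
    (fun i => by have := hfd i; omega)
    (fun i h => by
      obtain ⟨l, _, hl2⟩ := hz i 0 h
      exact hμ0 l hl2.symm)
    (by rw [hc]; exact hN) hind
  have hind' := sv_step_prod A t (n * B) (X - C 0) (X_sub_C_ne_zero 0) f hstep
  choose G' hG'1 hG'2 using fun x : ι × Fin (n * B) =>
    sv_extend F (f x.1) (G x.1) n (t * x.2) 0 hF0 hFd hFX (hG _) (hfG _)
  have := sv_stepanov p n A A (2 * n * t * B) F _ G' hFd hG'1 hG'2 (by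
      rintro ⟨i, j⟩
      refine natDegree_mul_le.trans ?_
      rw [natDegree_pow, natDegree_X_sub_C, mul_one]
      have h1 := hfd i
      have h2 : t * (j : ℕ) ≤ t * (n * B) := Nat.mul_le_mul_left _ j.2.le
      simp only
      calc _ ≤ n * (t * B) + t * (n * B) := add_le_add h1 h2
        _ = _ := by ring) (by omega) hind' (by
      have hs : ∑ k ∈ Finset.range A, (A + n * k) = A * A + n * ∑ k ∈ Finset.range A, k := by
        simp [Finset.sum_add_distrib, Finset.mul_sum]
      rw [Fintype.card_prod, hc, Fintype.card_fin, hs]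
      have hg := Finset.sum_range_id_mul_two A
      have hg2 : (∑ i ∈ Finset.range A, i) * 2 ≤ A * A := by
        rw [hg]; exact Nat.mul_le_mul_left _ (by omega)
      have h3 : A + n * A < 2 * (B ^ n * (n * B)) - A := by
        have hAB : A + n * B ^ n = B ^ n * B := by
          rw [hA, mul_comm n, ← mul_add]; congr 1; omega
        have : 0 < n * B ^ n := Nat.mul_pos (by omega) (pow_pos (by omega) _)
        have h4 : A < B ^ n * B := by omega
        have h5 : 2 * (B ^ n * (n * B)) = 2 * n * (B ^ n * B) := by ring
        rw [h5]
        have h6 : 2 * n * A < 2 * n * (B ^ n * B) := Nat.mul_lt_mul_of_pos_left h4 (by omega)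
        have h7 : A + n * A + A ≤ 2 * n * A := by nlinarith
        omega
      have h3' : A + n * A + A < 2 * (B ^ n * (n * B)) := by omega
      have h8 := Nat.mul_lt_mul_of_pos_right h3' hApos
      have h9 := Nat.mul_le_mul_left n hg2
      nlinarith) S (by
      rintro x hx ⟨i, j⟩
      obtain ⟨hx0, hxl⟩ := hS x hx
      simp only [eval_mul, eval_pow, eval_sub, eval_X, eval_C, h1 i x hxl, one_mul, pow_mul,
        sub_zero]
      rw [hx0, one_pow]) (by
      intro x hx
      obtain ⟨hx0, hxl⟩ := hS x hx
      simp only [F, eval_mul, eval_X, eval_prod, eval_sub, eval_C]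
      refine mul_ne_zero ?_ (Finset.prod_ne_zero_iff.2 fun l _ => ?_)
      · rintro rfl
        rw [zero_pow (by omega)] at hx0
        exact zero_ne_one hx0
      · intro h
        have := hxl l
        rw [h, zero_pow (by omega)] at this
        exact zero_ne_one this)
  exact this

theorem sv_numeric (n B : ℕ) (b c : ℝ) (hn : 2 ≤ n) (hB : 4 * n ≤ B) (hBb : (B : ℝ) ≤ b)
    (hbB : b < B + 1)
    (hc : c * ((B : ℝ) ^ n * (B - n)) ≤ (B : ℝ) ^ n * (B - n) + 2 * n * b ^ (2 * n + 1) * B) :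
    c ≤ 4 * ((n : ℝ) + 1) * (b + 1) ^ (n + 1) := by
  have hn' : (2 : ℝ) ≤ n := by exact_mod_cast hn
  have hB' : 4 * (n : ℝ) ≤ B := by exact_mod_cast hB
  have hB0 : (0 : ℝ) < B := by linarith
  have hb1 : 1 ≤ b := by linarith
  set A : ℝ := (B : ℝ) ^ n * (B - n) with hA
  have hApos : 0 < A := mul_pos (pow_pos hB0 _) (by linarith)
  have hbern : (3 / 4 : ℝ) * (B + 1) ^ n ≤ (B : ℝ) ^ n := by
    have h1 : (1 : ℝ) + n * (-(1 / (B + 1))) ≤ (1 + -(1 / ((B : ℝ) + 1))) ^ n := by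
      apply one_add_mul_le_pow
      have : 1 / ((B : ℝ) + 1) ≤ 1 := by rw [div_le_one (by linarith)]; linarith
      linarith
    have h2 : (1 + -(1 / ((B : ℝ) + 1))) = B / (B + 1) := by field_simp; ring
    rw [h2, div_pow, le_div_iff₀ (by positivity)] at h1
    refine le_trans ?_ h1
    gcongr
    have : (n : ℝ) * (1 / (B + 1)) ≤ 1 / 4 := by
      rw [mul_one_div, div_le_iff₀ (by linarith)]; linarith
    linarith
  have hbn : b ^ n ≤ (B + 1 : ℝ) ^ n := pow_le_pow_left₀ (by linarith) hbB.le _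
  have hpos : 0 < (B + 1 : ℝ) ^ n := by positivity
  have h2A : b ^ n * B ≤ 2 * A := by
    have h3 : (3 / 4 : ℝ) * B ≤ B - n := by linarith
    have h4 : ((3 / 4 : ℝ) * (B + 1) ^ n) * ((3 / 4 : ℝ) * B) ≤ A := by
      rw [hA]; exact mul_le_mul hbern h3 (by positivity) (by positivity)
    have h5 : b ^ n * B ≤ (B + 1 : ℝ) ^ n * B := mul_le_mul_of_nonneg_right hbn hB0.le
    have h6 : 0 < (B + 1 : ℝ) ^ n * B := by positivity
    nlinarith
  have hq : 1 ≤ b ^ (n + 1) := one_le_pow₀ hb1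
  have h7 : c * A ≤ (4 * (n + 1) * b ^ (n + 1)) * A := by
    refine hc.trans ?_
    have e : 2 * n * b ^ (2 * n + 1) * B = 2 * n * b ^ (n + 1) * (b ^ n * B) := by ring
    rw [e]
    have h8 : 2 * n * b ^ (n + 1) * (b ^ n * B) ≤ 2 * n * b ^ (n + 1) * (2 * A) := by gcongr
    have h9 : A ≤ b ^ (n + 1) * A := le_mul_of_one_le_left hApos.le hq
    nlinarith
  have h8 := le_of_mul_le_mul_right h7 hApos
  refine h8.trans ?_
  gcongr
  linarith

theorem sv_large (n : ℕ) (t : ℝ) (hn : 2 ≤ n)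
    (h1 : 32 * (n : ℝ) * (2 : ℝ) ^ (20 * (n : ℝ) * Real.log ((n : ℝ) + 1)) ≤ t) :
    (4 * (n : ℝ) + 1) ^ (2 * n + 1) ≤ t := by
  have hn' : (2 : ℝ) ≤ n := by exact_mod_cast hn
  have hlog : 0 ≤ Real.log ((n : ℝ) + 1) := Real.log_nonneg (by linarith)
  have e1 : ((n : ℝ) + 1) ^ (13 * n) ≤ (2 : ℝ) ^ (20 * (n : ℝ) * Real.log ((n : ℝ) + 1)) := by
    rw [Real.rpow_def_of_pos (by norm_num), ← Real.rpow_natCast,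
      Real.rpow_def_of_pos (by linarith)]
    apply Real.exp_le_exp.2
    have := Real.log_two_gt_d9
    push_cast
    have h3 : 0 ≤ (n : ℝ) * Real.log ((n : ℝ) + 1) := by positivity
    nlinarith
  have e2 : (4 * (n : ℝ) + 1) ≤ ((n : ℝ) + 1) ^ 3 := by nlinarith [sq_nonneg (n : ℝ)]
  calc (4 * (n : ℝ) + 1) ^ (2 * n + 1) ≤ (((n : ℝ) + 1) ^ 3) ^ (2 * n + 1) := by gcongr
    _ = ((n : ℝ) + 1) ^ (3 * (2 * n + 1)) := by rw [← pow_mul]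
    _ ≤ ((n : ℝ) + 1) ^ (13 * n) := by
        apply pow_le_pow_right₀ (by linarith); omega
    _ ≤ 1 * (2 : ℝ) ^ (20 * (n : ℝ) * Real.log ((n : ℝ) + 1)) := by rw [one_mul]; exact e1
    _ ≤ 32 * (n : ℝ) * (2 : ℝ) ^ (20 * (n : ℝ) * Real.log ((n : ℝ) + 1)) := by
        gcongr; linarith
    _ ≤ t := h1

end SVAux


/-- Shkredov–Vyugin: bound on the intersection of a subgroup of `F_p^*`
with `n` pairwise distinct additive shifts of itself. -/
theorem shkredov_vyugin (p n : ℕ) [Fact p.Prime] (hn : 2 ≤ n)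
    (Γ : Subgroup (ZMod p)ˣ) (μ : Fin n → (ZMod p)ˣ) (hμ : Function.Injective μ)
    (h1 : 32 * (n : ℝ) * (2 : ℝ) ^ (20 * (n : ℝ) * Real.log ((n : ℝ) + 1)) ≤ Nat.card Γ)
    (h2 : 4 * (n : ℝ) * (Nat.card Γ : ℝ) *
        ((Nat.card Γ : ℝ) ^ ((1 : ℝ) / (2 * (n : ℝ) + 1)) + 1) ≤ p) :
    (Nat.card {x : ZMod p | (∃ γ ∈ Γ, x = (γ : (ZMod p)ˣ)) ∧
        ∀ i : Fin n, ∃ γ ∈ Γ, x = ((γ : (ZMod p)ˣ) : ZMod p) + (μ i : ZMod p)} : ℝ) ≤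
      4 * ((n : ℝ) + 1) *
        ((Nat.card Γ : ℝ) ^ ((1 : ℝ) / (2 * (n : ℝ) + 1)) + 1) ^ (n + 1) := by

  classical
  have hn' : (2 : ℝ) ≤ n := by exact_mod_cast hn
  have hlarge := sv_large n _ hn h1
  obtain ⟨t, ht⟩ : ∃ t, t = Nat.card Γ := ⟨_, rfl⟩
  rw [← ht] at h1 h2 hlarge ⊢
  obtain ⟨b, hb⟩ : ∃ b : ℝ, b = (t : ℝ) ^ ((1 : ℝ) / (2 * (n : ℝ) + 1)) := ⟨_, rfl⟩
  rw [← hb] at h2 ⊢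
  have hb0 : 0 ≤ b := by rw [hb]; positivity
  have hbpow : b ^ (2 * n + 1) = t := by
    rw [hb, ← Real.rpow_natCast, ← Real.rpow_mul (by positivity)]
    push_cast
    rw [one_div_mul_cancel (by positivity), Real.rpow_one]
  have hb4 : 4 * (n : ℝ) + 1 ≤ b := by
    by_contra hlt
    push Not at hlt
    have := pow_lt_pow_left₀ hlt hb0 (n := 2 * n + 1) (by omega)
    rw [hbpow] at this
    linarith
  obtain ⟨B, hBdef⟩ : ∃ B, B = ⌊b⌋₊ := ⟨_, rfl⟩
  have hBb : (B : ℝ) ≤ b := by rw [hBdef]; exact Nat.floor_le hb0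
  have hbB : b < B + 1 := by rw [hBdef]; exact Nat.lt_floor_add_one b
  have hB4 : 4 * n ≤ B := by
    have : (4 * n : ℝ) < B + 1 := by linarith
    have : 4 * n < B + 1 := by exact_mod_cast this
    omega
  have hBt : B ^ (2 * n + 1) ≤ t := by
    have : (B : ℝ) ^ (2 * n + 1) ≤ t := by
      rw [← hbpow]; exact pow_le_pow_left₀ (by positivity) hBb _
    exact_mod_cast this
  have ht0 : (0 : ℝ) ≤ t := by positivity
  have hp : t * (2 * n * B + 1) ≤ p := by
    have : (t : ℝ) * (2 * n * B + 1) ≤ p := by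
      refine le_trans ?_ h2
      have : 2 * (n : ℝ) * B + 1 ≤ 4 * n * (b + 1) := by nlinarith
      calc (t : ℝ) * (2 * n * B + 1) ≤ t * (4 * n * (b + 1)) := by gcongr
        _ = _ := by ring
    exact_mod_cast this
  have hpow : ∀ γ ∈ Γ, ((γ : (ZMod p)ˣ) : ZMod p) ^ t = 1 := by
    intro γ hγ
    have h := pow_card_eq_one' (x := (⟨γ, hγ⟩ : Γ))
    rw [← ht] at h
    have h' := congrArg (fun y : Γ => ((y : (ZMod p)ˣ) : ZMod p)) h
    simpa using h'
  set S : Set (ZMod p) := {x : ZMod p | (∃ γ ∈ Γ, x = (γ : (ZMod p)ˣ)) ∧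
        ∀ i : Fin n, ∃ γ ∈ Γ, x = ((γ : (ZMod p)ˣ) : ZMod p) + (μ i : ZMod p)} with hS
  have hcore := sv_core p n B t hn (fun l => (μ l : ZMod p))
    (fun i j hij => hμ (Units.ext hij)) (fun l => (μ l).ne_zero) (by omega) hBt hp S.toFinset (by
      intro x hx
      rw [Set.mem_toFinset] at hx
      obtain ⟨⟨γ, hγ, rfl⟩, hx2⟩ := hx
      refine ⟨hpow γ hγ, fun l => ?_⟩
      obtain ⟨δ, hδ, hδ2⟩ := hx2 l
      rw [hδ2, add_sub_cancel_right]
      exact hpow δ hδ)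
  have hcard : Nat.card S = S.toFinset.card := by
    rw [Nat.card_eq_fintype_card, Set.toFinset_card]
  rw [hcard]
  apply sv_numeric n B b _ hn hB4 hBb hbB
  rw [hbpow]
  have hc2 : ((S.toFinset.card * (B ^ n * (B - n)) : ℕ) : ℝ) ≤
    ((B ^ n * (B - n) + 2 * n * t * B : ℕ) : ℝ) := by exact_mod_cast hcore
  push_cast [Nat.cast_sub (show n ≤ B by omega)] at hc2
  exact hc2
end

section
/- Let p be a prime, Γ a subgroup of F_p^*, and Γ_1, …, Γ_n cosets of Γ in F_p^* (Γ_i = g_i Γ with g_i ∈ F_p^*), n ≥ 2. Let f_1(x), …, f_n(x) ∈ F_p[x] be an admissible set of polynomials of degrees m_1 ≤ m_2 ≤ … ≤ m_n, and set M = {x ∈ F_p : f_i(x) ∈ Γ_i for all i = 1, …, n}. If 2^{2n} m_n^{4n} < |Γ| < (n+1)^{-2n/(2n+1)} (m_1 ⋯ m_n)^{-2/(2n+1)} · p^{1 - 1/(2n+1)}, then |M| ≤ 4(n+1)(m_1 + ⋯ + m_n)(m_1 ⋯ m_n)^{1/n} · |Γ|^{1/2 + 1/(2n)}. -/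
/-- A set of polynomials `f 0, …, f (n-1)` is admissible if there exist points
`x 0, …, x (n-1)` with `f i (x i) = 0`, `f j (x i) ≠ 0` for `j ≠ i`,
and `f i 0 ≠ 0` for all `i`. -/
def AdmissibleSet {n : ℕ} {K : Type*} [CommRing K] (f : Fin n → Polynomial K) : Prop :=
  ∃ x : Fin n → K, (∀ i, (f i).eval (x i) = 0) ∧
    (∀ i j, j ≠ i → (f j).eval (x i) ≠ 0) ∧ (∀ i, (f i).eval 0 ≠ 0)

section Aux

open Polynomial

lemma aux_exists_H {K : Type*} [Field K] {n : ℕ} (f : Fin n → K[X]) (e : Fin n → ℕ) :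
    ∃ H : K[X], (∏ i, f i) * derivative (∏ i, f i ^ e i) = H * ∏ i, f i ^ e i := by
  classical
  suffices h : ∀ s : Finset (Fin n), ∃ H : K[X],
      (∏ i ∈ s, f i) * derivative (∏ i ∈ s, f i ^ e i) = H * ∏ i ∈ s, f i ^ e i from h _
  intro s
  induction s using Finset.induction_on with
  | empty => exact ⟨0, by simp⟩
  | insert a s ha ih =>
    obtain ⟨H, hH⟩ := ih
    rw [Finset.prod_insert ha, Finset.prod_insert ha, derivative_mul]
    have h1 : ∃ J, f a * derivative (f a ^ e a) = J * f a ^ e a := by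
      rcases Nat.eq_zero_or_pos (e a) with h0 | h0
      · exact ⟨0, by simp [h0]⟩
      · refine ⟨C (e a : K) * derivative (f a), ?_⟩
        rw [derivative_pow]
        obtain ⟨k, hk⟩ := Nat.exists_eq_succ_of_ne_zero h0.ne'
        rw [hk]
        simp only [Nat.succ_eq_add_one, Nat.add_sub_cancel, pow_succ]
        ring
    obtain ⟨J, hJ⟩ := h1
    refine ⟨J * (∏ i ∈ s, f i) + H * f a, ?_⟩
    linear_combination (∏ i ∈ s, f i) * (∏ i ∈ s, f i ^ e i) * hJ + f a * f a ^ e a * hH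

lemma aux_exists_T {K : Type*} [Field K] (F G H : K[X]) (h : F * derivative G = H * G) (k : ℕ) :
    ∃ T : K[X] →ₗ[K] K[X], ∀ P, F ^ k * derivative^[k] (P * G) = T P * G := by
  induction k with
  | zero => exact ⟨LinearMap.id, by simp⟩
  | succ k ih =>
    obtain ⟨T, hT⟩ := ih
    refine ⟨(LinearMap.mulLeft K F) ∘ₗ derivative ∘ₗ T +
      (LinearMap.mulLeft K (H - (k : K[X]) * derivative F)) ∘ₗ T, fun P => ?_⟩
    have h1 := congrArg derivative (hT P)
    rw [derivative_mul, derivative_mul] at h1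
    rw [Function.iterate_succ_apply']
    simp only [LinearMap.add_apply, LinearMap.comp_apply, LinearMap.mulLeft_apply]
    have h2 : F * derivative (F ^ k) = (k : K[X]) * derivative F * F ^ k := by
      rw [derivative_pow]
      rcases k with _ | k
      · simp
      · simp only [Nat.add_sub_cancel, pow_succ]
        simp
        ring
    linear_combination F * h1 - derivative^[k] (P * G) * h2 + T P * h - ((k : K[X]) * derivative F) * hT P

lemma aux_natDegree_T {K : Type*} [Field K] {F G P R : K[X]} (hG : G ≠ 0) {k : ℕ}
    (h : F ^ k * derivative^[k] (P * G) = R * G) {a s : ℕ} (hF : F.natDegree ≤ s)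
    (hP : P.natDegree ≤ a) : R.natDegree ≤ a + k * s := by
  by_cases hR : R = 0
  · simp [hR]
  have h1 : (R * G).natDegree = R.natDegree + G.natDegree := natDegree_mul hR hG
  have h2 : (F ^ k * derivative^[k] (P * G)).natDegree ≤ k * s + (a + G.natDegree) := by
    refine natDegree_mul_le.trans (add_le_add ?_ ?_)
    · exact natDegree_pow_le.trans (Nat.mul_le_mul_left _ hF)
    · refine (natDegree_iterate_derivative _ _).trans ?_
      have := natDegree_mul_le (p := P) (q := G)
      omega
  rw [h, h1] at h2
  omega

lemma aux_operator {K : Type*} [Field K] [Infinite K] {p : ℕ} [Fact p.Prime] [CharP K p]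
    {r : ℕ} (v : Fin r → K[X]) (hv : LinearIndependent K v) (hdeg : ∀ b, (v b).natDegree < p)
    (c : Fin r → K[X]) (hc : ∀ b, ∑ k, c k * derivative^[(k : ℕ)] (v b) = 0) : c = 0 := by
  by_contra hne
  have hne' : ∃ k, c k ≠ 0 := by
    by_contra h; push Not at h; exact hne (funext h)
  classical
  obtain ⟨d, hd, hmax⟩ := (Finset.univ.filter (fun k => c k ≠ 0)).exists_max_image id
    (by obtain ⟨k, hk⟩ := hne'; exact ⟨k, by simp [hk]⟩)
  simp only [Finset.mem_filter, Finset.mem_univ, true_and, id] at hd hmax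
  obtain ⟨x, hx⟩ : ∃ x, (c d).eval x ≠ 0 := by
    by_contra h; push Not at h
    exact hd (Polynomial.funext (by simpa using h))
  -- kernel vector
  let Φ : (Fin r → K) →ₗ[K] (Fin (d : ℕ) → K) :=
    LinearMap.pi (fun k => (Polynomial.leval x) ∘ₗ (derivative ^ (k : ℕ)) ∘ₗ
      (Fintype.linearCombination K v))
  have hker : LinearMap.ker Φ ≠ ⊥ := by
    apply LinearMap.ker_ne_bot_of_finrank_lt
    simp
  obtain ⟨α, hα, hα0⟩ := (Submodule.ne_bot_iff _).1 hker
  set w : K[X] := ∑ b, α b • v b with hw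
  have hw0 : w ≠ 0 := by
    intro h0
    exact hα0 (funext (Fintype.linearIndependent_iff.1 hv α h0))
  have hwd : ∀ k < (d : ℕ), (derivative^[k] w).eval x = 0 := by
    intro k hk
    have := congrFun (LinearMap.mem_ker.1 hα) ⟨k, hk⟩
    rw [hw, iterate_derivative_sum, eval_finsetSum]
    simpa [Φ, Fintype.linearCombination_apply, Module.End.pow_apply] using this
  have hwdeg : w.natDegree < p := by
    have : w.natDegree ≤ p - 1 := by
      apply natDegree_sum_le_of_forall_le
      intro b _
      exact (natDegree_smul_le _ _).trans (by have := hdeg b; omega)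
    have := (Fact.out : p.Prime).pos
    omega
  have hrel : ∑ k, c k * derivative^[(k : ℕ)] w = 0 := by
    have : ∀ k : Fin r, c k * derivative^[(k : ℕ)] w
        = ∑ b, α b • (c k * derivative^[(k : ℕ)] (v b)) := by
      intro k
      rw [hw, iterate_derivative_sum, Finset.mul_sum]
      refine Finset.sum_congr rfl fun b _ => ?_
      rw [iterate_derivative_smul, mul_smul_comm]
    simp_rw [this]
    rw [Finset.sum_comm]
    simp_rw [← Finset.smul_sum, hc]
    simp
  have key : ∀ j, j ≤ p → ∀ i < j, (derivative^[i] w).eval x = 0 := by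
    intro j
    induction j with
    | zero => intro _ i hi; omega
    | succ j ih =>
      intro hj i hi
      have ih := ih (by omega)
      rcases Nat.lt_succ_iff_lt_or_eq.1 hi with hi | rfl
      · exact ih i hi
      rcases lt_or_ge i (d : ℕ) with hid | hid
      · exact hwd i hid
      have hdvd : (X - C x) ^ i ∣ w := by
        rcases Nat.eq_zero_or_pos i with h0 | h0
        · simp [h0]
        rw [← le_rootMultiplicity_iff hw0]
        have : i - 1 < rootMultiplicity x w := by
          apply lt_rootMultiplicity_of_isRoot_iterate_derivative_of_mem_nonZeroDivisors hw0
          · intro m hm; exact ih m (by omega)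
          · apply mem_nonZeroDivisors_of_ne_zero
            rw [Ne, CharP.cast_eq_zero_iff K p, (Fact.out : p.Prime).dvd_factorial]
            omega
        omega
      have h1 : (X - C x) ^ (i - d + 1) ∣ c d * derivative^[(d : ℕ)] w := by
        rw [← Finset.add_sum_erase _ _ (Finset.mem_univ d)] at hrel
        rw [eq_neg_of_add_eq_zero_left hrel, dvd_neg]
        apply Finset.dvd_sum
        intro k hk
        rw [Finset.mem_erase] at hk
        by_cases hck : c k = 0
        · simp [hck]
        have hkd : k < d := lt_of_le_of_ne (hmax k hck) hk.1
        apply Dvd.dvd.mul_left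
        refine (pow_dvd_pow _ ?_).trans (pow_sub_dvd_iterate_derivative_of_pow_dvd (k : ℕ) hdvd)
        have : (k : ℕ) < d := hkd
        omega
      have h2 : (X - C x) ^ (i - d + 1) ∣ derivative^[(d : ℕ)] w := by
        refine IsCoprime.dvd_of_dvd_mul_left ?_ h1
        apply IsCoprime.pow_left
        rw [(irreducible_X_sub_C x).coprime_iff_not_dvd, dvd_iff_isRoot]
        exact hx
      have h3 := pow_sub_dvd_iterate_derivative_of_pow_dvd (i - d) h2
      rw [← Function.iterate_add_apply] at h3
      have e1 : i - (d : ℕ) + 1 - (i - d) = 1 := by omega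
      have e2 : i - (d : ℕ) + d = i := by omega
      rw [e1, e2, pow_one, dvd_iff_isRoot] at h3
      exact h3
  have hp := (Fact.out : p.Prime).pos
  have hfin : p - 1 < rootMultiplicity x w := by
    apply lt_rootMultiplicity_of_isRoot_iterate_derivative_of_mem_nonZeroDivisors hw0
    · intro m hm; exact key p le_rfl m (by omega)
    · apply mem_nonZeroDivisors_of_ne_zero
      rw [Ne, CharP.cast_eq_zero_iff K p, (Fact.out : p.Prime).dvd_factorial]
      omega
  have h5 := (Polynomial.count_roots w (a := x)).symm.le.trans (Multiset.count_le_card _ _)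
  have h6 := Polynomial.card_roots' w
  omega

lemma aux_det {K : Type*} [Field K] [Infinite K] {p : ℕ} [Fact p.Prime] [CharP K p]
    {r a s t : ℕ} (hr : 0 < r) (P G H : Fin r → K[X]) (F : K[X])
    (hH : ∀ b, F * derivative (G b) = H b * G b) (hG : ∀ b, G b ≠ 0)
    (hv : LinearIndependent K (fun b => P b * G b)) (hdeg : ∀ b, (P b * G b).natDegree < p)
    (hF0 : F ≠ 0) (hF : F.natDegree ≤ s) (hP : ∀ b, (P b).natDegree ≤ a) (x : K)
    (hx : F.eval x = 0)
    (hGx : ∀ b, (G b).eval x ≠ 0) (hU : (X - C x) ^ t ∣ ∑ b, P b * G b) :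
    t ≤ ∑ k ∈ Finset.range r, (a + k * s) := by
  have hT := fun (k : Fin r) (b : Fin r) => aux_exists_T F (G b) (H b) (hH b) k
  choose T hT using hT
  let R : Matrix (Fin r) (Fin r) K[X] := Matrix.of (fun k b => T k b (P b))
  have hR : ∀ k b : Fin r, F ^ (k : ℕ) * derivative^[(k : ℕ)] (P b * G b) = R k b * G b :=
    fun k b => hT k b (P b)
  have hdet : R.det ≠ 0 := by
    intro h0
    obtain ⟨c, hc0, hc⟩ := Matrix.exists_vecMul_eq_zero_iff.2 h0
    have := aux_operator (p := p) (fun b => P b * G b) hv hdeg (fun k => c k * F ^ (k : ℕ)) ?_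
    · apply hc0
      funext k
      have h1 := congrFun this k
      simp only [Pi.zero_apply, mul_eq_zero] at h1
      exact h1.resolve_right (pow_ne_zero _ hF0)
    · intro b
      have h1 := congrFun hc b
      simp only [Matrix.vecMul, dotProduct, Pi.zero_apply] at h1
      calc _ = (∑ k, c k * R k b) * G b := by
            rw [Finset.sum_mul]
            refine Finset.sum_congr rfl fun k _ => ?_
            rw [mul_assoc, mul_assoc, hR]
        _ = 0 := by rw [h1, zero_mul]
  have hdvd : ∀ k : Fin r, (X - C x) ^ t ∣ ∑ b, R k b * G b := by
    intro k
    have h1 : ∑ b, R k b * G b = F ^ (k : ℕ) * derivative^[(k : ℕ)] (∑ b, P b * G b) := by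
      rw [iterate_derivative_sum, Finset.mul_sum]
      exact Finset.sum_congr rfl fun b _ => (hR k b).symm
    rw [h1]
    have h2 := pow_sub_dvd_iterate_derivative_of_pow_dvd (k : ℕ) hU
    have h3 : (X - C x) ^ (k : ℕ) ∣ F ^ (k : ℕ) := pow_dvd_pow_of_dvd (dvd_iff_isRoot.2 hx) _
    refine (pow_dvd_pow _ ?_).trans ((pow_add (X - C x) _ _).symm ▸ mul_dvd_mul h3 h2)
    omega
  have hdvd2 : (X - C x) ^ t ∣ R.det * G ⟨0, hr⟩ := by
    have h1 : (R.adjugate.mulVec (R.mulVec G)) ⟨0, hr⟩ = R.det * G ⟨0, hr⟩ := by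
      rw [Matrix.mulVec_mulVec, Matrix.adjugate_mul, Matrix.smul_mulVec, Matrix.one_mulVec]
      rfl
    rw [← h1]
    simp only [Matrix.mulVec, dotProduct]
    exact Finset.dvd_sum fun k _ => (hdvd k).mul_left _
  have hdvd3 : (X - C x) ^ t ∣ R.det := by
    refine IsCoprime.dvd_of_dvd_mul_right ?_ hdvd2
    apply IsCoprime.pow_left
    rw [(irreducible_X_sub_C x).coprime_iff_not_dvd, dvd_iff_isRoot]
    exact hGx _
  have h1 := natDegree_le_of_dvd hdvd3 hdet
  rw [natDegree_pow, natDegree_X_sub_C, mul_one] at h1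
  refine h1.trans ?_
  rw [← Fin.sum_univ_eq_sum_range (fun k => a + k * s) r, Matrix.det_apply']
  apply natDegree_sum_le_of_forall_le
  intro σ _
  refine natDegree_mul_le.trans ?_
  rw [natDegree_intCast, zero_add]
  refine (natDegree_prod_le _ _).trans ?_
  rw [← Equiv.sum_comp σ (fun k : Fin r => a + (k : ℕ) * s)]
  exact Finset.sum_le_sum fun b _ => aux_natDegree_T (hG b) (hR (σ b) b) hF (hP b)

lemma aux_indep {K : Type*} [Field K] [Infinite K] {p : ℕ} [Fact p.Prime] [CharP K p]
    {n a s t N : ℕ} (f : Fin n → K[X]) (x : Fin n → K) (hf0 : ∀ i, f i ≠ 0)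
    (hx : ∀ i, (f i).eval (x i) = 0) (hx' : ∀ i j, j ≠ i → (f j).eval (x i) ≠ 0)
    (hF : (∏ i, f i).natDegree ≤ s) (ht : ∑ k ∈ Finset.range N, (a + k * s) < t)
    (S : Finset (Fin n → ℕ)) (hS : S.card ≤ N)
    (hdeg : ∀ b ∈ S, a + (∏ i, f i ^ (t * b i)).natDegree < p)
    (P : (Fin n → ℕ) → K[X]) (hP : ∀ b ∈ S, (P b).natDegree ≤ a)
    (h0 : ∑ b ∈ S, P b * ∏ i, f i ^ (t * b i) = 0) : ∀ b ∈ S, P b = 0 := by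
  classical
  induction S using Finset.strongInduction generalizing P with
  | H S ih =>
  have hG : ∀ b : Fin n → ℕ, ∏ i, f i ^ (t * b i) ≠ 0 := fun b =>
    Finset.prod_ne_zero_iff.2 fun i _ => pow_ne_zero _ (hf0 i)
  by_contra hcon
  push Not at hcon
  obtain ⟨b0, hb0, hPb0⟩ := hcon
  have hall : ∀ b ∈ S, P b ≠ 0 := by
    intro b hb hPb
    have hs : S.erase b ⊂ S := Finset.erase_ssubset hb
    refine hPb0 (ih _ hs ((Finset.card_le_card hs.1).trans hS) (fun c hc => hdeg c (hs.1 hc)) P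
      (fun c hc => hP c (hs.1 hc)) ?_ b0 ?_)
    · rw [← h0, ← Finset.add_sum_erase _ _ hb, hPb]; simp
    · refine Finset.mem_erase.2 ⟨?_, hb0⟩
      rintro rfl; exact hPb0 hPb
  by_cases hsing : ∀ b1 ∈ S, b1 = b0
  · have : S = {b0} := Finset.eq_singleton_iff_unique_mem.2 ⟨hb0, hsing⟩
    rw [this, Finset.sum_singleton, mul_eq_zero] at h0
    exact h0.elim hPb0 (hG b0)
  push Not at hsing
  obtain ⟨b1, hb1, hne⟩ := hsing
  obtain ⟨i, hi⟩ := Function.ne_iff.1 hne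
  obtain ⟨bm, hbm, hmin⟩ := S.exists_min_image (fun b => b i) ⟨b0, hb0⟩
  set c := bm i with hc
  set S' := S.filter (fun b => b i = c) with hS'
  have hss : S' ⊂ S := by
    refine Finset.filter_ssubset.2 ?_
    by_cases h : b0 i = c
    · exact ⟨b1, hb1, fun h' => hi (h'.trans h.symm)⟩
    · exact ⟨b0, hb0, h⟩
  have hbmS' : bm ∈ S' := by simp [hS', hbm, hc]
  let e : (Fin n → ℕ) → (Fin n → ℕ) := fun b => Function.update b i 0
  have hGe : ∀ b ∈ S', ∏ j, f j ^ (t * b j) = f i ^ (t * c) * ∏ j, f j ^ (t * e b j) := by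
    intro b hb
    rw [← Finset.mul_prod_erase _ _ (Finset.mem_univ i),
      ← Finset.mul_prod_erase _ (fun j => f j ^ (t * e b j)) (Finset.mem_univ i)]
    have h1 : b i = c := (Finset.mem_filter.1 hb).2
    have h2 : e b i = 0 := by simp [e]
    rw [h1, h2]
    simp only [mul_zero, pow_zero, one_mul]
    congr 1
    refine Finset.prod_congr rfl fun j hj => ?_
    have : e b j = b j := by simp [e, Finset.ne_of_mem_erase hj]
    rw [this]
  have hdvd : f i ^ t ∣ ∑ b ∈ S', P b * ∏ j, f j ^ (t * e b j) := by
    have h1 : f i ^ (t * c) * f i ^ t ∣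
        f i ^ (t * c) * ∑ b ∈ S', P b * ∏ j, f j ^ (t * e b j) := by
      have h2 : f i ^ (t * c) * ∑ b ∈ S', P b * ∏ j, f j ^ (t * e b j)
          = ∑ b ∈ S', P b * ∏ j, f j ^ (t * b j) := by
        rw [Finset.mul_sum]
        refine Finset.sum_congr rfl fun b hb => ?_
        rw [hGe b hb]; ring
      rw [h2]
      rw [← Finset.sum_filter_add_sum_filter_not S (fun b => b i = c)] at h0
      rw [eq_neg_of_add_eq_zero_left h0, dvd_neg]
      refine Finset.dvd_sum fun b hb => ?_
      rw [Finset.mem_filter] at hb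
      apply Dvd.dvd.mul_left
      have h3 : c + 1 ≤ b i := Nat.lt_of_le_of_ne (hmin b hb.1) (Ne.symm hb.2)
      refine Dvd.dvd.trans ?_ (Finset.dvd_prod_of_mem _ (Finset.mem_univ i))
      rw [← pow_add]
      apply pow_dvd_pow
      calc t * c + t = t * (c + 1) := by ring
        _ ≤ t * b i := Nat.mul_le_mul_left _ h3
    exact (mul_dvd_mul_iff_left (pow_ne_zero _ (hf0 i))).1 h1
  have hcard : S'.card ≤ N := (Finset.card_le_card hss.1).trans hS
  let ε := S'.equivFin.symm
  choose H hH using fun b : Fin n → ℕ => aux_exists_H f (fun j => t * b j)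
  have hmain := aux_det (K := K) (p := p) (r := S'.card) (a := a) (s := s) (t := t)
    (Finset.card_pos.2 ⟨bm, hbmS'⟩) (fun k => P (ε k)) (fun k => ∏ j, f j ^ (t * e (ε k) j))
    (fun k => H (e (ε k))) (∏ j, f j) (fun k => hH _) (fun k => hG _) ?_ ?_
    (Finset.prod_ne_zero_iff.2 fun i _ => hf0 i) hF (fun k => hP _ (hss.1 (ε k).2)) (x i) ?_ ?_ ?_
  · have : ∑ k ∈ Finset.range S'.card, (a + k * s) ≤ ∑ k ∈ Finset.range N, (a + k * s) :=
      Finset.sum_le_sum_of_subset (Finset.range_mono hcard)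
    omega
  · rw [Fintype.linearIndependent_iff]
    intro α hα k
    have h1 := ih S' hss hcard (fun b hb => hdeg b (hss.1 hb))
      (fun b => if hb : b ∈ S' then C (α (ε.symm ⟨b, hb⟩)) * P b else 0) ?_ ?_ (ε k) (ε k).2
    · simp only [Finset.coe_mem, dif_pos, Subtype.coe_eta, Equiv.symm_apply_apply] at h1
      have h2 := hall _ (hss.1 (ε k).2)
      simpa [h2] using h1
    · intro b hb
      simp only [hb, dif_pos]
      exact (natDegree_C_mul_le _ _).trans (hP b (hss.1 hb))
    · rw [← Finset.sum_coe_sort, ← Equiv.sum_comp ε]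
      calc _ = f i ^ (t * c) * ∑ k, α k • (P (ε k) * ∏ j, f j ^ (t * e (ε k) j)) := by
            rw [Finset.mul_sum]
            refine Finset.sum_congr rfl fun k _ => ?_
            simp only [Finset.coe_mem, dif_pos, Subtype.coe_eta, Equiv.symm_apply_apply]
            rw [hGe _ (ε k).2, smul_eq_C_mul]
            ring
        _ = 0 := by rw [hα, mul_zero]
  · intro k
    refine lt_of_le_of_lt ?_ (hdeg _ (hss.1 (ε k).2))
    refine natDegree_mul_le.trans (add_le_add (hP _ (hss.1 (ε k).2)) ?_)
    refine natDegree_le_of_dvd ?_ (hG _)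
    rw [hGe _ (ε k).2]
    exact dvd_mul_left _ _
  · rw [eval_prod]
    exact Finset.prod_eq_zero (Finset.mem_univ i) (hx i)
  · intro k
    rw [eval_prod]
    refine Finset.prod_ne_zero_iff.2 fun j _ => ?_
    rw [eval_pow]
    by_cases hj : j = i
    · subst hj; simp [e]
    · exact pow_ne_zero _ (hx' i j hj)
  · refine (pow_dvd_pow_of_dvd (dvd_iff_isRoot.2 (hx i)) t).trans ?_
    have : ∑ b ∈ S', P b * ∏ j, f j ^ (t * e b j)
      = ∑ k, P (ε k) * ∏ j, f j ^ (t * e (ε k) j) := by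
      rw [← Finset.sum_coe_sort, ← Equiv.sum_comp ε]
    rw [← this]
    exact hdvd

lemma aux_construct {K : Type*} [Field K] {n a s D : ℕ} (S : Finset (Fin n → ℕ))
    (c : (Fin n → ℕ) → K) (T : ℕ → (Fin n → ℕ) → K[X] →ₗ[K] K[X])
    (hT : ∀ k b P, P.natDegree ≤ a → (T k b P).natDegree ≤ a + k * s)
    (hcount : ∑ k ∈ Finset.range D, (a + 1 + k * s) < S.card * (a + 1)) :
    ∃ P : (Fin n → ℕ) → K[X], (∀ b ∈ S, (P b).natDegree ≤ a) ∧ (∃ b ∈ S, P b ≠ 0) ∧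
      ∀ k < D, ∑ b ∈ S, C (c b) * T k b (P b) = 0 := by
  classical
  let Λ : ℕ → ((S → degreeLT K (a + 1)) →ₗ[K] K[X]) := fun k =>
    ∑ b : S, c b • (T k b ∘ₗ (degreeLT K (a + 1)).subtype ∘ₗ LinearMap.proj b)
  let Φ : (S → degreeLT K (a + 1)) →ₗ[K] ((k : Fin D) → (Fin (a + 1 + k * s) → K)) :=
    LinearMap.pi fun k => LinearMap.pi fun j => lcoeff K (j : ℕ) ∘ₗ Λ k
  have hfr : Module.finrank K (degreeLT K (a + 1)) = a + 1 := by
    rw [(degreeLTEquiv K (a + 1)).finrank_eq, Module.finrank_fin_fun]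
  have : Module.Finite K (degreeLT K (a + 1)) :=
    Module.Finite.equiv (degreeLTEquiv K (a + 1)).symm
  have hker : LinearMap.ker Φ ≠ ⊥ := by
    apply LinearMap.ker_ne_bot_of_finrank_lt
    rw [Module.finrank_pi_fintype, Module.finrank_pi_fintype]
    simp only [hfr, Module.finrank_fin_fun, Finset.sum_const, Finset.card_univ,
      Fintype.card_coe, smul_eq_mul]
    rw [Fin.sum_univ_eq_sum_range (fun k => a + 1 + k * s) D]
    exact hcount
  obtain ⟨y, hy, hy0⟩ := (Submodule.ne_bot_iff _).1 hker
  have hyd : ∀ b, ((y b : degreeLT K (a + 1)) : K[X]).natDegree ≤ a := by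
    intro b
    have := mem_degreeLT.1 (y b).2
    by_cases h0 : ((y b : degreeLT K (a + 1)) : K[X]) = 0
    · simp [h0]
    · have := (natDegree_lt_iff_degree_lt h0).2 this
      omega
  refine ⟨fun b => if hb : b ∈ S then (y ⟨b, hb⟩ : K[X]) else 0, ?_, ?_, ?_⟩
  · intro b hb
    simp only [hb, dif_pos]
    exact hyd _
  · obtain ⟨b, hb⟩ := Function.ne_iff.1 hy0
    refine ⟨b, b.2, ?_⟩
    simp only [Finset.coe_mem, dif_pos, Subtype.coe_eta]
    simpa using hb
  · intro k hk
    have hΛ : ∑ b ∈ S, C (c b) * T k b (if hb : b ∈ S then (y ⟨b, hb⟩ : K[X]) else 0) = Λ k y := by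
      rw [← Finset.sum_coe_sort]
      simp only [Λ, LinearMap.sum_apply, LinearMap.smul_apply, LinearMap.comp_apply,
        LinearMap.proj_apply, Submodule.subtype_apply, smul_eq_C_mul]
      refine Finset.sum_congr rfl fun b _ => ?_
      simp
    rw [hΛ]
    have hdeg : (Λ k y).natDegree ≤ a + k * s := by
      simp only [Λ, LinearMap.sum_apply, LinearMap.smul_apply, LinearMap.comp_apply,
        LinearMap.proj_apply, Submodule.subtype_apply]
      apply natDegree_sum_le_of_forall_le
      intro b _
      exact (natDegree_smul_le _ _).trans (hT _ _ _ (hyd b))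
    ext j
    rw [coeff_zero]
    by_cases hj : j < a + 1 + k * s
    · have := congrFun (congrFun (LinearMap.mem_ker.1 hy) ⟨k, hk⟩) ⟨j, hj⟩
      simpa [Φ] using this
    · exact coeff_eq_zero_of_natDegree_lt (by omega)

lemma aux_count {p n : ℕ} [Fact p.Prime]
    (Γ : Subgroup (ZMod p)ˣ) (g : Fin n → (ZMod p)ˣ)
    (f : Fin n → (ZMod p)[X]) (x : Fin n → ZMod p) (hf0 : ∀ i, f i ≠ 0)
    (hx : ∀ i, (f i).eval (x i) = 0) (hx' : ∀ i j, j ≠ i → (f j).eval (x i) ≠ 0)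
    {a s N D L : ℕ} (hs : ∑ i, (f i).natDegree ≤ s)
    (ht : ∑ k ∈ Finset.range N, (a + k * s) < Nat.card Γ)
    (S : Finset (Fin n → ℕ)) (hS : S.card = N)
    (hcount : ∑ k ∈ Finset.range D, (a + 1 + k * s) < N * (a + 1))
    (hL : ∀ b ∈ S, a + Nat.card Γ * ∑ i, (f i).natDegree * b i ≤ L) (hLp : L < p)
    (hD0 : 0 < D) (hDp : D ≤ p) :
    Nat.card {x : ZMod p | ∀ i : Fin n, ∃ γ ∈ Γ,
        (f i).eval x = ((g i : (ZMod p)ˣ) : ZMod p) * ((γ : (ZMod p)ˣ) : ZMod p)} * D ≤ L := by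
  classical
  set t := Nat.card Γ with htdef
  let G : (Fin n → ℕ) → (ZMod p)[X] := fun b => ∏ i, f i ^ (t * b i)
  let F : (ZMod p)[X] := ∏ i, f i
  have hG0 : ∀ b, G b ≠ 0 := fun b => Finset.prod_ne_zero_iff.2 fun i _ => pow_ne_zero _ (hf0 i)
  have hFs : F.natDegree ≤ s := (natDegree_prod_le _ _).trans hs
  have hGdeg : ∀ b, (G b).natDegree ≤ t * ∑ i, (f i).natDegree * b i := by
    intro b
    refine (natDegree_prod_le _ _).trans ?_
    rw [Finset.mul_sum]
    refine Finset.sum_le_sum fun i _ => natDegree_pow_le.trans (le_of_eq ?_)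
    ring
  have hTex : ∀ (k : ℕ) (b : Fin n → ℕ), ∃ T : (ZMod p)[X] →ₗ[ZMod p] (ZMod p)[X],
      ∀ P, F ^ k * derivative^[k] (P * G b) = T P * G b := by
    intro k b
    obtain ⟨H, hH⟩ := aux_exists_H f (fun j => t * b j)
    exact aux_exists_T F (G b) H hH k
  choose T hT using hTex
  let c : (Fin n → ℕ) → ZMod p := fun b => ∏ i, ((g i : (ZMod p)ˣ) : ZMod p) ^ (t * b i)
  obtain ⟨P, hPdeg, ⟨b0, hb0, hPb0⟩, hPk⟩ := aux_construct (s := s) (D := D) S c T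
    (fun k b P hP => aux_natDegree_T (hG0 b) (hT k b P) hFs hP) (hS ▸ hcount)
  set Ψ : (ZMod p)[X] := ∑ b ∈ S, P b * G b with hΨ
  have hΨ0 : Ψ ≠ 0 := by
    intro h0
    let K := AlgebraicClosure (ZMod p)
    let φ : ZMod p →+* K := algebraMap (ZMod p) K
    have : CharP K p := charP_of_injective_algebraMap φ.injective p
    have : Infinite K := IsAlgClosed.instInfinite
    have := aux_indep (K := K) (p := p) (a := a) (s := s) (t := t) (N := N)
      (fun i => (f i).map φ) (fun i => φ (x i))
      (fun i => (Polynomial.map_ne_zero_iff φ.injective).2 (hf0 i))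
      (fun i => by rw [eval_map_apply, hx, map_zero])
      (fun i j hij => by
        rw [eval_map_apply]
        exact (map_ne_zero φ).2 (hx' i j hij)) ?_ ht S hS.le ?_ (fun b => (P b).map φ) ?_ ?_ b0 hb0
    · exact (Polynomial.map_ne_zero_iff φ.injective).2 hPb0 this
    · rw [← Polynomial.map_prod]
      exact natDegree_map_le.trans hFs
    · intro b hb
      have h1 : ∏ i, ((f i).map φ) ^ (t * b i) = (G b).map φ := by
        simp only [G, Polynomial.map_prod, Polynomial.map_pow]
      rw [h1]
      have h2 := natDegree_map_le (f := φ) (p := G b)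
      have h3 := hGdeg b
      have h4 := hL b hb
      omega
    · intro b hb
      exact natDegree_map_le.trans (hPdeg b hb)
    · have h1 := congrArg (Polynomial.map φ) h0
      rw [hΨ, Polynomial.map_sum, Polynomial.map_zero] at h1
      rw [← h1]
      refine Finset.sum_congr rfl fun b _ => ?_
      simp only [G, Polynomial.map_mul, Polynomial.map_prod, Polynomial.map_pow]
  have hΨdeg : Ψ.natDegree ≤ L := by
    apply natDegree_sum_le_of_forall_le
    intro b hb
    refine natDegree_mul_le.trans ?_
    have h1 := hPdeg b hb
    have h3 := hGdeg b
    have h4 := hL b hb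
    omega
  set M := {x : ZMod p | ∀ i : Fin n, ∃ γ ∈ Γ,
        (f i).eval x = ((g i : (ZMod p)ˣ) : ZMod p) * ((γ : (ZMod p)ˣ) : ZMod p)} with hM
  have hroot : ∀ y ∈ M, D ≤ rootMultiplicity y Ψ := by
    intro y hy
    have hGy : ∀ b, (G b).eval y = c b := by
      intro b
      simp only [G, c, eval_prod, eval_pow]
      refine Finset.prod_congr rfl fun i _ => ?_
      obtain ⟨γ, hγ, h1⟩ := hy i
      have h2 : γ ^ t = 1 := by
        exact congrArg Subtype.val (pow_card_eq_one' (x := (⟨γ, hγ⟩ : Γ)))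
      have h3 : (γ : ZMod p) ^ t = 1 := by
        rw [← Units.val_pow_eq_pow_val, h2, Units.val_one]
      rw [h1, mul_pow, pow_mul (γ : ZMod p), h3, one_pow, mul_one]
    have hFy : F.eval y ≠ 0 := by
      simp only [F, eval_prod]
      refine Finset.prod_ne_zero_iff.2 fun i _ => ?_
      obtain ⟨γ, hγ, h1⟩ := hy i
      rw [h1]
      exact mul_ne_zero (Units.ne_zero _) (Units.ne_zero _)
    have : D - 1 < rootMultiplicity y Ψ := by
      apply lt_rootMultiplicity_of_isRoot_iterate_derivative_of_mem_nonZeroDivisors hΨ0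
      · intro k hk
        have h1 : F ^ k * derivative^[k] Ψ = ∑ b ∈ S, T k b (P b) * G b := by
          rw [hΨ, iterate_derivative_sum, Finset.mul_sum]
          exact Finset.sum_congr rfl fun b _ => hT k b (P b)
        have h2 := congrArg (eval y) h1
        have h3 := congrArg (eval y) (hPk k (by omega))
        rw [eval_mul, eval_pow, eval_finsetSum] at h2
        rw [eval_finsetSum, eval_zero] at h3
        have h4 : ∑ b ∈ S, eval y (T k b (P b) * G b) = 0 := by
          rw [← h3]
          refine Finset.sum_congr rfl fun b _ => ?_
          rw [eval_mul, eval_mul, hGy, eval_C, mul_comm]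
        rw [h4, mul_eq_zero] at h2
        exact h2.resolve_left (pow_ne_zero _ hFy)
      · apply mem_nonZeroDivisors_of_ne_zero
        rw [Ne, CharP.cast_eq_zero_iff (ZMod p) p, (Fact.out : p.Prime).dvd_factorial]
        omega
    omega
  refine le_trans ?_ ((card_roots' Ψ).trans hΨdeg)
  have hMc : Nat.card M = M.toFinset.card := by
    rw [Nat.card_eq_fintype_card, Set.toFinset_card]
  have hsub : D • M.toFinset.val ≤ Ψ.roots := by
    rw [Multiset.le_iff_count]
    intro y
    rw [Multiset.count_nsmul, count_roots]
    by_cases hy : y ∈ M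
    · rw [Multiset.count_eq_one_of_mem M.toFinset.nodup (by simpa using hy), mul_one]
      exact hroot y hy
    · rw [Multiset.count_eq_zero_of_notMem (by simpa using hy)]
      simp
  have := Multiset.card_le_card hsub
  rw [Multiset.card_nsmul] at this
  rw [hMc, mul_comm]
  exact this

lemma aux_sum (a s N : ℕ) :
    2 * ∑ k ∈ Finset.range N, (a + k * s) + s * N = 2 * N * a + s * N * N := by
  induction N with
  | zero => simp
  | succ N ih => rw [Finset.sum_range_succ]; linarith

end Aux

set_option maxHeartbeats 2000000

/-- Main theorem: bound on the number of `x ∈ F_p` with `f i (x)` in the coset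
`g i • Γ` for all `i`, for an admissible set of polynomials. -/
theorem main_theorem (p n : ℕ) [Fact p.Prime] (hn : 2 ≤ n)
    (Γ : Subgroup (ZMod p)ˣ) (g : Fin n → (ZMod p)ˣ)
    (f : Fin n → Polynomial (ZMod p)) (m : Fin n → ℕ)
    (hdeg : ∀ i, (f i).natDegree = m i) (hmono : Monotone m)
    (hadm : AdmissibleSet f)
    (hlow : (2 : ℝ) ^ (2 * n) * (m ⟨n - 1, by omega⟩ : ℝ) ^ (4 * n) < Nat.card Γ)
    (hup : (Nat.card Γ : ℝ) <
        ((n : ℝ) + 1) ^ (-(2 * (n : ℝ)) / (2 * (n : ℝ) + 1)) *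
          (∏ i, (m i : ℝ)) ^ (-(2 : ℝ) / (2 * (n : ℝ) + 1)) *
          (p : ℝ) ^ ((1 : ℝ) - 1 / (2 * (n : ℝ) + 1))) :
    (Nat.card {x : ZMod p | ∀ i : Fin n, ∃ γ ∈ Γ,
        (f i).eval x = ((g i : (ZMod p)ˣ) : ZMod p) * ((γ : (ZMod p)ˣ) : ZMod p)} : ℝ) ≤
      4 * ((n : ℝ) + 1) * (∑ i, (m i : ℝ)) * (∏ i, (m i : ℝ)) ^ ((1 : ℝ) / n) *
        (Nat.card Γ : ℝ) ^ ((1 : ℝ) / 2 + 1 / (2 * (n : ℝ))) := by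
  classical
  obtain ⟨x, hx, hx', hz⟩ := hadm
  have hf0 : ∀ i, f i ≠ 0 := by
    intro i h
    exact hz i (by rw [h, Polynomial.eval_zero])
  have hm1 : ∀ i, 1 ≤ m i := by
    intro i
    by_contra h
    have h0 : (f i).natDegree = 0 := by rw [hdeg]; omega
    have h1 := hx i
    have h2 := hz i
    rw [Polynomial.eq_C_of_natDegree_eq_zero h0, Polynomial.eval_C] at h1 h2
    exact h2 h1
  set t := Nat.card Γ with ht
  set mn := m ⟨n - 1, by omega⟩ with hmn
  have hmn1 : 1 ≤ mn := hm1 _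
  have hmle : ∀ i, m i ≤ mn := fun i => hmono (by
    rw [Fin.le_def]; have := i.2; simp only; omega)
  set s := ∑ i, m i with hs
  have hs2 : 2 ≤ s := by
    have : ∑ i : Fin n, 1 ≤ s := Finset.sum_le_sum fun i _ => hm1 i
    simp at this
    omega
  have hsn : s ≤ n * mn := by
    have : s ≤ ∑ i : Fin n, mn := Finset.sum_le_sum fun i _ => hmle i
    simpa using this
  set π : ℝ := ∏ i, (m i : ℝ) with hπ
  have hπ1 : 1 ≤ π := by
    have : (1 : ℝ) = ∏ i : Fin n, 1 := by simp
    rw [this]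
    exact Finset.prod_le_prod (by simp) (fun i _ => by exact_mod_cast hm1 i)
  have hn0 : (0 : ℝ) < n := by positivity
  set q : ℝ := π ^ ((1 : ℝ) / n) with hq
  have hq1 : 1 ≤ q := Real.one_le_rpow hπ1 (by positivity)
  have hqn : q ^ n = π := by
    rw [hq, ← Real.rpow_natCast, ← Real.rpow_mul (by linarith)]
    rw [one_div_mul_cancel hn0.ne', Real.rpow_one]
  have ht0 : (0 : ℝ) ≤ t := by positivity
  set y : ℝ := Real.sqrt t with hy
  have hyy : y * y = t := Real.mul_self_sqrt ht0
  have hy0 : 0 ≤ y := Real.sqrt_nonneg _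
  have hylow : (2 : ℝ) ^ n * (mn : ℝ) ^ (2 * n) < y := by
    apply Real.lt_sqrt_of_sq_lt
    refine lt_of_eq_of_lt ?_ hlow
    rw [mul_pow, ← pow_mul, ← pow_mul]
    ring_nf
  have hmnR : (1 : ℝ) ≤ mn := by exact_mod_cast hmn1
  have hy4 : 4 < y := by
    have h1 : (4 : ℝ) ≤ 2 ^ n := by
      calc (4 : ℝ) = 2 ^ 2 := by norm_num
        _ ≤ 2 ^ n := pow_le_pow_right₀ (by norm_num) hn
    have h2 : (1 : ℝ) ≤ (mn : ℝ) ^ (2 * n) := one_le_pow₀ hmnR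
    nlinarith
  have hsy : (s : ℝ) ≤ y := by
    have h1 : (s : ℝ) ≤ n * mn := by exact_mod_cast hsn
    have h2 : (n : ℝ) ≤ 2 ^ n := by exact_mod_cast Nat.lt_two_pow_self.le
    have h3 : (mn : ℝ) ≤ (mn : ℝ) ^ (2 * n) := le_self_pow₀ hmnR (by omega)
    have h4 : (n : ℝ) * mn ≤ 2 ^ n * (mn : ℝ) ^ (2 * n) := by gcongr
    linarith
  have ht1 : (1 : ℝ) ≤ t := by nlinarith
  set τ : ℝ := (t : ℝ) ^ ((1 : ℝ) / (2 * n)) with hτ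
  have hτ1 : 1 ≤ τ := Real.one_le_rpow ht1 (by positivity)
  have hτn : τ ^ n = y := by
    rw [hτ, hy, Real.sqrt_eq_rpow, ← Real.rpow_natCast, ← Real.rpow_mul ht0]
    congr 1
    field_simp
  have hτy : (t : ℝ) ^ ((1 : ℝ) / 2 + 1 / (2 * (n : ℝ))) = y * τ := by
    rw [Real.rpow_add (by linarith), ← Real.sqrt_eq_rpow]
  have hupp : ((n : ℝ) + 1) * q * τ * t < p := by
    have hp0 : (0 : ℝ) ≤ p := by positivity
    have h1 := Real.rpow_lt_rpow ht0 hup (z := (2 * (n : ℝ) + 1) / (2 * n)) (by positivity)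
    rw [Real.mul_rpow (by positivity) (by positivity),
      Real.mul_rpow (by positivity) (by positivity), ← Real.rpow_mul (by positivity),
      ← Real.rpow_mul (by positivity), ← Real.rpow_mul (by positivity)] at h1
    have e1 : -(2 * (n : ℝ)) / (2 * (n : ℝ) + 1) * ((2 * (n : ℝ) + 1) / (2 * n)) = -1 := by
      field_simp
    have e2 : -(2 : ℝ) / (2 * (n : ℝ) + 1) * ((2 * (n : ℝ) + 1) / (2 * n)) = -((1 : ℝ) / n) := by
      field_simp
    have e3 : ((1 : ℝ) - 1 / (2 * (n : ℝ) + 1)) * ((2 * (n : ℝ) + 1) / (2 * n)) = 1 := by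
      field_simp
      ring
    have e4 : (2 * (n : ℝ) + 1) / (2 * n) = 1 + 1 / (2 * n) := by
      field_simp
    rw [e1, e2, e3, e4, Real.rpow_add (by linarith), Real.rpow_one, Real.rpow_one,
      Real.rpow_neg_one, Real.rpow_neg (by linarith)] at h1
    change t * τ < ((n : ℝ) + 1)⁻¹ * q⁻¹ * p at h1
    have hq0 : 0 < q := by linarith
    calc ((n : ℝ) + 1) * q * τ * t = ((n : ℝ) + 1) * q * (t * τ) := by ring
      _ < ((n : ℝ) + 1) * q * (((n : ℝ) + 1)⁻¹ * q⁻¹ * p) := by gcongr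
      _ = p := by field_simp
  have hsR : (2 : ℝ) ≤ s := by exact_mod_cast hs2
  set E : ℕ := ⌊y / (4 * s)⌋₊ with hE
  have hE1 : (s : ℝ) * E * 4 ≤ y := by
    have h1 : (E : ℝ) ≤ y / (4 * s) := Nat.floor_le (by positivity)
    rw [le_div_iff₀ (by positivity)] at h1
    linarith
  have hE2 : y < 4 * s * (E + 1) := by
    have h1 : y / (4 * s) < E + 1 := Nat.lt_floor_add_one _
    rw [div_lt_iff₀ (by positivity)] at h1
    linarith
  have hE0 : (0 : ℝ) ≤ E := by positivity
  have hE3 : (E : ℝ) * 8 ≤ y := by nlinarith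
  have hqτt : (t : ℝ) ≤ q * τ * t := by
    have : 1 ≤ q * τ := one_le_mul_of_one_le_of_one_le hq1 hτ1
    nlinarith
  -- the exponent box
  let box : Finset (Fin n → ℕ) :=
    Fintype.piFinset (fun i => Finset.range (⌊q * τ / m i⌋₊ + 1))
  have hbox : 2 * (E + 1) ≤ box.card := by
    have h1 : y ≤ box.card := by
      rw [Fintype.card_piFinset]
      simp only [Finset.card_range]
      push_cast
      calc y = ∏ i : Fin n, (q * τ / m i) := by
            rw [Finset.prod_div_distrib, Finset.prod_const, Finset.card_univ, Fintype.card_fin,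
              mul_pow, hqn, hτn, ← hπ, mul_div_cancel_left₀ _ (by linarith)]
        _ ≤ _ := Finset.prod_le_prod (fun i _ => by positivity)
            (fun i _ => (Nat.lt_floor_add_one _).le)
    have h2 : ((2 * (E + 1) : ℕ) : ℝ) ≤ box.card := by
      push_cast
      linarith
    exact_mod_cast h2
  obtain ⟨S, hSbox, hScard⟩ := Finset.exists_subset_card_eq hbox
  have hqτ0 : 0 ≤ q * τ := by positivity
  have hfin := aux_count Γ g f x hf0 hx hx' (a := s * E) (s := s) (N := 2 * (E + 1)) (D := E + 1)
    (L := ⌊((n : ℝ) + 1) * q * τ * t⌋₊) (by simp [hdeg, hs]) ?_ S hScard ?_ ?_ ?_ (by omega) ?_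
  · rw [hτy]
    set c := Nat.card {x : ZMod p | ∀ i : Fin n, ∃ γ ∈ Γ,
        (f i).eval x = ((g i : (ZMod p)ˣ) : ZMod p) * ((γ : (ZMod p)ˣ) : ZMod p)} with hc
    have h1 : ((c * (E + 1) : ℕ) : ℝ) ≤ ((n : ℝ) + 1) * q * τ * t :=
      (Nat.cast_le.2 hfin).trans (Nat.floor_le (by positivity))
    push_cast at h1
    have h2 : ((n : ℝ) + 1) * q * τ * t ≤
        (4 * ((n : ℝ) + 1) * s * q * (y * τ)) * (E + 1) := by
      calc ((n : ℝ) + 1) * q * τ * t = (((n : ℝ) + 1) * q * τ * y) * y := by rw [← hyy]; ring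
        _ ≤ (((n : ℝ) + 1) * q * τ * y) * (4 * s * (E + 1)) := by gcongr
        _ = _ := by ring
    have h3 : (∑ i, (m i : ℝ)) = s := by rw [hs]; push_cast; rfl
    rw [h3]
    exact le_of_mul_le_mul_right (h1.trans h2) (by positivity)
  · have h1 := aux_sum (s * E) s (2 * (E + 1))
    have h2 : ∑ k ∈ Finset.range (2 * (E + 1)), (s * E + k * s) = s * (E + 1) * (4 * E + 1) := by
      linarith
    rw [h2]
    have h3 : (s : ℝ) * (E + 1) * (4 * E + 1) < t := by
      rw [← hyy]
      have h4 : (s : ℝ) * E * 4 * E ≤ y * E := by gcongr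
      nlinarith
    exact_mod_cast h3
  · have h1 := aux_sum (s * E + 1) s (E + 1)
    have h2 := Nat.zero_le (s * E * E)
    have h3 := Nat.zero_le (s * E)
    generalize ∑ k ∈ Finset.range (E + 1), (s * E + 1 + k * s) = Y at h1 ⊢
    by_contra hcon
    push Not at hcon
    linarith
  · intro b hb
    apply Nat.le_floor
    push_cast
    have h1 : ∑ i, ((f i).natDegree : ℝ) * (b i : ℝ) ≤ n * (q * τ) := by
      calc ∑ i, ((f i).natDegree : ℝ) * (b i : ℝ) ≤ ∑ i : Fin n, q * τ := by
            refine Finset.sum_le_sum fun i _ => ?_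
            have h2 := Finset.mem_range.1 (Fintype.mem_piFinset.1 (hSbox hb) i)
            have h3 : (b i : ℝ) ≤ q * τ / m i :=
              (Nat.cast_le.2 (Nat.lt_succ_iff.1 h2)).trans (Nat.floor_le (by positivity))
            have h4 : (0 : ℝ) < m i := by exact_mod_cast hm1 i
            rw [le_div_iff₀ h4] at h3
            rw [hdeg]
            linarith
        _ = _ := by simp
    have h5 : (t : ℝ) * ∑ i, ((f i).natDegree : ℝ) * (b i : ℝ) ≤ t * (n * (q * τ)) := by gcongr
    have h6 : (s : ℝ) * E ≤ t := by nlinarith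
    linarith
  · rw [Nat.floor_lt (by positivity)]
    exact hupp
  · have h1 : ((E + 1 : ℕ) : ℝ) ≤ p := by
      push_cast
      have h2 : y ≤ t := by nlinarith
      have h3 : 0 ≤ (n : ℝ) * (q * τ * t) := by positivity
      linarith
    exact_mod_cast h1
end

section
/- Let p be a prime, let f_1(x), …, f_n(x) ∈ F_p[x] be an admissible set of polynomials with deg f_i = m_i, let t, A, B_1, …, B_n be positive integers, and write 𝓜_k = m_1 + ⋯ + m_k. If A − 1 + (B_1 m_1 + ⋯ + B_{n−1} m_{n−1} − 𝓜_{n−1}) t < p and t > A·B_1⋯B_{n−1} + 𝓜_n · (B_1⋯B_{n−1})²/2, then the polynomials x^a · f_1(x)^{b_1 t} ⋯ f_n(x)^{b_n t}, for all integers 0 ≤ a < A and 0 ≤ b_i < B_i (i = 1, …, n), are linearly independent over the field F_p. -/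
open Polynomial


/-- A nonzero combination of falling factorial polynomials is nonzero. -/
lemma aux_desc_ne_zero {K : Type*} [Field K] {N : ℕ} (c : Fin N → K) (hc : c ≠ 0) :
    (∑ k : Fin N, C (c k) * descPochhammer K (k : ℕ)) ≠ 0 := by
  let S : Polynomial.Sequence K :=
    { elems' := fun k => descPochhammer K k
      degree_eq' := fun k => by
        rw [degree_eq_natDegree (monic_descPochhammer K k).ne_zero, descPochhammer_natDegree] }
  have hS := (S.linearIndependent).comp (fun k : Fin N => (k : ℕ)) Fin.val_injective
  rw [Fintype.linearIndependent_iff] at hS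
  intro h
  apply hc
  funext k
  refine hS c ?_ k
  rw [← h]
  refine Finset.sum_congr rfl fun k _ => ?_
  rw [smul_eq_C_mul]
  rfl

lemma aux_euler {K : Type*} [Field K] (v : K[X]) (k e : ℕ) :
    (X ^ k * derivative^[k] v).coeff e = (e.descFactorial k : K) * v.coeff e := by
  rw [coeff_X_pow_mul']
  split_ifs with h
  · rw [coeff_iterate_derivative, Nat.sub_add_cancel h, nsmul_eq_mul]
  · rw [Nat.descFactorial_eq_zero_iff_lt.2 (by omega)]
    simp

/-- A nonzero differential operator of order `< N` cannot kill `N` linearly independent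
polynomials of degree `< p`. -/
lemma aux_kernel (p : ℕ) [Fact p.Prime] {N : ℕ} (y : Fin N → (ZMod p)[X])
    (hy : LinearIndependent (ZMod p) y) (hdeg : ∀ j, (y j).natDegree < p)
    (q : Fin N → (ZMod p)[X]) (hq : q ≠ 0)
    (hL : ∀ j, ∑ k : Fin N, q k * derivative^[(k : ℕ)] (y j) = 0) : False := by
  classical
  set r : Fin N → (ZMod p)[X] := fun k => X ^ (N - (k : ℕ)) * q k with hr
  obtain ⟨k₀, hk₀⟩ : ∃ k, q k ≠ 0 := by
    by_contra h
    push Not at h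
    exact hq (funext h)
  obtain ⟨k₁, hk₁, hmax⟩ := Finset.exists_max_image (Finset.univ.filter fun k => r k ≠ 0)
    (fun k => (r k).natDegree)
    ⟨k₀, by simp [hr, hk₀]⟩
  simp only [Finset.mem_filter, Finset.mem_univ, true_and] at hk₁ hmax
  set s := (r k₁).natDegree with hs
  have hrs : ∀ k, (r k).natDegree ≤ s := by
    intro k
    by_cases h : r k = 0
    · simp [h]
    · exact hmax k h
  set c : Fin N → ZMod p := fun k => (r k).coeff s with hc
  have hc0 : c ≠ 0 := by
    intro h
    have := congrFun h k₁
    simp only [hc, hs, Pi.zero_apply, coeff_natDegree, leadingCoeff_eq_zero] at this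
    exact hk₁ this
  set R := ∑ k : Fin N, C (c k) * descPochhammer (ZMod p) (k : ℕ) with hR
  have hR0 : R ≠ 0 := aux_desc_ne_zero c hc0
  have hN : 0 < N := k₀.pos
  have hRdeg : R.natDegree < N := by
    have : R.natDegree ≤ N - 1 := by
      apply natDegree_sum_le_of_forall_le
      intro k _
      refine (natDegree_C_mul_le _ _).trans ?_
      rw [descPochhammer_natDegree]
      omega
    omega
  have key : ∀ v : (ZMod p)[X], v ≠ 0 →
      ∑ k : Fin N, q k * derivative^[(k : ℕ)] v = 0 → R.eval (v.natDegree : ZMod p) = 0 := by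
    intro v hv hLv
    have h1 : ∑ k : Fin N, r k * (X ^ (k : ℕ) * derivative^[(k : ℕ)] v) = 0 := by
      have : ∑ k : Fin N, r k * (X ^ (k : ℕ) * derivative^[(k : ℕ)] v)
          = X ^ N * ∑ k : Fin N, q k * derivative^[(k : ℕ)] v := by
        rw [Finset.mul_sum]
        refine Finset.sum_congr rfl fun k _ => ?_
        have : (X : (ZMod p)[X]) ^ N = X ^ (N - (k : ℕ)) * X ^ (k : ℕ) := by
          rw [← pow_add, Nat.sub_add_cancel k.2.le]
        rw [this, hr]
        ring
      rw [this, hLv, mul_zero]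
    have h2 := congrArg (fun P => coeff P (s + v.natDegree)) h1
    simp only [finsetSum_coeff, coeff_zero] at h2
    have h3 : R.eval (v.natDegree : ZMod p) * v.leadingCoeff = 0 := by
      rw [← h2, hR, eval_finsetSum, Finset.sum_mul]
      refine Finset.sum_congr rfl fun k _ => ?_
      rw [coeff_mul_add_eq_of_natDegree_le (hrs k), aux_euler, eval_mul, eval_C,
        descPochhammer_eval_eq_descFactorial, coeff_natDegree, mul_assoc]
      rw [natDegree_le_iff_coeff_eq_zero]
      intro e he
      rw [aux_euler, coeff_eq_zero_of_natDegree_lt he, mul_zero]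
    exact (mul_eq_zero.1 h3).resolve_right (leadingCoeff_ne_zero.2 hv)
  set S : Finset ℕ := (Finset.range p).filter fun d : ℕ => R.eval (d : ZMod p) = 0 with hS
  have hScard : S.card < N := by
    refine lt_of_le_of_lt ?_ hRdeg
    refine le_trans ?_ (card_roots' R)
    refine le_trans ?_ (Multiset.toFinset_card_le R.roots)
    refine Finset.card_le_card_of_injOn (fun d : ℕ => (d : ZMod p)) ?_ ?_
    · intro d hd
      have hd' : d ∈ S := hd
      simp only [hS, Finset.mem_filter] at hd'
      simp [hR0, hd'.2]
    · intro a ha b hb hab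
      have ha' : a ∈ S := ha
      have hb' : b ∈ S := hb
      simp only [hS, Finset.mem_filter, Finset.mem_range] at ha' hb'
      have := (ZMod.natCast_eq_natCast_iff' a b p).1 hab
      rwa [Nat.mod_eq_of_lt ha'.1, Nat.mod_eq_of_lt hb'.1] at this
  let T : (Fin N → ZMod p) →ₗ[ZMod p] (S → ZMod p) :=
    LinearMap.pi fun d => (lcoeff (ZMod p) (d : ℕ)).comp (Fintype.linearCombination (ZMod p) y)
  have hT : ¬ Function.Injective T := by
    intro hinj
    have := LinearMap.finrank_le_finrank_of_injective hinj
    simp at this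
    omega
  rw [← LinearMap.ker_eq_bot, Submodule.eq_bot_iff] at hT
  push Not at hT
  obtain ⟨a, ha, ha0⟩ := hT
  set v := Fintype.linearCombination (ZMod p) y a with hv
  have hvs : v = ∑ j, C (a j) * y j := by
    rw [hv, Fintype.linearCombination_apply]
    simp [smul_eq_C_mul]
  have hv0 : v ≠ 0 := by
    intro h
    rw [hv, Fintype.linearCombination_apply] at h
    exact ha0 (funext (Fintype.linearIndependent_iff.1 hy a h))
  have hvdeg : v.natDegree < p := by
    have hp := (Fact.out : p.Prime).pos
    have : v.natDegree ≤ p - 1 := by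
      rw [hvs]
      apply natDegree_sum_le_of_forall_le
      intro j _
      refine (natDegree_C_mul_le _ _).trans ?_
      have := hdeg j
      omega
    omega
  have hLv : ∑ k : Fin N, q k * derivative^[(k : ℕ)] v = 0 := by
    rw [hvs]
    simp_rw [iterate_derivative_sum, iterate_derivative_C_mul, Finset.mul_sum]
    rw [Finset.sum_comm]
    refine Finset.sum_eq_zero fun j _ => ?_
    rw [← mul_zero (C (a j)), ← hL j, Finset.mul_sum]
    exact Finset.sum_congr rfl fun k _ => by ring
  have hmem : v.natDegree ∈ S := by
    simp only [hS, Finset.mem_filter, Finset.mem_range]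
    exact ⟨hvdeg, key v hv0 hLv⟩
  have h4 := congrFun (LinearMap.mem_ker.1 ha) ⟨v.natDegree, hmem⟩
  have h5 : v.coeff v.natDegree = 0 := h4
  rw [coeff_natDegree, leadingCoeff_eq_zero] at h5
  exact hv0 h5

lemma aux_deriv {K : Type*} [Field K] (D E U g : K[X]) (M a : ℕ) (hD : D.natDegree ≤ M)
    (hE : E.natDegree ≤ M) (hDE : D * derivative U = E * U) (hg : g.natDegree ≤ a) (k : ℕ) :
    ∃ G : K[X], G.natDegree ≤ a + k * M ∧ D ^ k * derivative^[k] (U * g) = U * G := by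
  induction k with
  | zero => exact ⟨g, by simpa using hg, by simp⟩
  | succ k ih =>
    obtain ⟨G, hG, hGe⟩ := ih
    refine ⟨D * derivative G + (E - C (k : K) * derivative D) * G, ?_, ?_⟩
    · have h1 : (derivative G).natDegree ≤ a + k * M :=
        (natDegree_derivative_le G).trans (by omega)
      have h2 : (derivative D).natDegree ≤ M := (natDegree_derivative_le D).trans (by omega)
      have h3 : (E - C (k : K) * derivative D).natDegree ≤ M :=
        (natDegree_sub_le _ _).trans (max_le hE ((natDegree_C_mul_le _ _).trans h2))
      have : a + (k + 1) * M = M + (a + k * M) := by ring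
      rw [this]
      refine (natDegree_add_le _ _).trans (max_le ?_ ?_)
      · exact natDegree_mul_le.trans (add_le_add hD h1)
      · exact natDegree_mul_le.trans (add_le_add h3 hG)
    · rw [Function.iterate_succ_apply']
      set W := derivative^[k] (U * g)
      have h4 := congrArg derivative hGe
      rw [derivative_mul, derivative_mul, derivative_pow] at h4
      have h5 : D * (C (k : K) * D ^ (k - 1) * derivative D * W)
          = C (k : K) * derivative D * (D ^ k * W) := by
        rcases k with _ | k
        · simp
        · simp only [Nat.add_sub_cancel]; ring
      calc D ^ (k + 1) * derivative W
          = D * (C (k : K) * D ^ (k - 1) * derivative D * W + D ^ k * derivative W)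
            - D * (C (k : K) * D ^ (k - 1) * derivative D * W) := by ring
        _ = D * (derivative U * G + U * derivative G)
            - C (k : K) * derivative D * (U * G) := by rw [h4, h5, hGe]
        _ = (D * derivative U) * G + U * (D * derivative G)
            - C (k : K) * derivative D * (U * G) := by ring
        _ = _ := by rw [hDE]; ring

/-- Independence over polynomials of degree at most `a`. -/
def AuxIndep {K : Type*} [Field K] {ι : Type*} [Fintype ι] (a : ℕ) (U : ι → K[X]) : Prop :=
  ∀ g : ι → K[X], (∀ j, (g j).natDegree ≤ a) → ∑ j, U j * g j = 0 → ∀ j, g j = 0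

lemma aux_det_deg {K : Type*} [Field K] {s : ℕ} (G : Matrix (Fin s) (Fin s) K[X]) (a M : ℕ)
    (hG : ∀ k j, (G k j).natDegree ≤ a + (k : ℕ) * M) :
    2 * G.det.natDegree ≤ 2 * s * a + s * (s - 1) * M := by
  have h : G.det.natDegree ≤ ∑ k : Fin s, (a + (k : ℕ) * M) := by
    rw [Matrix.det_apply']
    apply natDegree_sum_le_of_forall_le
    intro σ _
    have h1 : (∏ i, G (σ i) i).natDegree ≤ ∑ k : Fin s, (a + (k : ℕ) * M) := by
      refine (natDegree_prod_le _ _).trans ?_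
      refine (Finset.sum_le_sum fun i _ => hG (σ i) i).trans ?_
      exact (Equiv.sum_comp σ (fun k : Fin s => a + (k : ℕ) * M)).le
    refine natDegree_mul_le.trans ?_
    simpa using h1
  have h2 : ∑ k : Fin s, (a + (k : ℕ) * M) = s * a + (∑ i ∈ Finset.range s, i) * M := by
    rw [Finset.sum_add_distrib, ← Finset.sum_mul, Finset.sum_range]
    simp
  have h3 := Finset.sum_range_id_mul_two s
  rw [h2] at h
  nlinarith

lemma aux_core (p : ℕ) [Fact p.Prime] {s : ℕ} (hs : 0 < s) (a M t : ℕ) (z : ZMod p)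
    (U E g : Fin s → (ZMod p)[X]) (D : (ZMod p)[X]) (hD0 : D ≠ 0)
    (hD : D.natDegree ≤ M) (hE : ∀ j, (E j).natDegree ≤ M)
    (hDE : ∀ j, D * derivative (U j) = E j * U j)
    (hUz : ∀ j, (U j).eval z ≠ 0) (hg : ∀ j, (g j).natDegree ≤ a)
    (hp : ∀ j, (U j).natDegree + a < p)
    (hind : LinearIndependent (ZMod p) fun j => U j * g j)
    (ht : 2 * s * a + s * (s - 1) * M + 2 * (s - 1) < 2 * t)
    (hdvd : (X - C z) ^ t ∣ ∑ j, U j * g j) : False := by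
  choose G hGdeg hGe using fun (k : Fin s) (j : Fin s) =>
    aux_deriv D (E j) (U j) (g j) M a hD (hE j) (hDE j) (hg j) k
  let Gm : Matrix (Fin s) (Fin s) (ZMod p)[X] := Matrix.of G
  have hw : ∀ k, (X - C z) ^ (t - (s - 1)) ∣ (Gm.mulVec U) k := by
    intro k
    have h1 : (Gm.mulVec U) k = D ^ (k : ℕ) * derivative^[(k : ℕ)] (∑ j, U j * g j) := by
      rw [iterate_derivative_sum, Finset.mul_sum]
      simp only [Matrix.mulVec, dotProduct]
      refine Finset.sum_congr rfl fun j _ => ?_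
      rw [hGe k j, mul_comm]
      rfl
    rw [h1]
    refine Dvd.dvd.mul_left ?_ _
    refine (pow_dvd_pow _ ?_).trans (pow_sub_dvd_iterate_derivative_of_pow_dvd (k : ℕ) hdvd)
    omega
  have hdet : Gm.det = 0 := by
    have h2 : Gm.adjugate.mulVec (Gm.mulVec U) = Gm.det • U := by
      rw [Matrix.mulVec_mulVec, Matrix.adjugate_mul, Matrix.smul_mulVec, Matrix.one_mulVec]
    have h3 : (X - C z) ^ (t - (s - 1)) ∣ Gm.det * U ⟨0, hs⟩ := by
      have h4 : Gm.det * U ⟨0, hs⟩ = (Gm.adjugate.mulVec (Gm.mulVec U)) ⟨0, hs⟩ := by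
        rw [h2]; rfl
      rw [h4]
      simp only [Matrix.mulVec, dotProduct] at hw ⊢
      exact Finset.dvd_sum fun k _ => (hw k).mul_left _
    have hcop : IsCoprime ((X - C z) ^ (t - (s - 1))) (U ⟨0, hs⟩) := by
      apply IsCoprime.pow_left
      rw [(irreducible_X_sub_C z).coprime_iff_not_dvd, dvd_iff_isRoot]
      exact hUz _
    have h5 := hcop.dvd_of_dvd_mul_right h3
    have h6 := aux_det_deg Gm a M hGdeg
    by_contra hne
    have h7 := natDegree_le_of_dvd h5 hne
    rw [natDegree_pow, natDegree_X_sub_C, mul_one] at h7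
    omega
  obtain ⟨q, hq0, hq⟩ := Matrix.exists_vecMul_eq_zero_iff.2 hdet
  refine aux_kernel p (fun j => U j * g j) hind (fun j => ?_) (fun k => q k * D ^ (k : ℕ)) ?_ ?_
  · refine lt_of_le_of_lt (natDegree_mul_le.trans (Nat.add_le_add_left (hg j) _)) (hp j)
  · intro h
    apply hq0
    funext k
    have := congrFun h k
    exact (mul_eq_zero.1 this).resolve_right (pow_ne_zero _ hD0)
  · intro j
    have h8 := congrFun hq j
    have h9 : ∑ k, q k * G k j = 0 := h8
    rw [← mul_zero (U j), ← h9, Finset.mul_sum]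
    refine Finset.sum_congr rfl fun k _ => ?_
    rw [mul_assoc, hGe k j]
    ring

lemma aux_sum_sub {ι R : Type*} [Fintype ι] [AddCommMonoid R] (P : ι → Prop)
    [Fintype {j // P j}] (F : ι → R) (hF : ∀ i, ¬ P i → F i = 0) :
    ∑ j : {j // P j}, F j.1 = ∑ j, F j := by
  classical
  rw [← Finset.sum_subtype (Finset.univ.filter P) (by simp) F]
  refine Finset.sum_filter_of_ne fun i _ hi => ?_
  by_contra h
  exact hi (hF i h)

lemma aux_step (p : ℕ) [Fact p.Prime] {ι : Type*} [Fintype ι] (a M t N : ℕ) (z : ZMod p)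
    (U E : ι → (ZMod p)[X]) (D : (ZMod p)[X]) (hD0 : D ≠ 0)
    (hD : D.natDegree ≤ M) (hE : ∀ j, (E j).natDegree ≤ M)
    (hDE : ∀ j, D * derivative (U j) = E j * U j)
    (hUz : ∀ j, (U j).eval z ≠ 0)
    (hp : ∀ j, (U j).natDegree + a < p)
    (hind : AuxIndep a U) (hN : Fintype.card ι ≤ N)
    (ht : 2 * N * (a + 1) + N * N * M < 2 * t)
    (g : ι → (ZMod p)[X]) (hg : ∀ j, (g j).natDegree ≤ a)
    (hdvd : (X - C z) ^ t ∣ ∑ j, U j * g j) : ∀ j, g j = 0 := by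
  classical
  by_contra hcon
  push Not at hcon
  obtain ⟨j₀, hj₀⟩ := hcon
  let S := {j : ι // g j ≠ 0}
  let e : Fin (Fintype.card S) ≃ S := (Fintype.equivFin S).symm
  have hs : 0 < Fintype.card S := Fintype.card_pos_iff.2 ⟨⟨j₀, hj₀⟩⟩
  have hsN : Fintype.card S ≤ N := (Fintype.card_subtype_le _).trans hN
  have hli : LinearIndependent (ZMod p) (fun j : S => U j.1 * g j.1) := by
    rw [Fintype.linearIndependent_iff]
    intro c hc j
    let c' : ι → ZMod p := fun i => if h : g i ≠ 0 then c ⟨i, h⟩ else 0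
    have hc' : ∀ i : S, c' i.1 = c i := fun i => dif_pos i.2
    have h1 := hind (fun i => C (c' i) * g i)
      (fun i => (natDegree_C_mul_le _ _).trans (hg i)) ?_ j.1
    · rw [← hc']
      exact C_eq_zero.1 ((mul_eq_zero.1 h1).resolve_right j.2)
    · have hcs : ∑ i : S, U i.1 * (C (c' i.1) * g i.1) = 0 := by
        refine Eq.trans ?_ hc
        refine Finset.sum_congr rfl fun i _ => ?_
        rw [hc' i, smul_eq_C_mul]
        ring
      rw [aux_sum_sub (fun i => g i ≠ 0) (fun i => U i * (C (c' i) * g i))] at hcs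
      · exact hcs
      · intro i hi
        simp [not_not.1 hi]
  have hli' := hli.comp e e.injective
  refine aux_core p hs a M t z (fun j => U (e j).1) (fun j => E (e j).1) (fun j => g (e j).1) D
    hD0 hD (fun j => hE _) (fun j => hDE _) (fun j => hUz _) (fun j => hg _) (fun j => hp _) hli'
    ?_ ?_
  · generalize Fintype.card S = s at hs hsN
    obtain ⟨s, rfl⟩ : ∃ r, s = r + 1 := ⟨s - 1, by omega⟩
    simp only [Nat.add_sub_cancel]
    have h1 : (s + 1) * s ≤ N * N := Nat.mul_le_mul hsN (by omega)
    have h2 := Nat.mul_le_mul_right M h1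
    have h3 : (s + 1) * (a + 1) ≤ N * (a + 1) := Nat.mul_le_mul_right _ hsN
    nlinarith
  · rw [Equiv.sum_comp e (fun j : S => U j.1 * g j.1)]
    rw [aux_sum_sub (fun i => g i ≠ 0) (fun j => U j * g j)]
    · exact hdvd
    · intro i hi
      simp [not_not.1 hi]


lemma aux_mul {K : Type*} [Field K] {ι : Type*} [Fintype ι] (a t : ℕ) (z : K) (f : K[X])
    (hf : f ≠ 0) (hfz : f.eval z = 0) (U : ι → K[X])
    (h : ∀ g : ι → K[X], (∀ j, (g j).natDegree ≤ a) → (X - C z) ^ t ∣ ∑ j, U j * g j →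
      ∀ j, g j = 0) (B : ℕ) :
    AuxIndep a (fun b : Fin B × ι => f ^ ((b.1 : ℕ) * t) * U b.2) := by
  induction B with
  | zero => intro g _ _ j; exact j.1.elim0
  | succ B ih =>
    intro g hg hsum
    rw [Fintype.sum_prod_type, Fin.sum_univ_succ] at hsum
    simp only [Fin.val_zero, zero_mul, pow_zero, one_mul, Fin.val_succ] at hsum
    have hfac : ∑ i : Fin B, ∑ j : ι, f ^ (((i : ℕ) + 1) * t) * U j * g (i.succ, j)
        = f ^ t * ∑ b : Fin B × ι, f ^ ((b.1 : ℕ) * t) * U b.2 * g (b.1.succ, b.2) := by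
      rw [Fintype.sum_prod_type, Finset.mul_sum]
      refine Finset.sum_congr rfl fun i _ => ?_
      rw [Finset.mul_sum]
      refine Finset.sum_congr rfl fun j _ => ?_
      rw [add_mul, one_mul, pow_add]
      ring
    rw [hfac] at hsum
    have h0 : ∀ j, g (0, j) = 0 := by
      refine h (fun j => g (0, j)) (fun j => hg _) ?_
      rw [eq_neg_of_add_eq_zero_left hsum, dvd_neg]
      exact (pow_dvd_pow_of_dvd (dvd_iff_isRoot.2 hfz) t).mul_right _
    simp only [h0, mul_zero, Finset.sum_const_zero, zero_add] at hsum
    have h1 := ih (fun b => g (b.1.succ, b.2)) (fun b => hg _)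
      ((mul_eq_zero.1 hsum).resolve_left (pow_ne_zero _ hf))
    rintro ⟨i, j⟩
    refine Fin.cases (h0 j) (fun i => h1 (i, j)) i

lemma aux_logderiv {K : Type*} [Field K] {n : ℕ} (f : Fin n → K[X]) (e : Fin n → ℕ) :
    ∃ E : K[X], E.natDegree ≤ ∑ i, (f i).natDegree ∧
      (∏ i, f i) * derivative (∏ i, f i ^ e i) = E * ∏ i, f i ^ e i := by
  induction n with
  | zero => exact ⟨0, by simp, by simp⟩
  | succ n ih =>
    obtain ⟨E, hE, hEe⟩ := ih (fun i => f i.castSucc) (fun i => e i.castSucc)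
    simp only [Fin.prod_univ_castSucc, Fin.sum_univ_castSucc]
    set D := ∏ i : Fin n, f i.castSucc with hD
    set U := ∏ i : Fin n, f i.castSucc ^ e i.castSucc
    set h := f (Fin.last n)
    set k := e (Fin.last n)
    have hk : h * derivative (h ^ k) = C (k : K) * derivative h * h ^ k := by
      rw [derivative_pow]
      rcases k with _ | k
      · simp
      · simp only [Nat.add_sub_cancel]; ring
    refine ⟨E * h + C (k : K) * (D * derivative h), ?_, ?_⟩
    · refine (natDegree_add_le _ _).trans (max_le ?_ ?_)
      · exact natDegree_mul_le.trans (Nat.add_le_add_right hE _)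
      · refine (natDegree_C_mul_le _ _).trans (natDegree_mul_le.trans (add_le_add ?_ ?_))
        · exact natDegree_prod_le _ _
        · exact (natDegree_derivative_le _).trans (Nat.sub_le _ _)
    · rw [derivative_mul]
      calc D * h * (derivative U * h ^ k + U * derivative (h ^ k))
          = (D * derivative U) * h * h ^ k + D * U * (h * derivative (h ^ k)) := by ring
        _ = _ := by rw [hEe, hk]; ring

lemma aux_filter_last {R : Type*} [AddCommMonoid R] {n : ℕ} (F : Fin (n + 1) → R) :
    ∑ i ∈ Finset.univ.filter (fun i : Fin (n + 1) => (i : ℕ) < n + 1 - 1), F i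
      = ∑ i : Fin n, F i.castSucc := by
  rw [Finset.sum_filter, Fin.sum_univ_castSucc]
  simp

lemma aux_filter_last_prod {R : Type*} [CommMonoid R] {n : ℕ} (F : Fin (n + 1) → R) :
    ∏ i ∈ Finset.univ.filter (fun i : Fin (n + 1) => (i : ℕ) < n + 1 - 1), F i
      = ∏ i : Fin n, F i.castSucc := by
  rw [Finset.prod_filter, Fin.prod_univ_castSucc]
  simp

lemma aux_final (p : ℕ) [Fact p.Prime] (a t N M : ℕ)
    (ht : 2 * N * (a + 1) + N * N * M < 2 * t) (n : ℕ) :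
    ∀ (f : Fin n → (ZMod p)[X]) (x : Fin n → ZMod p) (_ : ∀ i, (f i).eval (x i) = 0)
      (_ : ∀ i j, j ≠ i → (f j).eval (x i) ≠ 0) (_ : ∀ i, f i ≠ 0)
      (B : Fin n → ℕ) (_ : ∀ i, 0 < B i)
      (_ : ∏ i ∈ Finset.univ.filter (fun i : Fin n => (i : ℕ) < n - 1), B i ≤ N)
      (_ : ∑ i ∈ Finset.univ.filter (fun i : Fin n => (i : ℕ) < n - 1), (f i).natDegree ≤ M)
      (_ : ∑ i ∈ Finset.univ.filter (fun i : Fin n => (i : ℕ) < n - 1),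
        (B i - 1) * t * (f i).natDegree + a < p),
      AuxIndep a (fun b : ∀ i, Fin (B i) => ∏ i, f i ^ ((b i : ℕ) * t)) := by
  induction n with
  | zero =>
    intro f x _ _ _ B _ _ _ _ g _ hsum j
    simpa [Subsingleton.elim j default] using hsum
  | succ n ih =>
    intro f x hx hxj hf B hB hN hM hp
    rw [aux_filter_last_prod] at hN
    rw [aux_filter_last] at hM hp
    have hind := ih (fun i => f i.castSucc) (fun i => x i.castSucc) (fun i => hx _)
      (fun i j hij => hxj _ _ (fun h => hij (Fin.castSucc_injective _ h))) (fun i => hf _)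
      (fun i => B i.castSucc) (fun i => hB _)
      ((Finset.prod_le_prod_of_subset_of_one_le' (Finset.filter_subset _ _)
        (fun i _ _ => hB _)).trans hN)
      ((Finset.sum_le_sum_of_subset (Finset.filter_subset _ _)).trans hM)
      (lt_of_le_of_lt (Nat.add_le_add_right
        (Finset.sum_le_sum_of_subset (Finset.filter_subset _ _)) _) hp)
    choose E hE hEe using fun b : (∀ i : Fin n, Fin (B i.castSucc)) =>
      aux_logderiv (fun i => f i.castSucc) (fun i => (b i : ℕ) * t)
    have hstep := aux_step p a M t N (x (Fin.last n)) _ E (∏ i : Fin n, f i.castSucc)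
      (Finset.prod_ne_zero_iff.2 fun i _ => hf _)
      ((natDegree_prod_le _ _).trans hM) (fun b => (hE b).trans hM) hEe
      (fun b => by
        rw [eval_prod]
        refine Finset.prod_ne_zero_iff.2 fun i _ => ?_
        rw [eval_pow]
        exact pow_ne_zero _ (hxj _ _ (Fin.castSucc_lt_last i).ne))
      (fun b => by
        refine lt_of_le_of_lt (Nat.add_le_add_right ?_ _) hp
        refine (natDegree_prod_le _ _).trans (Finset.sum_le_sum fun i _ => ?_)
        refine natDegree_pow_le.trans ?_
        gcongr
        have := (b i).2
        omega)
      hind (by simpa using hN) ht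
    have hm := aux_mul a t (x (Fin.last n)) (f (Fin.last n)) (hf _) (hx _) _ hstep
      (B (Fin.last n))
    intro g hg hsum b
    let e := Fin.snocEquiv (fun i => Fin (B i))
    have h1 := hm (fun c => g (e c)) (fun c => hg _) ?_ (e.symm b)
    · simpa using h1
    · rw [← hsum, ← Equiv.sum_comp e]
      refine Finset.sum_congr rfl fun c _ => ?_
      congr 1
      beta_reduce
      rw [Fin.prod_univ_castSucc, mul_comm]
      simp [e, Fin.snocEquiv]

/-- Linear independence of the products `x^a * f_1^{b_1 t} ⋯ f_n^{b_n t}`,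
`a < A`, `b_i < B_i`, under the degree condition
`A - 1 + (∑_{i<n-1} B_i m_i − ∑_{i<n-1} m_i) t < p` and the condition
`t > A B_1 ⋯ B_{n-1} + (m_1 + ⋯ + m_n) (B_1 ⋯ B_{n-1})² / 2`. -/
theorem products_linearIndependent (p n : ℕ) [Fact p.Prime]
    (f : Fin n → Polynomial (ZMod p)) (m : Fin n → ℕ)
    (hdeg : ∀ i, (f i).natDegree = m i) (hadm : AdmissibleSet f)
    (t A : ℕ) (B : Fin n → ℕ) (ht : 0 < t) (hA : 0 < A) (hB : ∀ i, 0 < B i)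
    (h1 : (A : ℤ) - 1 +
        ((∑ i ∈ Finset.univ.filter (fun i : Fin n => (i : ℕ) < n - 1), (B i : ℤ) * (m i : ℤ)) -
          ∑ i ∈ Finset.univ.filter (fun i : Fin n => (i : ℕ) < n - 1), (m i : ℤ)) * (t : ℤ) < p)
    (h2 : (t : ℝ) >
        (A : ℝ) * (∏ i ∈ Finset.univ.filter (fun i : Fin n => (i : ℕ) < n - 1), (B i : ℝ)) +
          (∑ i, (m i : ℝ)) *
            (∏ i ∈ Finset.univ.filter (fun i : Fin n => (i : ℕ) < n - 1), (B i : ℝ)) ^ 2 / 2) :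
    LinearIndependent (ZMod p)
      (fun ab : Fin A × (∀ i : Fin n, Fin (B i)) =>
        (X : Polynomial (ZMod p)) ^ (ab.1 : ℕ) * ∏ i, (f i) ^ ((ab.2 i : ℕ) * t)) := by
  classical
  obtain ⟨x, hx, hxj, hf0⟩ := hadm
  obtain ⟨a, rfl⟩ : ∃ a, A = a + 1 := ⟨A - 1, by omega⟩
  obtain rfl : (fun i => (f i).natDegree) = m := funext hdeg
  set F := Finset.univ.filter (fun i : Fin n => (i : ℕ) < n - 1) with hF
  have hfin := aux_final p a t (∏ i ∈ F, B i) (∑ i, (f i).natDegree) ?_ n f x hx hxj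
    (fun i h => hf0 i (by rw [h, eval_zero])) B hB le_rfl
    (Finset.sum_le_sum_of_subset (Finset.filter_subset _ _)) ?_
  · rw [Fintype.linearIndependent_iff]
    intro c hc
    let g : (∀ i : Fin n, Fin (B i)) → (ZMod p)[X] :=
      fun b => ∑ k : Fin (a + 1), C (c (k, b)) * X ^ (k : ℕ)
    have hg := hfin g ?_ ?_
    · rintro ⟨k, b⟩
      have h3 := congrArg (fun P => coeff P (k : ℕ)) (hg b)
      simpa [g, finsetSum_coeff, coeff_C_mul, coeff_X_pow, Fin.val_inj] using h3
    · intro b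
      apply natDegree_sum_le_of_forall_le
      intro k _
      refine (natDegree_C_mul_X_pow_le _ _).trans ?_
      omega
    · rw [← hc, Fintype.sum_prod_type, Finset.sum_comm]
      refine Finset.sum_congr rfl fun b _ => ?_
      rw [Finset.mul_sum]
      refine Finset.sum_congr rfl fun k _ => ?_
      rw [smul_eq_C_mul]
      ring
  · have h4 : ((2 * (∏ i ∈ F, B i) * (a + 1)
        + (∏ i ∈ F, B i) * (∏ i ∈ F, B i) * ∑ i, (f i).natDegree : ℕ) : ℝ) < ((2 * t : ℕ) : ℝ) := by
      push_cast at h2 ⊢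
      nlinarith
    exact_mod_cast h4
  · have h5 : ((∑ i ∈ F, (B i - 1) * t * (f i).natDegree + a : ℕ) : ℤ) < (p : ℤ) := by
      refine lt_of_eq_of_lt ?_ h1
      push_cast
      rw [← Finset.sum_sub_distrib, Finset.sum_mul, add_comm]
      congr 1
      · ring
      · refine Finset.sum_congr rfl fun i _ => ?_
        rw [Nat.cast_sub (hB i)]
        push_cast
        ring
    exact_mod_cast h5
end

section
/- Let p be a prime, Γ a subgroup of F_p^*, n ≥ 2, and let μ_1, …, μ_{n−1} ∈ F_p^* be pairwise distinct nonzero elements of F_p. If 2^{2n} < |Γ| < (n+1)^{-2n/(2n+1)} · p^{1 − 1/(2n+1)}, then |Γ ∩ (Γ + μ_1) ∩ … ∩ (Γ + μ_{n−1})| ≤ 4n(n+1) · |Γ|^{1/2 + 1/(2n)}. -/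
open Polynomial

lemma indicial_ne_zero {F : Type} [Field F] {k : ℕ} (a : Fin k → F) (ha : a ≠ 0) :
    (∑ r : Fin k, C (a r) * descPochhammer F r) ≠ 0 := by
  intro h
  let S : Polynomial.Sequence F := ⟨fun r => descPochhammer F r, fun r => by
    rw [degree_eq_natDegree (monic_descPochhammer F r).ne_zero, descPochhammer_natDegree]⟩
  have h1 := S.linearIndependent.comp (fun i : Fin k => (i : ℕ)) Fin.val_injective
  rw [Fintype.linearIndependent_iff] at h1
  apply ha
  funext i
  refine h1 a ?_ i
  rw [← h]
  refine Finset.sum_congr rfl fun r _ => ?_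
  rw [← smul_eq_C_mul]
  rfl

lemma wron_aux {p : ℕ} [Fact p.Prime] {k : ℕ} (f : Fin k → (ZMod p)[X])
    (hf : ∀ j, (f j).natDegree < p)
    (hli : ∀ a : Fin k → ZMod p, ∑ j, C (a j) * f j = 0 → a = 0)
    (h : ℕ) (c : Fin k → (ZMod p)[X]) (hc : ∀ r : Fin k, (c r).natDegree ≤ h + r)
    (hne : (fun r : Fin k => (c r).coeff (h + r)) ≠ 0)
    (hz : ∀ j, ∑ r : Fin k, c r * derivative^[r] (f j) = 0) : False := by
  classical
  set I : (ZMod p)[X] := ∑ r : Fin k, C ((c r).coeff (h + r)) * descPochhammer (ZMod p) r with hI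
  have hI0 : I ≠ 0 := indicial_ne_zero _ hne
  -- every nonzero combination has degree a root
  have key : ∀ g : (ZMod p)[X], g ≠ 0 → (∑ r : Fin k, c r * derivative^[r] g = 0) →
      I.IsRoot (g.natDegree : ZMod p) := by
    intro g hg h0
    have h1 : (∑ r : Fin k, c r * derivative^[r] g).coeff (h + g.natDegree) = 0 := by simp [h0]
    rw [finsetSum_coeff] at h1
    have h2 : ∀ r : Fin k, (c r * derivative^[r] g).coeff (h + g.natDegree) =
        (c r).coeff (h + r) * (g.natDegree.descFactorial r : ZMod p) * g.leadingCoeff := by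
      intro r
      by_cases hr : (r : ℕ) ≤ g.natDegree
      · have e : h + g.natDegree = (h + r) + (g.natDegree - r) := by omega
        rw [e, coeff_mul_add_eq_of_natDegree_le (hc r) (natDegree_iterate_derivative g r),
          coeff_iterate_derivative, Nat.sub_add_cancel hr, nsmul_eq_mul, leadingCoeff, mul_assoc]
      · push Not at hr
        rw [iterate_derivative_eq_zero hr, Nat.descFactorial_of_lt hr]
        simp
    simp_rw [h2] at h1
    rw [← Finset.sum_mul] at h1
    have h3 := (mul_eq_zero.mp h1).resolve_right (leadingCoeff_ne_zero.mpr hg)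
    rw [IsRoot, hI, eval_finsetSum, ← h3]
    refine Finset.sum_congr rfl fun r _ => ?_
    rw [eval_mul, eval_C, descPochhammer_eval_eq_descFactorial]
  have hk : 0 < k := by
    rcases Nat.eq_zero_or_pos k with rfl | h'
    · exact absurd (Subsingleton.elim _ _) hne
    · exact h'
  have hId : I.natDegree < k := by
    have : I.natDegree ≤ k - 1 := by
      refine natDegree_sum_le_of_forall_le _ _ fun r _ => ?_
      refine (natDegree_C_mul_le _ _).trans ?_
      rw [descPochhammer_natDegree]; omega
    omega
  let S : Finset ℕ := (Finset.range p).filter fun e => I.IsRoot (e : ZMod p)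
  have hS : S.card < k := by
    refine lt_of_le_of_lt ?_ hId
    refine le_trans ?_ (card_roots' I)
    refine le_trans ?_ (Multiset.toFinset_card_le _)
    refine Finset.card_le_card_of_injOn (fun e : ℕ => (e : ZMod p)) ?_ ?_
    · intro e he
      simp only [S, Finset.coe_filter, Set.mem_ofPred_eq] at he
      have h6 : eval (e : ZMod p) I = 0 := he.2
      simp [hI0, h6]
    · intro e he e' he' hee
      simp only [S, Finset.coe_filter, Set.mem_ofPred_eq, Finset.mem_range] at he he'
      have := (ZMod.natCast_eq_natCast_iff' e e' p).mp hee
      rwa [Nat.mod_eq_of_lt he.1, Nat.mod_eq_of_lt he'.1] at this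
  let L : (Fin k → ZMod p) →ₗ[ZMod p] (S → ZMod p) :=
    LinearMap.pi fun s => ∑ j : Fin k, ((f j).coeff s) • LinearMap.proj j
  have hL : LinearMap.ker L ≠ ⊥ := LinearMap.ker_ne_bot_of_finrank_lt (by simpa using hS)
  obtain ⟨a, haL, ha0⟩ := (Submodule.ne_bot_iff _).mp hL
  set g := ∑ j, C (a j) * f j with hg
  have hg0 : g ≠ 0 := fun h' => ha0 (hli a h')
  have hgp : g.natDegree < p := by
    have : g.natDegree ≤ p - 1 := by
      refine natDegree_sum_le_of_forall_le _ _ fun r _ => ?_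
      refine (natDegree_C_mul_le _ _).trans ?_
      have := hf r; omega
    have := (Fact.out : p.Prime).pos
    omega
  have hgz : ∑ r : Fin k, c r * derivative^[r] g = 0 := by
    have e : ∀ r : Fin k, derivative^[r] g = ∑ j, C (a j) * derivative^[r] (f j) := by
      intro r
      rw [hg, iterate_derivative_sum]
      simp [iterate_derivative_C_mul]
    simp_rw [e, Finset.mul_sum]
    rw [Finset.sum_comm]
    refine Finset.sum_eq_zero fun j _ => ?_
    rw [← mul_zero (C (a j)), ← hz j, Finset.mul_sum]
    refine Finset.sum_congr rfl fun r _ => by ring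
  have hmem : g.natDegree ∈ S := by
    simp only [S, Finset.mem_filter, Finset.mem_range]
    exact ⟨hgp, key g hg0 hgz⟩
  have h5 : L a ⟨_, hmem⟩ = 0 := by rw [LinearMap.mem_ker.mp haL]; rfl
  apply leadingCoeff_ne_zero.mpr hg0
  have h7 : ∀ s, g.coeff s = ∑ j, (f j).coeff s * a j := by
    intro s
    rw [hg, finsetSum_coeff]
    refine Finset.sum_congr rfl fun j _ => ?_
    rw [coeff_C_mul, mul_comm]
  rw [leadingCoeff, ← h5, h7]
  simp [L]

lemma wron {p : ℕ} [Fact p.Prime] {k : ℕ} (f : Fin k → (ZMod p)[X])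
    (hf : ∀ j, (f j).natDegree < p)
    (hli : ∀ a : Fin k → ZMod p, ∑ j, C (a j) * f j = 0 → a = 0)
    (c : Fin k → (ZMod p)[X]) (hne : c ≠ 0)
    (hz : ∀ j, ∑ r : Fin k, c r * derivative^[r] (f j) = 0) : False := by
  classical
  obtain ⟨r1, hr1⟩ := Function.ne_iff.mp hne
  obtain ⟨r0, hr0, hmax⟩ := (Finset.univ.filter fun r => c r ≠ 0).exists_max_image
    (fun r : Fin k => (c r).natDegree + (k - r)) ⟨r1, by simpa using hr1⟩
  simp only [Finset.mem_filter, Finset.mem_univ, true_and] at hr0 hmax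
  refine wron_aux f hf hli ((c r0).natDegree + (k - r0)) (fun r => X ^ k * c r) ?_ ?_ ?_
  · intro r
    by_cases hr : c r = 0
    · simp [hr]
    · have := hmax r hr
      have h2 : (X ^ k * c r).natDegree ≤ k + (c r).natDegree := by
        refine natDegree_mul_le.trans ?_
        simp
      omega
  · intro h0
    have := congrFun h0 r0
    simp only [Pi.zero_apply] at this
    have e : (c r0).natDegree + (k - r0) + r0 = (c r0).natDegree + k := by omega
    rw [e, mul_comm, coeff_mul_X_pow] at this
    exact leadingCoeff_ne_zero.mpr hr0 this
  · intro j
    rw [← mul_zero (X ^ k), ← hz j, Finset.mul_sum]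
    refine Finset.sum_congr rfl fun r _ => by ring

/-- One step of the recursion for the cofactor of iterated derivatives. -/
noncomputable def stepOp {F : Type} [Field F] (R E : F[X]) (r : ℕ) : F[X] →ₗ[F] F[X] :=
  LinearMap.mulLeft F R ∘ₗ derivative + LinearMap.mulLeft F (E - (r : F[X]) * derivative R)

/-- Iterated cofactor operator. -/
noncomputable def itOp {F : Type} [Field F] (R E : F[X]) : ℕ → (F[X] →ₗ[F] F[X])
  | 0 => LinearMap.id
  | r + 1 => stepOp R E r ∘ₗ itOp R E r

lemma itOp_succ {F : Type} [Field F] (R E P : F[X]) (r : ℕ) :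
    itOp R E (r + 1) P = R * derivative (itOp R E r P) +
      (E - (r : F[X]) * derivative R) * itOp R E r P := by
  simp [itOp, stepOp]

lemma itOp_spec {F : Type} [Field F] (R E G P : F[X]) (hG : R * derivative G = E * G) (r : ℕ) :
    R ^ r * derivative^[r] (P * G) = itOp R E r P * G := by
  induction r with
  | zero => simp [itOp]
  | succ r ih =>
    have h1 := congrArg derivative ih
    rw [derivative_mul, derivative_mul, derivative_pow] at h1
    have h2 : R * (R ^ (r - 1) * (r : F[X])) = R ^ r * r := by
      cases r with
      | zero => simp
      | succ r => rw [Nat.add_sub_cancel]; ring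
    rw [itOp_succ, Function.iterate_succ_apply']
    have h3 := congrArg (fun z => R * z) h1
    simp only [mul_add, C_eq_natCast] at h3
    linear_combination h3 + (itOp R E r P) * hG - derivative R * r * ih
      - derivative R * derivative^[r] (P * G) * h2

lemma itOp_natDegree {F : Type} [Field F] (R E P : F[X]) (d : ℕ) (hR : R.natDegree ≤ d)
    (hE : E.natDegree ≤ d) (r : ℕ) : (itOp R E r P).natDegree ≤ P.natDegree + r * d := by
  induction r with
  | zero => simp [itOp]
  | succ r ih =>
    rw [itOp_succ]
    have hd := natDegree_derivative_le (itOp R E r P)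
    have hR' := natDegree_derivative_le R
    have e : P.natDegree + (r + 1) * d = d + (P.natDegree + r * d) := by ring
    refine (natDegree_add_le _ _).trans (max_le ?_ ?_)
    · refine natDegree_mul_le.trans ?_
      omega
    · refine natDegree_mul_le.trans ?_
      have h1 : (E - (r : F[X]) * derivative R).natDegree ≤ d := by
        refine (natDegree_sub_le _ _).trans (max_le hE ?_)
        refine natDegree_mul_le.trans ?_
        rw [natDegree_natCast]; omega
      omega

/-- The product of powers of shifted linear factors. -/
noncomputable def gp {F ι : Type} [Field F] (ν : ι → F) (s : Finset ι) (e : ι → ℕ) : F[X] :=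
  ∏ i ∈ s, (X - C (ν i)) ^ e i

/-- The product of linear factors. -/
noncomputable def rp {F ι : Type} [Field F] (ν : ι → F) (s : Finset ι) : F[X] :=
  ∏ i ∈ s, (X - C (ν i))

lemma rp_natDegree {F ι : Type} [Field F] (ν : ι → F) (s : Finset ι) :
    (rp ν s).natDegree = s.card := by
  simp [rp, natDegree_prod_of_monic _ _ (fun i _ => monic_X_sub_C (ν i))]

lemma rp_ne_zero {F ι : Type} [Field F] (ν : ι → F) (s : Finset ι) : rp ν s ≠ 0 :=
  (monic_prod_of_monic _ _ (fun i _ => monic_X_sub_C (ν i))).ne_zero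

lemma gp_natDegree {F ι : Type} [Field F] (ν : ι → F) (s : Finset ι) (e : ι → ℕ) :
    (gp ν s e).natDegree = ∑ i ∈ s, e i := by
  simp [gp, natDegree_prod_of_monic _ _ (fun i _ => (monic_X_sub_C (ν i)).pow (e i))]

lemma gp_ne_zero {F ι : Type} [Field F] (ν : ι → F) (s : Finset ι) (e : ι → ℕ) : gp ν s e ≠ 0 :=
  (monic_prod_of_monic _ _ (fun i _ => (monic_X_sub_C (ν i)).pow (e i))).ne_zero

lemma exists_E {F ι : Type} [Field F] [DecidableEq ι] (ν : ι → F) (s : Finset ι) (e : ι → ℕ) :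
    ∃ E : F[X], E.natDegree ≤ s.card ∧ rp ν s * derivative (gp ν s e) = E * gp ν s e := by
  induction s using Finset.induction_on with
  | empty => exact ⟨0, by simp, by simp [gp, rp]⟩
  | insert i s hi ih =>
    obtain ⟨E, hE, h⟩ := ih
    refine ⟨(e i : F[X]) * rp ν s + (X - C (ν i)) * E, ?_, ?_⟩
    · rw [Finset.card_insert_of_notMem hi]
      refine (natDegree_add_le _ _).trans (max_le ?_ ?_)
      · refine natDegree_mul_le.trans ?_
        rw [natDegree_natCast, rp_natDegree]; omega
      · refine natDegree_mul_le.trans ?_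
        rw [natDegree_X_sub_C]; omega
    · have e1 : gp ν (insert i s) e = (X - C (ν i)) ^ e i * gp ν s e := by
        simp [gp, Finset.prod_insert hi]
      have e2 : rp ν (insert i s) = (X - C (ν i)) * rp ν s := by
        simp [rp, Finset.prod_insert hi]
      have h2 : (X - C (ν i)) * ((X - C (ν i)) ^ (e i - 1) * (e i : F[X])) =
          (X - C (ν i)) ^ (e i) * (e i : F[X]) := by
        cases e i with
        | zero => simp
        | succ r => rw [Nat.add_sub_cancel]; ring
      rw [e1, e2, derivative_mul, derivative_pow]
      simp only [derivative_sub, derivative_X, derivative_C, C_eq_natCast]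
      linear_combination (X - C (ν i)) * (X - C (ν i)) ^ e i * h + rp ν s * gp ν s e * h2

lemma det_natDegree {F : Type} [Field F] {k : ℕ} (N : Matrix (Fin k) (Fin k) F[X]) (d : ℕ)
    (h : ∀ i j, (N i j).natDegree ≤ d) : N.det.natDegree ≤ k * d := by
  rw [Matrix.det_apply]
  refine natDegree_sum_le_of_forall_le _ _ fun σ _ => ?_
  refine (natDegree_smul_le _ _).trans ?_
  refine (natDegree_prod_le _ _).trans ?_
  refine (Finset.sum_le_sum fun i _ => h _ _).trans ?_
  simp

/-- Independence statement over a finite set of shifts. -/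
def Indep {p : ℕ} [Fact p.Prime] {ι : Type} (ν : ι → ZMod p) (t A m : ℕ) (s : Finset ι) : Prop :=
  ∀ k ≤ m, ∀ (e : Fin k → ι → ℕ) (P : Fin k → (ZMod p)[X]),
    (∀ j j', (∀ i ∈ s, e j i = e j' i) → j = j') →
    (∀ j, (P j).natDegree ≤ A) →
    (∀ j, (P j * gp ν s (fun i => t * e j i)).natDegree < p) →
    ∑ j, P j * gp ν s (fun i => t * e j i) = 0 → ∀ j, P j = 0

lemma order_lemma {p : ℕ} [Fact p.Prime] {ι : Type} [DecidableEq ι] (ν : ι → ZMod p)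
    (t A m : ℕ) (s : Finset ι) (hI : Indep ν t A m s) (x : ZMod p) (hx : ∀ i ∈ s, x ≠ ν i)
    (ht : m + m * (A + m * s.card) < t) (k : ℕ) (hk : k ≤ m) (hk0 : 0 < k)
    (e : Fin k → ι → ℕ) (P : Fin k → (ZMod p)[X])
    (he : ∀ j j', (∀ i ∈ s, e j i = e j' i) → j = j')
    (hA : ∀ j, (P j).natDegree ≤ A)
    (hp : ∀ j, (P j * gp ν s (fun i => t * e j i)).natDegree < p)
    (hP : ∀ j, P j ≠ 0)
    (hdvd : (X - C x) ^ t ∣ ∑ j, P j * gp ν s (fun i => t * e j i)) : False := by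
  classical
  choose E hEd hE using fun j => exists_E ν s (fun i => t * e j i)
  set g : Fin k → (ZMod p)[X] := fun j => gp ν s (fun i => t * e j i) with hg
  set R := rp ν s with hR
  let N : Matrix (Fin k) (Fin k) (ZMod p)[X] := fun r j => itOp R (E j) r (P j)
  have hN : ∀ (r : Fin k) (j : Fin k), R ^ (r : ℕ) * derivative^[r] (P j * g j) = N r j * g j := fun r j =>
    itOp_spec R (E j) (g j) (P j) (hE j) r
  have hg0 : ∀ j, g j ≠ 0 := fun j => gp_ne_zero _ _ _
  -- nonvanishing of the determinant
  have hdet : N.det ≠ 0 := by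
    intro h0
    obtain ⟨v, hv0, hv⟩ := Matrix.exists_vecMul_eq_zero_iff.mpr h0
    refine wron (fun j => P j * g j) hp ?_ (fun r => v r * R ^ (r : ℕ)) ?_ ?_
    · intro a ha
      funext j
      have := hI k hk e (fun j => C (a j) * P j) he
        (fun j => (natDegree_C_mul_le _ _).trans (hA j))
        (fun j => by rw [mul_assoc]; exact (natDegree_C_mul_le _ _).trans_lt (hp j))
        (by rw [← ha]; exact Finset.sum_congr rfl fun j _ => by rw [mul_assoc]) j
      simpa [hP j] using this
    · intro h
      apply hv0
      funext r
      have := congrFun h r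
      simpa [rp_ne_zero, hR] using this
    · intro j
      have := congrFun hv j
      simp only [Matrix.vecMul, dotProduct, Pi.zero_apply] at this
      rw [← zero_mul (g j), ← this, Finset.sum_mul]
      refine Finset.sum_congr rfl fun r _ => ?_
      rw [mul_assoc, hN, mul_assoc]
  have hdeg : N.det.natDegree ≤ k * (A + k * s.card) := by
    refine det_natDegree N _ fun r j => ?_
    refine (itOp_natDegree R (E j) (P j) s.card (rp_natDegree ν s).le (hEd j) r).trans ?_
    refine add_le_add (hA j) (Nat.mul_le_mul_right _ r.2.le)
  -- divisibility
  have hdiv : ∀ r, (X - C x) ^ (t - k) ∣ N.mulVec g r := by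
    intro r
    have h1 := pow_sub_dvd_iterate_derivative_of_pow_dvd (r : ℕ) hdvd
    have h2 : N.mulVec g r = R ^ (r : ℕ) * derivative^[r] (∑ j, P j * g j) := by
      rw [iterate_derivative_sum, Finset.mul_sum]
      simp only [Matrix.mulVec, dotProduct]
      exact Finset.sum_congr rfl fun j _ => (hN r j).symm
    rw [h2]
    refine Dvd.dvd.mul_left ((pow_dvd_pow _ ?_).trans h1) _
    have := r.2
    omega
  have hdiv2 : ∀ j, (X - C x) ^ (t - k) ∣ N.det * g j := by
    intro j
    have h1 : N.adjugate.mulVec (N.mulVec g) j = N.det * g j := by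
      rw [Matrix.mulVec_mulVec, Matrix.adjugate_mul, Matrix.smul_mulVec, Matrix.one_mulVec]
      rfl
    rw [← h1]
    simp only [Matrix.mulVec, dotProduct]
    exact Finset.dvd_sum fun r _ => Dvd.dvd.mul_left (hdiv r) _
  have hcop : IsCoprime ((X - C x) ^ (t - k)) (g ⟨0, hk0⟩) := by
    refine IsCoprime.pow_left ?_
    refine IsCoprime.prod_right fun i hi => IsCoprime.pow_right ?_
    exact isCoprime_X_sub_C_of_isUnit_sub (sub_ne_zero.mpr (hx i hi)).isUnit
  have h3 := natDegree_le_of_dvd (hcop.dvd_of_dvd_mul_right (hdiv2 ⟨0, hk0⟩)) hdet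
  rw [natDegree_pow, natDegree_X_sub_C, mul_one] at h3
  have h4 : k * (A + k * s.card) ≤ m * (A + m * s.card) := by gcongr
  omega

lemma indep_all {p : ℕ} [Fact p.Prime] {ι : Type} [DecidableEq ι] (ν : ι → ZMod p)
    (hν : Function.Injective ν) (t A m n : ℕ) (ht : m + m * (A + m * n) < t)
    (s : Finset ι) (hs : s.card ≤ n) : Indep ν t A m s := by
  classical
  induction s using Finset.induction_on with
  | empty =>
    intro k _ e P he _ _ h0 j
    have hsub : Subsingleton (Fin k) := ⟨fun a b => he a b (by simp)⟩
    rw [Fintype.sum_subsingleton _ j] at h0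
    simpa [gp] using h0
  | insert i0 s hi0 ih =>
    rw [Finset.card_insert_of_notMem hi0] at hs
    have ih := ih (by omega)
    intro k hk e P he hA hp h0
    by_contra! hne
    have e1 : ∀ j, gp ν (insert i0 s) (fun i => t * e j i) =
        (X - C (ν i0)) ^ (t * e j i0) * gp ν s (fun i => t * e j i) := fun j => by
      simp [gp, Finset.prod_insert hi0]
    obtain ⟨j1, hj1⟩ := hne
    obtain ⟨j0, hj0, hmin⟩ := (Finset.univ.filter fun j => P j ≠ 0).exists_min_image
      (fun j => e j i0) ⟨j1, by simpa using hj1⟩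
    simp only [Finset.mem_filter, Finset.mem_univ, true_and] at hj0 hmin
    set c := e j0 i0 with hc
    let S : Finset (Fin k) := Finset.univ.filter fun j => P j ≠ 0 ∧ e j i0 = c
    have hSmem : ∀ j, j ∈ S ↔ P j ≠ 0 ∧ e j i0 = c := fun j => by simp [S]
    let σ := S.equivFin.symm
    have hcard : S.card ≤ k := by simpa using Finset.card_le_univ S
    have hX : (X - C (ν i0)) ≠ 0 := X_sub_C_ne_zero _
    refine order_lemma ν t A m s ih (ν i0) (fun i hi h => hi0 (hν h ▸ hi)) ?_ S.card
      (hcard.trans hk) (Finset.card_pos.mpr ⟨j0, (hSmem j0).mpr ⟨hj0, rfl⟩⟩)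
      (fun a => e (σ a)) (fun a => P (σ a)) ?_ (fun a => hA _) ?_
      (fun a => ((hSmem _).mp (σ a).2).1) ?_
    · have : m + m * (A + m * s.card) ≤ m + m * (A + m * n) := by gcongr; omega
      omega
    · intro a b hab
      apply σ.injective
      apply Subtype.ext
      apply he
      intro i hi
      rcases Finset.mem_insert.mp hi with rfl | hi
      · rw [((hSmem _).mp (σ a).2).2, ((hSmem _).mp (σ b).2).2]
      · exact hab i hi
    · intro a
      refine lt_of_le_of_lt ?_ (hp (σ a))
      have hPa := ((hSmem _).mp (σ a).2).1
      rw [e1, natDegree_mul hPa (gp_ne_zero _ _ _),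
        natDegree_mul hPa (mul_ne_zero (pow_ne_zero _ hX) (gp_ne_zero _ _ _)),
        natDegree_mul (pow_ne_zero _ hX) (gp_ne_zero _ _ _)]
      omega
    · have e2 : ∑ a, P (σ a) * gp ν s (fun i => t * e (σ a) i) =
          ∑ j ∈ S, P j * gp ν s (fun i => t * e j i) := by
        rw [← Finset.sum_coe_sort S]
        exact Equiv.sum_comp σ (fun j : S => P j * gp ν s (fun i => t * e j i))
      rw [e2]
      have h1 : (X - C (ν i0)) ^ (t * c) * (X - C (ν i0)) ^ t ∣
          (X - C (ν i0)) ^ (t * c) * ∑ j ∈ S, P j * gp ν s (fun i => t * e j i) := by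
        have h2 : (X - C (ν i0)) ^ (t * c) * ∑ j ∈ S, P j * gp ν s (fun i => t * e j i) =
            - ∑ j ∈ Sᶜ, P j * gp ν (insert i0 s) (fun i => t * e j i) := by
          rw [eq_neg_iff_add_eq_zero, ← h0, ← Finset.sum_add_sum_compl S, Finset.mul_sum]
          congr 1
          refine Finset.sum_congr rfl fun j hj => ?_
          rw [e1, ((hSmem j).mp hj).2]
          ring
        rw [h2, dvd_neg]
        refine Finset.dvd_sum fun j hj => ?_
        by_cases hPj : P j = 0
        · simp [hPj]
        · have h3 := hmin j hPj
          have h4 : e j i0 ≠ c := fun h => (Finset.mem_compl.mp hj) ((hSmem j).mpr ⟨hPj, h⟩)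
          have h5 : c + 1 ≤ e j i0 := by omega
          rw [e1, ← pow_add]
          refine Dvd.dvd.mul_left (Dvd.dvd.mul_right (pow_dvd_pow _ ?_) _) _
          calc t * c + t = t * (c + 1) := by ring
            _ ≤ t * e j i0 := Nat.mul_le_mul_left _ h5
      exact (mul_dvd_mul_iff_left (pow_ne_zero _ hX)).mp h1

lemma stepanov {p : ℕ} [Fact p.Prime] {ι : Type} [DecidableEq ι] [Fintype ι] (ν : ι → ZMod p)
    (hν : Function.Injective ν) (t A m n B D : ℕ) (hn : Fintype.card ι = n)
    (ht : m + m * (A + m * n) < t) (hA0 : 0 < A) (hB : A + n * (t * B) ≤ p) (hDp : D ≤ p)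
    (hD0 : 0 < D) (hcount : D * (A + D * n) < m * A)
    (e : Fin m → ι → ℕ) (he : Function.Injective e) (heB : ∀ j i, e j i ≤ B)
    (M : Finset (ZMod p)) (hM : ∀ x ∈ M, ∀ i, (x - ν i) ^ t = 1) :
    M.card * D ≤ A + n * (t * B) := by
  classical
  choose E hEd hE using fun j => exists_E ν Finset.univ (fun i => t * e j i)
  set g : Fin m → (ZMod p)[X] := fun j => gp ν Finset.univ (fun i => t * e j i) with hg
  set R := rp ν Finset.univ with hR
  have hRd : R.natDegree ≤ n := by rw [hR, rp_natDegree, Finset.card_univ, hn]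
  have hEd' : ∀ j, (E j).natDegree ≤ n := fun j => (hEd j).trans (by rw [Finset.card_univ, hn])
  let Φ : (Fin m → degreeLT (ZMod p) A) →ₗ[ZMod p] (Fin D × Fin (A + D * n) → ZMod p) :=
    LinearMap.pi fun rl => ∑ j : Fin m,
      lcoeff (ZMod p) rl.2 ∘ₗ itOp R (E j) rl.1 ∘ₗ (degreeLT (ZMod p) A).subtype ∘ₗ
        LinearMap.proj j
  have : FiniteDimensional (ZMod p) (degreeLT (ZMod p) A) :=
    Module.Finite.equiv (degreeLTEquiv (ZMod p) A).symm
  have hfr : Module.finrank (ZMod p) (degreeLT (ZMod p) A) = A := by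
    rw [(degreeLTEquiv (ZMod p) A).finrank_eq]; simp
  have hker : LinearMap.ker Φ ≠ ⊥ := by
    refine LinearMap.ker_ne_bot_of_finrank_lt ?_
    have e1 : Module.finrank (ZMod p) (Fin m → degreeLT (ZMod p) A) = m * A := by
      rw [Module.finrank_pi_fintype]; simp [hfr]
    rw [e1]
    simpa using hcount
  obtain ⟨P, hPk, hP0⟩ := (Submodule.ne_bot_iff _).mp hker
  have hPd : ∀ j, ((P j : (ZMod p)[X])).natDegree < A := fun j => by
    by_cases h : (P j : (ZMod p)[X]) = 0
    · rw [h]; simpa using hA0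
    · exact (natDegree_lt_iff_degree_lt h).mpr (mem_degreeLT.mp (P j).2)
  have hgd : ∀ j, (g j).natDegree ≤ n * (t * B) := fun j => by
    rw [hg, gp_natDegree]
    refine (Finset.sum_le_sum fun i _ => Nat.mul_le_mul_left t (heB j i)).trans ?_
    simp [hn]
  have hPg : ∀ j, ((P j : (ZMod p)[X]) * g j).natDegree < A + n * (t * B) := fun j => by
    have := hPd j
    have := hgd j
    exact natDegree_mul_le.trans_lt (by omega)
  have hsum : ∀ r < D, ∑ j, itOp R (E j) r (P j : (ZMod p)[X]) = 0 := by
    intro r hr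
    ext l
    by_cases hl : l < A + D * n
    · have := congrFun (LinearMap.mem_ker.mp hPk) (⟨r, hr⟩, ⟨l, hl⟩)
      simpa [Φ, finsetSum_coeff] using this
    · rw [coeff_zero]
      refine coeff_eq_zero_of_natDegree_lt 
        (lt_of_le_of_lt (b := A - 1 + D * n) ?_ (lt_of_lt_of_le ?_ (not_lt.mp hl)))
      · refine natDegree_sum_le_of_forall_le _ _ fun j _ => ?_
        refine (itOp_natDegree R (E j) _ n hRd (hEd' j) r).trans ?_
        have := hPd j
        exact add_le_add (by omega) (Nat.mul_le_mul_right _ hr.le)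
      · omega
  set Ψ : (ZMod p)[X] := ∑ j, (P j : (ZMod p)[X]) * g j with hΨ
  have hΨ0 : Ψ ≠ 0 := by
    intro h
    apply hP0
    have := indep_all ν hν t A m n ht Finset.univ (by rw [Finset.card_univ, hn]) m le_rfl e
      (fun j => (P j : (ZMod p)[X])) (fun j j' h => he (funext fun i => h i (Finset.mem_univ i)))
      (fun j => (hPd j).le) (fun j => (hPg j).trans_le hB) h
    funext j
    exact Subtype.ext (this j)
  have hΨd : Ψ.natDegree ≤ A + n * (t * B) :=
    natDegree_sum_le_of_forall_le _ _ fun j _ => (hPg j).le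
  have hmul : ∀ x ∈ M, D ≤ Ψ.rootMultiplicity x := by
    intro x hx
    have hxi : ∀ i, x - ν i ≠ 0 := fun i h => by
      have := hM x hx i
      rw [h, zero_pow (by omega)] at this
      exact zero_ne_one this
    have hg1 : ∀ j, (g j).eval x = 1 := fun j => by
      simp only [hg, gp, eval_prod]
      refine Finset.prod_eq_one fun i _ => ?_
      simp [pow_mul, hM x hx i]
    have hRx : R.eval x ≠ 0 := by
      simp only [hR, rp, eval_prod]
      refine Finset.prod_ne_zero_iff.mpr fun i _ => ?_
      simpa using hxi i
    have : D - 1 < Ψ.rootMultiplicity x := by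
      refine lt_rootMultiplicity_of_isRoot_iterate_derivative_of_mem_nonZeroDivisors hΨ0 ?_ ?_
      · intro r hr
        have h1 : R ^ r * derivative^[r] Ψ = ∑ j, itOp R (E j) r (P j : (ZMod p)[X]) * g j := by
          rw [hΨ, iterate_derivative_sum, Finset.mul_sum]
          exact Finset.sum_congr rfl fun j _ => itOp_spec R (E j) (g j) _ (hE j) r
        have h2 := congrArg (eval x) h1
        rw [eval_finsetSum, eval_mul, eval_pow] at h2
        simp only [eval_mul, hg1, mul_one] at h2
        rw [← eval_finsetSum, hsum r (by omega), eval_zero] at h2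
        exact (mul_eq_zero.mp h2).resolve_left (pow_ne_zero _ hRx)
      · refine mem_nonZeroDivisors_of_ne_zero fun h => ?_
        rw [ZMod.natCast_eq_zero_iff, (Fact.out : p.Prime).dvd_factorial] at h
        omega
    omega
  refine le_trans ?_ hΨd
  refine le_trans ?_ (card_roots' Ψ)
  calc M.card * D = ∑ x ∈ M, D := by simp
    _ ≤ ∑ x ∈ M, Ψ.roots.count x := Finset.sum_le_sum fun x hx => by
        rw [count_roots]; exact hmul x hx
    _ ≤ ∑ x ∈ Ψ.roots.toFinset ∪ M, Ψ.roots.count x :=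
        Finset.sum_le_sum_of_subset Finset.subset_union_right
    _ = Ψ.roots.card := Multiset.sum_count_eq_card (fun a ha => by simp [Multiset.mem_toFinset.mpr ha])

lemma num_indep (n D : ℕ) (hn : 2 ≤ n) (hD : 3 < D) :
    2 * D + 1 + (2 * D + 1) * (n * D + (2 * D + 1) * n) < 9 * n ^ 2 * D ^ 2 := by
  have h1 : 2 * (n * D ^ 2) ≤ n ^ 2 * D ^ 2 := by
    calc 2 * (n * D ^ 2) ≤ n * (n * D ^ 2) := Nat.mul_le_mul_right _ hn
      _ = n ^ 2 * D ^ 2 := by ring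
  have h2 : 5 * D + 1 ≤ 2 * D ^ 2 := by nlinarith
  have h3 : n * (5 * D + 1) ≤ n * (2 * D ^ 2) := Nat.mul_le_mul_left _ h2
  have h4 : 2 * D ^ 2 ≤ n * D ^ 2 := Nat.mul_le_mul_right _ hn
  nlinarith

lemma num_count (n D : ℕ) (hn : 2 ≤ n) (hD : 3 < D) :
    D * (n * D + D * n) < (2 * D + 1) * (n * D) := by
  have : 0 < n * D := Nat.mul_pos (by omega) (by omega)
  nlinarith

lemma num_le (n D : ℕ) (hn : 2 ≤ n) : D ≤ n * D := Nat.le_mul_of_pos_left _ (by omega)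

/-- Corollary (the result of Shkredov–Vyugin): bound on the intersection of a
subgroup of `F_p^*` with `n-1` pairwise distinct additive shifts of itself. -/
theorem corollary_shifts (p n : ℕ) [Fact p.Prime] (hn : 2 ≤ n)
    (Γ : Subgroup (ZMod p)ˣ) (μ : Fin (n - 1) → (ZMod p)ˣ) (hμ : Function.Injective μ)
    (hlow : (2 : ℝ) ^ (2 * n) < Nat.card Γ)
    (hup : (Nat.card Γ : ℝ) <
        ((n : ℝ) + 1) ^ (-(2 * (n : ℝ)) / (2 * (n : ℝ) + 1)) *
          (p : ℝ) ^ ((1 : ℝ) - 1 / (2 * (n : ℝ) + 1))) :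
    (Nat.card {x : ZMod p | (∃ γ ∈ Γ, x = (γ : (ZMod p)ˣ)) ∧
        ∀ i : Fin (n - 1), ∃ γ ∈ Γ, x = ((γ : (ZMod p)ˣ) : ZMod p) + (μ i : ZMod p)} : ℝ) ≤
      4 * (n : ℝ) * ((n : ℝ) + 1) *
        (Nat.card Γ : ℝ) ^ ((1 : ℝ) / 2 + 1 / (2 * (n : ℝ))) := by
  classical
  set t : ℕ := Nat.card Γ with ht
  set Ms : Set (ZMod p) := {x : ZMod p | (∃ γ ∈ Γ, x = (γ : (ZMod p)ˣ)) ∧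
        ∀ i : Fin (n - 1), ∃ γ ∈ Γ, x = ((γ : (ZMod p)ˣ) : ZMod p) + (μ i : ZMod p)} with hMs
  have hpp := (Fact.out : p.Prime)
  have hp0 : (0 : ℝ) < p := by exact_mod_cast hpp.pos
  have hn2 : (2 : ℝ) ≤ n := by exact_mod_cast hn
  have hn0 : (n : ℝ) ≠ 0 := by linarith
  have ht1 : (1 : ℝ) < t := lt_of_le_of_lt (one_le_pow₀ (by norm_num)) hlow
  have ht0 : (0 : ℝ) < t := by linarith
  -- u = t^(1/(2n)), q = sqrt t
  set u : ℝ := (t : ℝ) ^ (1 / (2 * (n : ℝ))) with hu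
  set q : ℝ := (t : ℝ) ^ ((1 : ℝ) / 2) with hq
  have hq0 : 0 < q := Real.rpow_pos_of_pos ht0 _
  have hqq : q * q = t := by
    rw [hq, ← Real.rpow_add ht0]; norm_num
  have hu1 : 1 ≤ u := Real.one_le_rpow ht1.le (by positivity)
  have hun : u ^ n = q := by
    rw [hu, ← Real.rpow_natCast, ← Real.rpow_mul ht0.le]
    congr 1; field_simp
  have hrhs : (t : ℝ) ^ ((1 : ℝ) / 2 + 1 / (2 * (n : ℝ))) = q * u := Real.rpow_add ht0 _ _
  rw [hrhs]
  -- the condition on p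
  have hpu : ((n : ℝ) + 1) * (t * u) < p := by
    have hN : (0 : ℝ) < (n : ℝ) + 1 := by linarith
    have h1 : (t : ℝ) * u = (t : ℝ) ^ ((2 * (n : ℝ) + 1) / (2 * n)) := by
      rw [hu]
      nth_rewrite 1 [← Real.rpow_one (t : ℝ)]
      rw [← Real.rpow_add ht0]
      congr 1; field_simp
    have h2 := Real.rpow_lt_rpow ht0.le hup (z := (2 * (n : ℝ) + 1) / (2 * n)) (by positivity)
    rw [Real.mul_rpow (by positivity) (by positivity), ← Real.rpow_mul hN.le,
      ← Real.rpow_mul hp0.le] at h2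
    have e1 : -(2 * (n : ℝ)) / (2 * (n : ℝ) + 1) * ((2 * (n : ℝ) + 1) / (2 * n)) = -1 := by
      field_simp
    have e2 : ((1 : ℝ) - 1 / (2 * (n : ℝ) + 1)) * ((2 * (n : ℝ) + 1) / (2 * n)) = 1 := by
      field_simp
      try ring
    rw [e1, e2, Real.rpow_one, Real.rpow_neg_one, ← h1] at h2
    rw [inv_mul_eq_div, lt_div_iff₀ hN] at h2
    linarith
  -- trivial bound
  have htriv : (Nat.card Ms : ℝ) ≤ t := by
    have : Nat.card Ms ≤ Nat.card Γ := by
      have hx : ∀ x : Ms, ∃ γ ∈ Γ, (x : ZMod p) = (γ : (ZMod p)ˣ) := fun x => x.2.1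
      choose f hf hfx using hx
      refine Nat.card_le_card_of_injective (fun x : Ms => (⟨f x, hf x⟩ : Γ)) ?_
      intro x y hxy
      apply Subtype.ext
      rw [hfx x, hfx y, Subtype.mk.inj hxy]
    exact_mod_cast this
  by_cases hbig : q ≤ 4 * n * (n + 1) * u
  · refine htriv.trans ?_
    rw [← hqq]
    nlinarith
  push Not at hbig
  -- parameters
  set B : ℕ := ⌊u⌋₊ with hB
  set D : ℕ := ⌈q / (4 * n)⌉₊ with hD
  have hBu : (B : ℝ) ≤ u := Nat.floor_le (by linarith)
  have huB : u < (B : ℝ) + 1 := Nat.lt_floor_add_one u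
  have hDlo : q / (4 * n) ≤ D := Nat.le_ceil _
  have hDhi : (D : ℝ) < q / (4 * n) + 1 := Nat.ceil_lt_add_one (by positivity)
  have hqbig : 4 * (n : ℝ) * (n + 1) < q := by
    refine lt_of_le_of_lt ?_ hbig
    exact le_mul_of_one_le_right (by positivity) hu1
  have hq3 : (n : ℝ) + 1 < q / (4 * n) := by
    rw [lt_div_iff₀ (by positivity)]; linarith
  have hD3 : (3 : ℝ) < D := by linarith
  have hDq : (D : ℝ) * (2 * n) ≤ q * (2 / 3) := by
    have h1 : (D : ℝ) ≤ q / (4 * n) * (4 / 3) := by linarith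
    calc (D : ℝ) * (2 * n) ≤ q / (4 * n) * (4 / 3) * (2 * n) := by gcongr
      _ = q * (2 / 3) := by
          field_simp
          try norm_num
          try ring
  have hD3' : 3 < D := by exact_mod_cast hD3
  -- 9 n^2 D^2 ≤ t
  have hDt : 9 * n ^ 2 * D ^ 2 ≤ t := by
    have : (9 : ℝ) * n ^ 2 * D ^ 2 ≤ t := by
      have h1 : (D : ℝ) * (3 * n) ≤ q := by linarith
      have h2 : ((D : ℝ) * (3 * n)) ^ 2 ≤ q ^ 2 := by gcongr
      nlinarith
    exact_mod_cast this
  set m : ℕ := 2 * D + 1 with hm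
  set A : ℕ := n * D with hA
  have hmB : m ≤ Fintype.card (Option (Fin (n - 1)) → Fin (B + 1)) := by
    have hc : Fintype.card (Option (Fin (n - 1)) → Fin (B + 1)) = (B + 1) ^ n := by
      simp; congr 1; omega
    rw [hc]
    have h1 : q ≤ ((B : ℝ) + 1) ^ n := by rw [← hun]; gcongr
    have h2 : (m : ℝ) ≤ q := by
      rw [hm]; push_cast
      have : (D : ℝ) * 4 ≤ D * (2 * n) := by gcongr; linarith
      linarith
    exact_mod_cast h2.trans h1
  obtain ⟨emb⟩ : Nonempty (Fin m ↪ (Option (Fin (n - 1)) → Fin (B + 1))) :=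
    Function.Embedding.nonempty_of_card_le (by simpa using hmB)
  have hAt : A ≤ t := by
    rw [hA]; nlinarith
  have hABp : (A : ℝ) + n * (t * B) ≤ (n + 1) * (t * u) := by
    have h1 : (A : ℝ) ≤ t := by exact_mod_cast hAt
    have h2 : (t : ℝ) ≤ t * u := le_mul_of_one_le_right ht0.le hu1
    have h3 : (n : ℝ) * (t * B) ≤ n * (t * u) := by gcongr
    linarith
  have hABp' : A + n * (t * B) ≤ p := by
    have : (A : ℝ) + n * (t * B) ≤ p := hABp.trans hpu.le
    exact_mod_cast this
  have hfin := stepanov (p := p) (ι := Option (Fin (n - 1)))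
    (fun o => o.elim 0 fun i => (μ i : ZMod p)) ?_ t A m n B D ?_ ?_ ?_ hABp' ?_ (by omega) ?_
    (fun j i => (emb j i : ℕ)) ?_ ?_ Ms.toFinset ?_
  · have h1 : Nat.card Ms = Ms.toFinset.card := by simp
    rw [h1]
    have h2 : (Ms.toFinset.card : ℝ) * D ≤ (n + 1) * (t * u) := by
      refine le_trans ?_ hABp
      exact_mod_cast hfin
    have h3 : (Ms.toFinset.card : ℝ) * (q / (4 * n)) ≤ (n + 1) * (t * u) :=
      le_trans (by gcongr) h2
    rw [← mul_div_assoc, div_le_iff₀ (by positivity), ← hqq] at h3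
    have h4 : (Ms.toFinset.card : ℝ) * q ≤ (4 * n * (n + 1) * (q * u)) * q := by linarith
    exact le_of_mul_le_mul_right h4 hq0
  · intro a b hab
    rcases a with _ | a <;> rcases b with _ | b
    · rfl
    · exact absurd hab.symm (μ b).ne_zero
    · exact absurd hab (μ a).ne_zero
    · exact congrArg some (hμ (Units.ext hab))
  · simp; omega
  · rw [hm, hA]
    exact lt_of_lt_of_le (num_indep n D hn hD3') hDt
  · exact lt_of_lt_of_le (by omega) (num_le n D hn)
  · exact (num_le n D hn).trans ((Nat.le_add_right _ _).trans hABp')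
  · exact num_count n D hn hD3'
  · intro j j' h
    apply emb.injective
    funext i
    exact Fin.ext (congrFun h i)
  · intro j i
    have := (emb j i).2
    omega
  · have hpow : ∀ γ ∈ Γ, ((γ : (ZMod p)ˣ) : ZMod p) ^ t = 1 := by
      intro γ hγ
      have h1 : (⟨γ, hγ⟩ : Γ) ^ t = 1 := pow_card_eq_one'
      have h2 : γ ^ t = 1 := congrArg Subtype.val h1
      rw [← Units.val_pow_eq_pow_val, h2, Units.val_one]
    intro x hx i
    rw [Set.mem_toFinset] at hx
    rcases i with _ | i
    · obtain ⟨γ, hγ, rfl⟩ := hx.1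
      simpa using hpow γ hγ
    · obtain ⟨γ, hγ, rfl⟩ := hx.2 i
      simpa using hpow γ hγ
end

section
/- Let G = {x ∈ ℂ : x^t = 1} be the group of t-th roots of unity in ℂ^*, and let G_1, …, G_n be cosets of G in ℂ^* (G_i = g_i G with g_i ∈ ℂ^*), n ≥ 2. Let f_1(x), …, f_n(x) ∈ ℂ[x] be an admissible set of polynomials of degrees m_1 ≤ m_2 ≤ … ≤ m_n, and set M = {x ∈ ℂ : f_i(x) ∈ G_i for all i = 1, …, n}. If t = |G| > 2^{2n} m_n^{4n}, then |M| ≤ 4(n+1)(m_1 + ⋯ + m_n)(m_1 ⋯ m_n)^{1/n} · t^{1/2 + 1/(2n)}. -/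
open Polynomial in
/-- The degree of a determinant of polynomials of bounded degree. -/
lemma natDegree_det_le_mul {N : ℕ} (A : Matrix (Fin N) (Fin N) (Polynomial ℂ)) (d : ℕ)
    (h : ∀ i j, (A i j).natDegree ≤ d) : A.det.natDegree ≤ N * d := by
  rw [Matrix.det_apply]
  refine natDegree_sum_le_of_forall_le _ _ fun σ _ => ?_
  refine (natDegree_smul_le _ _).trans ?_
  refine (natDegree_prod_le _ _).trans ?_
  refine (Finset.sum_le_card_nsmul _ _ d fun i _ => h _ _).trans ?_
  simp

/-- `P(z) P'(w) - c` as a polynomial in `w` over `ℂ[z]`. -/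
noncomputable def curvePoly (P P' : Polynomial ℂ) (c : ℂ) : Polynomial (Polynomial ℂ) :=
  Polynomial.C P * P'.map Polynomial.C - Polynomial.C (Polynomial.C c)

open Polynomial in
lemma curvePoly_map (P P' : Polynomial ℂ) (c z : ℂ) :
    (curvePoly P P' c).map (evalRingHom z) = C (P.eval z) * P' - C c := by
  have : (evalRingHom z).comp C = RingHom.id ℂ := by ext; simp
  simp [curvePoly, Polynomial.map_map, this]

open Polynomial in
lemma curvePoly_coeff_natDegree (P P' : Polynomial ℂ) (c : ℂ) (i : ℕ) :
    ((curvePoly P P' c).coeff i).natDegree ≤ P.natDegree := by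
  rw [curvePoly, coeff_sub, coeff_C_mul, coeff_map, coeff_C]
  refine (natDegree_sub_le _ _).trans (max_le ?_ ?_)
  · exact natDegree_mul_C_le _ _
  · split_ifs <;> simp

open Polynomial in
/-- The key bound: resultant of the two curves. -/
lemma exists_bound_poly (P Q P' Q' : Polynomial ℂ) (c d x : ℂ) (D : ℕ)
    (hP : P'.natDegree = P.natDegree) (hQ : Q'.natDegree = Q.natDegree)
    (hp : 0 < P.natDegree) (hPD : P.natDegree ≤ D) (hQD : Q.natDegree ≤ D)
    (hc : c ≠ 0) (hx : P.eval x = 0) (hx' : Q.eval x ≠ 0) (hq : 0 < Q.natDegree) :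
    ∃ R : Polynomial ℂ, R ≠ 0 ∧ R.natDegree ≤ (2 * D) * D ∧
      ∀ z w : ℂ, P.eval z * P'.eval w = c → Q.eval z * Q'.eval w = d → R.eval z = 0 := by
  refine ⟨resultant (curvePoly P P' c) (curvePoly Q Q' d) P.natDegree Q.natDegree, ?_, ?_, ?_⟩
  · intro h
    have h1 := resultant_map_map (curvePoly P P' c) (curvePoly Q Q' d) P.natDegree Q.natDegree
      (evalRingHom x)
    rw [h, curvePoly_map, curvePoly_map, hx, map_zero, zero_mul, zero_sub, ← C_neg,
      resultant_C_left] at h1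
    have hQ0 : Q'.coeff Q.natDegree ≠ 0 := by
      rw [← hQ, coeff_natDegree, leadingCoeff_ne_zero]
      rintro rfl
      simp at hQ
      omega
    simp [coeff_C, hq.ne', hc, hx', hQ0] at h1
  · refine (natDegree_det_le_mul _ D ?_).trans (Nat.mul_le_mul_right _ (by omega))
    intro i j
    rw [sylvester, Matrix.of_apply]
    induction j using Fin.addCases with
    | left j =>
      rw [Fin.addCases_left]
      split_ifs
      · exact (curvePoly_coeff_natDegree _ _ _ _).trans hQD
      · simp
    | right j =>
      rw [Fin.addCases_right]
      split_ifs
      · exact (curvePoly_coeff_natDegree _ _ _ _).trans hPD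
      · simp
  · intro z w h1 h2
    have h3 := resultant_map_map (curvePoly P P' c) (curvePoly Q Q' d) P.natDegree Q.natDegree
      (evalRingHom z)
    rw [curvePoly_map, curvePoly_map] at h3
    rw [coe_evalRingHom] at h3
    rw [← h3]
    obtain ⟨p, q, -, -, h⟩ := exists_mul_add_mul_eq_C_resultant
      (C (P.eval z) * P' - C c) (C (Q.eval z) * Q' - C d) (m := P.natDegree) (n := Q.natDegree)
      (by
        refine (natDegree_sub_le _ _).trans (max_le ?_ (by simp))
        exact (natDegree_C_mul_le _ _).trans hP.le)
      (by
        refine (natDegree_sub_le _ _).trans (max_le ?_ (by simp))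
        exact (natDegree_C_mul_le _ _).trans hQ.le) (by omega)
    have := congrArg (eval w) h
    simpa [h1, h2] using this.symm

lemma conj_eval_map (P : Polynomial ℂ) (z : ℂ) :
    (P.map (starRingEnd ℂ)).eval (starRingEnd ℂ z) = starRingEnd ℂ (P.eval z) := by
  rw [Polynomial.eval_map, Polynomial.eval₂_hom]

/-- The complex analogue of the main theorem: a bound on the number of `x ∈ ℂ`
such that `f i (x)` lies in the coset `g i • G` of the group `G` of `t`-th
roots of unity, for an admissible set of polynomials. -/
theorem main_theorem_complex (n t : ℕ) (hn : 2 ≤ n) (ht0 : 0 < t)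
    (g : Fin n → ℂ) (hg : ∀ i, g i ≠ 0)
    (f : Fin n → Polynomial ℂ) (m : Fin n → ℕ)
    (hdeg : ∀ i, (f i).natDegree = m i) (hmono : Monotone m)
    (hadm : AdmissibleSet f)
    (ht : (2 : ℝ) ^ (2 * n) * (m ⟨n - 1, by omega⟩ : ℝ) ^ (4 * n) < t) :
    {x : ℂ | ∀ i : Fin n, ∃ u : ℂ, u ^ t = 1 ∧ (f i).eval x = g i * u}.Finite ∧
    (Nat.card {x : ℂ | ∀ i : Fin n, ∃ u : ℂ, u ^ t = 1 ∧ (f i).eval x = g i * u} : ℝ) ≤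
      4 * ((n : ℝ) + 1) * (∑ i, (m i : ℝ)) * (∏ i, (m i : ℝ)) ^ ((1 : ℝ) / n) *
        (t : ℝ) ^ ((1 : ℝ) / 2 + 1 / (2 * (n : ℝ))) := by
  obtain ⟨x, hx0, hx1, hx2⟩ := hadm
  have hpos : ∀ i, 0 < m i := by
    intro i
    rw [← hdeg i]
    by_contra h
    have h0 : (f i).natDegree = 0 := by omega
    have h1 := hx0 i
    have h2 := hx2 i
    rw [Polynomial.eq_C_of_natDegree_eq_zero h0] at h1 h2
    simp only [Polynomial.eval_C] at h1 h2
    exact h2 h1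
  have hle : ∀ i : Fin n, m i ≤ m ⟨n - 1, by omega⟩ := fun i => hmono (by
    rw [Fin.le_def]
    have := i.2
    simp only
    omega)
  set D : ℕ := m ⟨n - 1, by omega⟩ with hD
  let a : Fin n := ⟨0, by omega⟩
  let b : Fin n := ⟨1, by omega⟩
  have hab : b ≠ a := by simp [a, b]
  have hinj := (starRingEnd ℂ).injective
  obtain ⟨R, hR0, hRd, hR⟩ := exists_bound_poly (f a) (f b) ((f a).map (starRingEnd ℂ))
    ((f b).map (starRingEnd ℂ)) (g a * starRingEnd ℂ (g a)) (g b * starRingEnd ℂ (g b)) (x a) D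
    (Polynomial.natDegree_map_eq_of_injective hinj _)
    (Polynomial.natDegree_map_eq_of_injective hinj _)
    (by rw [hdeg]; exact hpos a) (by rw [hdeg]; exact hle a) (by rw [hdeg]; exact hle b)
    (by simp [hg a]) (hx0 a) (hx1 a b hab) (by rw [hdeg]; exact hpos b)
  have hsub : {x : ℂ | ∀ i : Fin n, ∃ u : ℂ, u ^ t = 1 ∧ (f i).eval x = g i * u} ⊆
      (R.roots.toFinset : Set ℂ) := by
    intro z hz
    simp only [Finset.mem_coe, Multiset.mem_toFinset, Polynomial.mem_roots hR0,
      Polynomial.IsRoot.def]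
    have key : ∀ i, (f i).eval z * ((f i).map (starRingEnd ℂ)).eval (starRingEnd ℂ z) =
        g i * starRingEnd ℂ (g i) := by
      intro i
      obtain ⟨u, hu, hfu⟩ := hz i
      have hn1 : ‖u‖ = 1 := Complex.norm_eq_one_of_pow_eq_one hu ht0.ne'
      have hu1 : u * starRingEnd ℂ u = 1 := by
        rw [Complex.mul_conj, Complex.normSq_eq_norm_sq, hn1]; simp
      rw [conj_eval_map, hfu, map_mul]
      linear_combination (g i * starRingEnd ℂ (g i)) * hu1
    exact hR z _ (key a) (key b)
  refine ⟨(Finset.finite_toSet _).subset hsub, ?_⟩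
  have hcard : Nat.card {x : ℂ | ∀ i : Fin n, ∃ u : ℂ, u ^ t = 1 ∧ (f i).eval x = g i * u} ≤
      2 * D * D := by
    rw [Nat.card_coe_set_eq]
    refine (Set.ncard_le_ncard hsub (Finset.finite_toSet _)).trans ?_
    rw [Set.ncard_coe_finset]
    exact (Multiset.toFinset_card_le _).trans ((Polynomial.card_roots' R).trans hRd)
  have hD1 : (1 : ℝ) ≤ D := by exact_mod_cast hpos _
  have hcardR : (Nat.card {x : ℂ | ∀ i : Fin n, ∃ u : ℂ, u ^ t = 1 ∧ (f i).eval x = g i * u} : ℝ)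
      ≤ 2 * D * D := by exact_mod_cast hcard
  refine hcardR.trans ?_
  have hsum : (D : ℝ) ≤ ∑ i, (m i : ℝ) :=
    Finset.single_le_sum (f := fun i => (m i : ℝ)) (fun i _ => Nat.cast_nonneg _)
      (Finset.mem_univ (⟨n - 1, by omega⟩ : Fin n))
  have hprod : (1 : ℝ) ≤ (∏ i, (m i : ℝ)) ^ ((1 : ℝ) / n) := by
    refine Real.one_le_rpow ?_ (by positivity)
    have : 0 < ∏ i, m i := Finset.prod_pos fun i _ => hpos i
    exact_mod_cast this
  have ht1 : (1 : ℝ) ≤ t := by exact_mod_cast ht0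
  have htD : (D : ℝ) ≤ (t : ℝ) ^ ((1 : ℝ) / 2 + 1 / (2 * (n : ℝ))) := by
    have h1 : (D : ℝ) ^ 2 ≤ t := by
      have h2 : (D : ℝ) ^ 2 ≤ (D : ℝ) ^ (4 * n) := pow_le_pow_right₀ hD1 (by omega)
      have h3 : (1 : ℝ) ≤ 2 ^ (2 * n) := one_le_pow₀ (by norm_num)
      have h4 : (0 : ℝ) ≤ (D : ℝ) ^ (4 * n) := by positivity
      nlinarith
    calc (D : ℝ) ≤ Real.sqrt t := Real.le_sqrt_of_sq_le h1
      _ = (t : ℝ) ^ ((1 : ℝ) / 2) := Real.sqrt_eq_rpow _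
      _ ≤ _ := Real.rpow_le_rpow_of_exponent_le ht1 (by
        have : (0 : ℝ) ≤ 1 / (2 * (n : ℝ)) := by positivity
        linarith)
  have hn0 : (2 : ℝ) ≤ 4 * ((n : ℝ) + 1) := by
    have : (0 : ℝ) ≤ n := Nat.cast_nonneg _
    linarith
  calc (2 : ℝ) * D * D = 2 * D * 1 * D := by ring
    _ ≤ _ := by gcongr
end

section
/- Let p be a prime, let f_1(x), …, f_n(x) ∈ F_p[x] have degrees m_1, …, m_n, write 𝓜_n = m_1 + ⋯ + m_n, and let t, k, a, b_1, …, b_n be nonnegative integers. Then the product f_1(x)^{b_1 t} ⋯ f_n(x)^{b_n t} divides the polynomial (f_1(x)⋯f_n(x))^k · (d^k/dx^k)(x^a f_1(x)^{b_1 t} ⋯ f_n(x)^{b_n t}), and the quotient P_{k,a,b}(x) is either identically zero or satisfies deg P_{k,a,b} ≤ a + (𝓜_n − 1)k; in particular, if a < A then deg P_{k,a,b} ≤ A + 𝓜_n k − k. -/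
open Polynomial

theorem aux_dvd {R ι : Type*} [CommRing R] [DecidableEq ι] (f : ι → Polynomial R) (c : ι → ℕ)
    (s : Finset ι) :
    ∃ H, (∏ i ∈ s, f i) * derivative (∏ i ∈ s, f i ^ c i) = (∏ i ∈ s, f i ^ c i) * H := by
  induction s using Finset.induction_on with
  | empty => exact ⟨0, by simp⟩
  | insert j s hj ih =>
    obtain ⟨H, hH⟩ := ih
    have h1 : f j * derivative (f j ^ c j) = f j ^ c j * (C (c j : R) * derivative (f j)) := by
      rw [derivative_pow]
      rcases Nat.eq_zero_or_pos (c j) with h | h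
      · simp [h]
      · obtain ⟨e, he⟩ := Nat.exists_eq_succ_of_ne_zero h.ne'
        rw [he, Nat.succ_sub_one, pow_succ]
        ring
    refine ⟨(∏ i ∈ s, f i) * (C (c j : R) * derivative (f j)) + f j * H, ?_⟩
    rw [Finset.prod_insert hj, Finset.prod_insert hj, derivative_mul]
    linear_combination (∏ i ∈ s, f i) * (∏ i ∈ s, f i ^ c i) * h1 + f j * f j ^ c j * hH

theorem aux_quot {R : Type*} [CommRing R] (F G H Q : Polynomial R)
    (h : F * derivative G = G * H) (k : ℕ) :
    ∃ P, G * P = F ^ k * derivative^[k] (Q * G) := by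
  induction k with
  | zero => exact ⟨Q, by simp [mul_comm]⟩
  | succ k ih =>
    obtain ⟨P, hP⟩ := ih
    have hd := congrArg derivative hP
    rw [derivative_mul, derivative_mul, derivative_pow] at hd
    refine ⟨H * P + F * derivative P - C (k : R) * derivative F * P, ?_⟩
    rw [Function.iterate_succ_apply']
    have h2 : C (k : R) * F ^ (k - 1) * F = C (k : R) * F ^ k := by
      rcases k with _ | k
      · simp
      · rw [Nat.add_sub_cancel, pow_succ]; ring
    linear_combination F * hd - P * h + derivative F * derivative^[k] (Q * G) * h2
      - C (k : R) * derivative F * hP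

/-- The product `f_1^{b_1 t} ⋯ f_n^{b_n t}` divides
`(f_1 ⋯ f_n)^k · (d^k/dx^k)(x^a f_1^{b_1 t} ⋯ f_n^{b_n t})`, and the quotient
`P` is either zero or satisfies `deg P ≤ a + (𝓜_n − 1) k`; in particular, if
`a < A` then `deg P ≤ A + 𝓜_n k − k`. -/
theorem quotient_degree_bound (p n : ℕ) [Fact p.Prime]
    (f : Fin n → Polynomial (ZMod p)) (m : Fin n → ℕ)
    (hdeg : ∀ i, (f i).natDegree = m i)
    (t k a : ℕ) (b : Fin n → ℕ) :
    ∃ P : Polynomial (ZMod p),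
      (∏ i, f i ^ (b i * t)) * P =
        (∏ i, f i) ^ k * (derivative^[k] ((X : Polynomial (ZMod p)) ^ a * ∏ i, f i ^ (b i * t))) ∧
      (P = 0 ∨
        (((P.natDegree : ℤ) ≤ (a : ℤ) + ((∑ i, (m i : ℤ)) - 1) * (k : ℤ)) ∧
          ∀ A : ℕ, a < A →
            (P.natDegree : ℤ) ≤ (A : ℤ) + (∑ i, (m i : ℤ)) * (k : ℤ) - (k : ℤ))) := by
  classical
  obtain ⟨H, hH⟩ := aux_dvd f (fun i => b i * t) Finset.univ
  rcases Nat.eq_zero_or_pos k with hk | hk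
  · subst hk
    refine ⟨X ^ a, by simp [mul_comm], Or.inr ⟨by simp, fun A hA => ?_⟩⟩
    simp only [natDegree_X_pow]
    push_cast
    omega
  by_cases hF : ∏ i, f i = 0
  · exact ⟨0, by simp [hF, hk.ne'], Or.inl rfl⟩
  obtain ⟨P, hP⟩ := aux_quot _ _ _ (X ^ a) hH k
  refine ⟨P, hP, ?_⟩
  by_cases hP0 : P = 0
  · exact Or.inl hP0
  right
  have hf : ∀ i ∈ Finset.univ, f i ≠ 0 := Finset.prod_ne_zero_iff.mp hF
  have hM : (∏ i, f i).natDegree = ∑ i, m i := by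
    rw [natDegree_prod _ _ hf]
    exact Finset.sum_congr rfl fun i _ => hdeg i
  have hG : (∏ i, f i ^ (b i * t)) ≠ 0 :=
    Finset.prod_ne_zero_iff.mpr fun i hi => pow_ne_zero _ (hf i hi)
  set G := ∏ i, f i ^ (b i * t) with hGdef
  have hD : derivative^[k] ((X : Polynomial (ZMod p)) ^ a * G) ≠ 0 := by
    intro h0
    rw [h0, mul_zero] at hP
    exact (mul_ne_zero hG hP0) hP
  have hN : ((X : Polynomial (ZMod p)) ^ a * G).natDegree = a + G.natDegree := by
    rw [natDegree_mul (pow_ne_zero _ X_ne_zero) hG, natDegree_X_pow]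
  have hkN : k ≤ a + G.natDegree := by
    by_contra hlt
    exact hD (iterate_derivative_eq_zero (by omega))
  have hle := natDegree_iterate_derivative ((X : Polynomial (ZMod p)) ^ a * G) k
  have hd := congrArg natDegree hP
  rw [natDegree_mul hG hP0, natDegree_mul (pow_ne_zero _ hF) hD, natDegree_pow, hM] at hd
  rw [hN] at hle
  have key : P.natDegree + k ≤ a + k * ∑ i, m i := by omega
  have key' : (P.natDegree : ℤ) + k ≤ a + k * ∑ i, (m i : ℤ) := by exact_mod_cast key
  refine ⟨by linarith, fun A hA => ?_⟩
  have : (a : ℤ) < A := by exact_mod_cast hA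
  linarith
end
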